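/- There exists a constant C > 0 such that for every natural number n ≥ 2 and every finite field F, writing G = SL_n(F), there exists an element x ∈ G such that the number of y ∈ G for which {x, y} invariably generates G is at least (1 − C·n^{−1/200}) · |G|. -/

import Mathlib

/-- `{x, y}` invariably generates `G`: for all `g, h`, the conjugates
`g * x * g⁻¹` and `h * y * h⁻¹` generate `G`. -/
def InvGen {G : Type*} [Group G] (x y : G) : Prop :=
  ∀ g h : G, Subgroup.closure {g * x * g⁻¹, h * y * h⁻¹} = ⊤

/-!
Identify `Fⁿ` with the field `E` of order `qⁿ` and let `x` generate the norm-one subgroup of `Eˣ`.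
A fourth-moment estimate for Kloosterman-type sums finds elements `a` of norm one such that `a` and
`a⁻¹` lie in prescribed cosets of large subspaces. Hence a subgroup containing the torus and an
element `g` of small displacement rank `rank (g - 1)` also contains unipotents `u` of small
displacement rank with `(u - 1)² = 0`. If the displacement ranks that occur are not all divisible
by any one prime divisor of `n`, the subgroup preserves no field between `F` and `E`, so it contains
all transvections.

For random `y`, the number of embeddings of a torsion `F[X]`-module into the module of `y` has an
explicit mean, and embeddings of modules with coprime annihilators are independent. First and
second moments show that, outside a set of proportion `O (n ^ (-1 / 200))`, for each prime `p ∣ n`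
the characteristic polynomial of `y` has a simple irreducible factor of some degree `d` small
compared with `n` and prime to `p`, and no other irreducible factor of degree divisible by `d`. A
suitable power of `y` then has displacement rank exactly `d`.
-/

namespace InvariableGeneration

open Finset Module Polynomial

section CharacterSums

variable {G : Type*} [AddCommGroup G]

theorem sum_norm_sum_addChar_pow_four [Fintype G] [DecidableEq G] (S : Finset G) :
    ∑ Ψ : AddChar G ℂ, ‖∑ s ∈ S, Ψ s‖ ^ 4 = (Fintype.card G * S.addEnergy S : ℝ) := by
  have expand (Ψ : AddChar G ℂ) : ((‖∑ s ∈ S, Ψ s‖ ^ 4 : ℝ) : ℂ) =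
      ∑ t ∈ (S ×ˢ S) ×ˢ S ×ˢ S, Ψ (t.1.1 + t.2.1 - (t.1.2 + t.2.2)) := by
    set K := ∑ s ∈ S, Ψ s with hK
    have hconj : (starRingEnd ℂ) K = ∑ s ∈ S, Ψ (-s) := by
      simp only [hK, map_sum, AddChar.map_neg_eq_conj]
    have hnorm : ((‖K‖ ^ 4 : ℝ) : ℂ) = K * starRingEnd ℂ K * (K * starRingEnd ℂ K) := by
      rw [Complex.mul_conj']; push_cast; ring
    rw [hnorm, hconj, hK, sum_mul_sum, ← sum_product', sum_mul_sum, ← sum_product']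
    refine sum_congr rfl fun t _ => ?_
    rw [← AddChar.map_add_eq_mul, ← AddChar.map_add_eq_mul, ← AddChar.map_add_eq_mul]
    congr 1
    abel
  refine Complex.ofReal_injective ?_
  rw [Complex.ofReal_sum, sum_congr rfl fun Ψ _ => expand Ψ, sum_comm]
  simp only [AddChar.sum_apply_eq_ite, sub_eq_zero]
  rw [← sum_filter, sum_const, addEnergy]
  push_cast
  rw [nsmul_eq_mul, mul_comm]

theorem exists_sub_mem_of_norm_sum_addChar_le [Finite G] (P : AddSubgroup G) {S : Finset G}
    (hS : S.Nonempty) (hP : ∀ Ψ : AddChar G ℂ, Ψ ≠ 1 → P.index * ‖∑ s ∈ S, Ψ s‖ ≤ #S)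
    (g : G) :
    ∃ s ∈ S, s - g ∈ P := by
  classical
  have := Fintype.ofFinite G
  by_contra! hmiss
  let π : G →+ G ⧸ P := QuotientAddGroup.mk' P
  have : Fintype (G ⧸ P) := Fintype.ofFinite _
  have card_dual : Fintype.card (AddChar (G ⧸ P) ℂ) = P.index := by
    rw [AddChar.card_eq, ← Nat.card_eq_fintype_card]; rfl
  have hzero : ∑ ψ : AddChar (G ⧸ P) ℂ, ∑ s ∈ S, ψ (π (s - g)) = 0 := by
    rw [sum_comm]
    refine sum_eq_zero fun s hs => ?_
    rw [AddChar.sum_apply_eq_ite, if_neg]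
    exact fun h => hmiss s hs ((QuotientAddGroup.eq_zero_iff _).1 h)
  have hnontrivial : ∀ ψ ∈ univ.erase (1 : AddChar (G ⧸ P) ℂ),
      P.index * ‖∑ s ∈ S, ψ (π (s - g))‖ ≤ #S := fun ψ hψ => by
    have hshift : ∑ s ∈ S, ψ (π (s - g)) =
        (∑ s ∈ S, ψ.compAddMonoidHom π s) * ψ (π (-g)) := by
      simp only [sub_eq_add_neg, map_add, AddChar.map_add_eq_mul, sum_mul,
        AddChar.compAddMonoidHom_apply]
    rw [hshift, norm_mul, AddChar.norm_apply, mul_one]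
    refine hP _ fun h => ne_of_mem_erase hψ (DFunLike.ext _ _ fun z => ?_)
    obtain ⟨w, rfl⟩ := QuotientAddGroup.mk'_surjective P z
    exact DFunLike.congr_fun h w
  have htrivial : (#S : ℝ) =
      ‖∑ ψ ∈ univ.erase (1 : AddChar (G ⧸ P) ℂ), ∑ s ∈ S, ψ (π (s - g))‖ := by
    rw [← add_sum_erase _ _ (mem_univ (1 : AddChar (G ⧸ P) ℂ))] at hzero
    rw [eq_neg_of_add_eq_zero_right hzero, norm_neg]
    simp
  have hcount : (P.index : ℝ) * #S ≤ (P.index - 1 : ℝ) * #S := calc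
    (P.index : ℝ) * #S
      ≤ ∑ ψ ∈ univ.erase (1 : AddChar (G ⧸ P) ℂ), P.index * ‖∑ s ∈ S, ψ (π (s - g))‖ := by
        rw [← mul_sum, htrivial]; gcongr; exact norm_sum_le _ _
    _ ≤ #(univ.erase (1 : AddChar (G ⧸ P) ℂ)) • (#S : ℝ) := sum_le_card_nsmul _ _ _ hnontrivial
    _ = (P.index - 1 : ℝ) * #S := by
        rw [nsmul_eq_mul, cast_card_erase_of_mem (mem_univ _), card_univ, card_dual]
  have : (0 : ℝ) < #S := by exact_mod_cast hS.card_pos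
  linarith

end CharacterSums

section KloostermanSums

variable {E : Type*} [Field E]

theorem eq_or_eq_or_eq_neg_of_add_eq_add {p q r s : E × E} (hp : p.1 * p.2 = 1) (hq : q.1 * q.2 = 1)
    (hr : r.1 * r.2 = 1) (hs : s.1 * s.2 = 1) (h : p + q = r + s) :
    (r = p ∧ s = q) ∨ (r = q ∧ s = p) ∨ (q = -p ∧ s = -r) := by
  obtain ⟨a, a'⟩ := p
  obtain ⟨b, b'⟩ := q
  obtain ⟨c, c'⟩ := r
  obtain ⟨d, d'⟩ := s
  simp only [Prod.mk_add_mk, Prod.mk.injEq, Prod.neg_mk] at *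
  obtain ⟨h₁, h₂⟩ := h
  obtain rfl := eq_inv_of_mul_eq_one_right hp
  obtain rfl := eq_inv_of_mul_eq_one_right hq
  obtain rfl := eq_inv_of_mul_eq_one_right hr
  obtain rfl := eq_inv_of_mul_eq_one_right hs
  have ha : a ≠ 0 := left_ne_zero_of_mul_eq_one hp
  have hb : b ≠ 0 := left_ne_zero_of_mul_eq_one hq
  have hc : c ≠ 0 := left_ne_zero_of_mul_eq_one hr
  have hd : d ≠ 0 := left_ne_zero_of_mul_eq_one hs
  by_cases hab : a + b = 0
  · obtain rfl : b = -a := by linear_combination hab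
    obtain rfl : d = -c := by linear_combination hab - h₁
    simp [inv_neg]
  have hprod : a * b = c * d := by
    field_simp at h₂
    exact mul_left_cancel₀ hab (by linear_combination (a * b) * h₁ - h₂)
  have hroots : (c - a) * (c - b) = 0 := by linear_combination hprod - c * h₁
  rcases mul_eq_zero.1 hroots with hca | hcb
  · obtain rfl : c = a := sub_eq_zero.1 hca
    obtain rfl : d = b := by linear_combination -h₁
    simp
  · obtain rfl : c = b := sub_eq_zero.1 hcb
    obtain rfl : d = a := by linear_combination -h₁
    simp

theorem addEnergy_le_of_mul_eq_one [DecidableEq E] (S : Finset (E × E))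
    (hS : ∀ p ∈ S, p.1 * p.2 = 1) : S.addEnergy S ≤ 3 * #S ^ 2 := by
  let parametrize (f : (E × E) × (E × E) → ((E × E) × (E × E)) × ((E × E) × (E × E))) :=
    (S ×ˢ S).image f
  have card_parametrize f : #(parametrize f) ≤ #S ^ 2 :=
    card_image_le.trans_eq (by rw [card_product, sq])
  have hcover : ({t ∈ ((S ×ˢ S) ×ˢ S ×ˢ S) | t.1.1 + t.2.1 = t.1.2 + t.2.2} : Finset _) ⊆
      parametrize (fun z => ((z.1, z.1), (z.2, z.2))) ∪
      parametrize (fun z => ((z.1, z.2), (z.2, z.1))) ∪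
      parametrize (fun z => ((z.1, z.2), (-z.1, -z.2))) := by
    rintro ⟨⟨p, r⟩, ⟨q, s⟩⟩ ht
    simp only [mem_filter, mem_product] at ht
    obtain ⟨⟨⟨hp, hr⟩, hq, hs⟩, h⟩ := ht
    simp only [mem_union, parametrize, mem_image, mem_product]
    rcases eq_or_eq_or_eq_neg_of_add_eq_add (hS p hp) (hS q hq) (hS r hr) (hS s hs) h with
      ⟨rfl, rfl⟩ | ⟨rfl, rfl⟩ | ⟨rfl, rfl⟩
    · exact .inl (.inl ⟨(r, s), ⟨hp, hq⟩, rfl⟩)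
    · exact .inl (.inr ⟨(s, r), ⟨hp, hq⟩, rfl⟩)
    · exact .inr ⟨(p, r), ⟨hp, hr⟩, rfl⟩
  calc S.addEnergy S ≤ _ := card_le_card hcover
    _ ≤ #S ^ 2 + #S ^ 2 + #S ^ 2 := (card_union_le _ _).trans
        (add_le_add ((card_union_le _ _).trans
          (add_le_add (card_parametrize _) (card_parametrize _))) (card_parametrize _))
    _ = 3 * #S ^ 2 := by ring

/-- The embedding of `Eˣ` in the plane as the hyperbola `x y = 1`. -/
def unitHyperbola : Eˣ ↪ E × E where
  toFun a := (a, (a⁻¹ : Eˣ))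
  inj' _ _ h := Units.ext (congrArg Prod.fst h)

@[simp]
theorem unitHyperbola_apply (a : Eˣ) : unitHyperbola a = ((a : E), ((a⁻¹ : Eˣ) : E)) := rfl

/-- The character `(x, y) ↦ Ψ (t x, t⁻¹ y)` of `E × E`; a nontrivial orbit of this action of
`Eˣ` is free, while the Kloosterman sums over a subgroup containing `t` do not see it. -/
def twist (t : Eˣ) (Ψ : AddChar (E × E) ℂ) : AddChar (E × E) ℂ :=
  Ψ.compAddMonoidHom
    ((AddMonoidHom.mulLeft (t : E)).prodMap (AddMonoidHom.mulLeft ((t⁻¹ : Eˣ) : E)))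

theorem twist_apply (t : Eˣ) (Ψ : AddChar (E × E) ℂ) (x : E × E) :
    twist t Ψ x = Ψ ((t : E) * x.1, ((t⁻¹ : Eˣ) : E) * x.2) := rfl

theorem twist_injective {Ψ : AddChar (E × E) ℂ} (hΨ : Ψ ≠ 1) :
    Function.Injective fun t : Eˣ => twist t Ψ := by
  intro t s h
  by_contra hts
  refine hΨ (DFunLike.ext _ _ fun ⟨x, y⟩ => ?_)
  have hts_val : (t : E) - s ≠ 0 := fun h => hts (Units.ext (sub_eq_zero.1 h))
  have hts_inv : ((t⁻¹ : Eˣ) : E) - (s⁻¹ : Eˣ) ≠ 0 := fun h =>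
    hts (inv_injective (Units.ext (sub_eq_zero.1 h)))
  have heq := DFunLike.congr_fun h (x / (t - s), y / ((t⁻¹ : Eˣ) - (s⁻¹ : Eˣ)))
  have hsplit : ((x, y) : E × E) =
      ((t : E) * (x / (t - s)), ((t⁻¹ : Eˣ) : E) * (y / ((t⁻¹ : Eˣ) - (s⁻¹ : Eˣ)))) -
      ((s : E) * (x / (t - s)), ((s⁻¹ : Eˣ) : E) * (y / ((t⁻¹ : Eˣ) - (s⁻¹ : Eˣ)))) := by
    rw [Prod.mk_sub_mk, ← sub_mul, ← sub_mul, mul_div_cancel₀ _ hts_val,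
      mul_div_cancel₀ _ hts_inv]
  simp only [twist_apply] at heq
  rw [hsplit, AddChar.map_sub_eq_div, heq, div_self (AddChar.val_isUnit _ _).ne_zero,
    AddChar.one_apply]

/-- The Kloosterman sum `∑ Ψ(a, a⁻¹)` of a character of `E × E`, with `a` running over a
group `N` of units. -/
noncomputable def kloostermanSum (N : Subgroup Eˣ) [Fintype N] (Ψ : AddChar (E × E) ℂ) : ℂ :=
  ∑ a : N, Ψ (unitHyperbola (a : Eˣ))

theorem kloostermanSum_twist (N : Subgroup Eˣ) [Fintype N] (t : N) (Ψ : AddChar (E × E) ℂ) :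
    kloostermanSum N (twist t Ψ) = kloostermanSum N Ψ :=
  Fintype.sum_equiv (Equiv.mulLeft t) _ _ fun a => by simp [twist_apply, mul_comm]

theorem sum_map_unitHyperbola (N : Subgroup Eˣ) [Fintype N] (Ψ : AddChar (E × E) ℂ) :
    ∑ s ∈ univ.map ((Function.Embedding.subtype (· ∈ N)).trans unitHyperbola), Ψ s =
      kloostermanSum N Ψ := by
  rw [sum_map]; rfl

/- The fourth moment over all characters is an additive energy, and every nontrivial `Ψ` shares
its value with the `|N|` distinct characters `twist t Ψ`. -/
theorem norm_kloostermanSum_pow_four_le [Fintype E] (N : Subgroup Eˣ) [Fintype N]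
    {Ψ : AddChar (E × E) ℂ} (hΨ : Ψ ≠ 1) :
    ‖kloostermanSum N Ψ‖ ^ 4 ≤ 3 * (Fintype.card E : ℝ) ^ 2 * Fintype.card N := by
  classical
  let S := univ.map ((Function.Embedding.subtype (· ∈ N)).trans unitHyperbola)
  have hS : ∀ p ∈ S, p.1 * p.2 = 1 := by simp [S]
  have henergy : (S.addEnergy S : ℝ) ≤ 3 * (Fintype.card N : ℝ) ^ 2 := by
    have := addEnergy_le_of_mul_eq_one S hS
    rw [card_map, card_univ] at this
    exact_mod_cast this
  have horbit : ∑ t : N, ‖kloostermanSum N (twist t Ψ)‖ ^ 4 ≤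
      ∑ Φ : AddChar (E × E) ℂ, ‖kloostermanSum N Φ‖ ^ 4 := by
    rw [← sum_image (s := (univ : Finset N)) (g := fun t : N => twist (t : Eˣ) Ψ)
      (f := fun Φ => ‖kloostermanSum N Φ‖ ^ 4)]
    · exact sum_le_sum_of_subset_of_nonneg (subset_univ _) fun _ _ _ => by positivity
    · exact fun t _ s _ h => Subtype.ext (twist_injective hΨ h)
  have hmoment := sum_norm_sum_addChar_pow_four S
  simp only [S, sum_map_unitHyperbola] at hmoment
  simp only [kloostermanSum_twist, sum_const, card_univ, nsmul_eq_mul, hmoment] at horbit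
  refine le_of_mul_le_mul_left (horbit.trans ?_)
    (by exact_mod_cast Fintype.card_pos : (0 : ℝ) < Fintype.card N)
  calc (Fintype.card (E × E) : ℝ) * (S.addEnergy S : ℝ)
      ≤ Fintype.card (E × E) * (3 * (Fintype.card N : ℝ) ^ 2) := by gcongr
    _ = Fintype.card N * (3 * (Fintype.card E : ℝ) ^ 2 * Fintype.card N) := by
        rw [Fintype.card_prod]; push_cast; ring

theorem exists_unit_sub_mem_and_inv_sub_mem [Finite E] (N : Subgroup Eˣ) (A B : AddSubgroup E)
    (α β : E) (h : 3 * (A.index * B.index) ^ 4 * Nat.card E ^ 2 ≤ Nat.card N ^ 3) :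
    ∃ a ∈ N, (a : E) - α ∈ A ∧ ((a⁻¹ : Eˣ) : E) - β ∈ B := by
  classical
  have := Fintype.ofFinite E
  let S := univ.map ((Function.Embedding.subtype (· ∈ N)).trans unitHyperbola)
  have hcardS : #S = Fintype.card N := by rw [card_map, card_univ]
  have hbound : ∀ Ψ : AddChar (E × E) ℂ, Ψ ≠ 1 →
      ((A.prod B).index : ℝ) * ‖∑ s ∈ S, Ψ s‖ ≤ #S := fun Ψ hΨ => by
    refine le_of_pow_le_pow_left₀ four_ne_zero (Nat.cast_nonneg _) ?_
    rw [sum_map_unitHyperbola, AddSubgroup.index_prod, hcardS, mul_pow]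
    calc _ ≤ ((A.index * B.index : ℕ) : ℝ) ^ 4 *
          (3 * (Fintype.card E : ℝ) ^ 2 * Fintype.card N) := by
          gcongr; exact norm_kloostermanSum_pow_four_le N hΨ
      _ = (3 * (A.index * B.index) ^ 4 * (Fintype.card E : ℝ) ^ 2) * Fintype.card N := by
          push_cast; ring
      _ ≤ (Fintype.card N : ℝ) ^ 3 * Fintype.card N := by
          gcongr
          simp only [Nat.card_eq_fintype_card] at h
          exact_mod_cast h
      _ = (Fintype.card N : ℝ) ^ 4 := by ring
  have hS : S.Nonempty := ⟨unitHyperbola 1, mem_map.2 ⟨1, mem_univ _, rfl⟩⟩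
  obtain ⟨s, hs, hsub⟩ := exists_sub_mem_of_norm_sum_addChar_le (A.prod B) hS hbound (α, β)
  obtain ⟨a, -, rfl⟩ := mem_map.1 hs
  exact ⟨a, a.2, AddSubgroup.mem_prod.1 hsub⟩

end KloostermanSums

section NormOne

variable (F E : Type*) [Field F] [Field E] [Algebra F E]

/-- The group of elements of norm one in `E / F`. -/
noncomputable def normOneUnits : Subgroup Eˣ := (Units.map (Algebra.norm F : E →* F)).ker

/-- The norm-one elements of `E`, acting on `E` by multiplication: for `E = 𝔽_{qⁿ}`, this is the
Singer torus of `SL_n(q)`. -/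
noncomputable def normOneTorus : Subgroup (End F E)ˣ :=
  (normOneUnits F E).map (Units.map (Algebra.lmul F E : E →* End F E))

variable [Finite F] [Finite E]

theorem natCard_le_natCard_normOneUnits_mul :
    Nat.card E ≤ Nat.card (normOneUnits F E) * Nat.card F := by
  have hindex : (normOneUnits F E).index = Nat.card Fˣ := by
    rw [normOneUnits, Subgroup.index_ker,
      MonoidHom.range_eq_top.2 (FiniteField.unitsMap_norm_surjective F E), Subgroup.card_top]
  have hcard := (normOneUnits F E).card_mul_index
  rw [hindex, Nat.card_units, Nat.card_units, Nat.mul_sub_one] at hcard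
  have hN : 0 < Nat.card (normOneUnits F E) := Nat.card_pos
  have hE : 0 < Nat.card E := Nat.card_pos
  have hle : Nat.card (normOneUnits F E) ≤ Nat.card (normOneUnits F E) * Nat.card F :=
    Nat.le_mul_of_pos_right _ Nat.card_pos
  omega

variable {F E} {X Y : Type*} [AddCommGroup X] [Module F X] [Module.Finite F X]
  [AddCommGroup Y] [Module F Y] [Module.Finite F Y]

omit [Finite E] in
theorem index_toAddSubgroup_ker_le (f : E →ₗ[F] X) :
    (LinearMap.ker f).toAddSubgroup.index ≤ Nat.card F ^ finrank F X := by
  calc (LinearMap.ker f).toAddSubgroup.index = Nat.card (LinearMap.range f) :=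
        AddSubgroup.index_ker f.toAddMonoidHom
    _ = Nat.card F ^ finrank F (LinearMap.range f) := Module.natCard_eq_pow_finrank
    _ ≤ Nat.card F ^ finrank F X :=
        Nat.pow_le_pow_right Nat.card_pos (Submodule.finrank_le _)

theorem exists_normOneUnits_map_eq_and_map_inv_eq (f : E →ₗ[F] X) (g : E →ₗ[F] Y) (α β : E)
    (h : 4 * (finrank F X + finrank F Y) + 5 ≤ finrank F E) :
    ∃ a ∈ normOneUnits F E, f a = f α ∧ g ((a⁻¹ : Eˣ) : E) = g β := by
  have hq : 2 ≤ Nat.card F := Finite.one_lt_card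
  have hnorm := natCard_le_natCard_normOneUnits_mul F E
  have hf := index_toAddSubgroup_ker_le f
  have hg := index_toAddSubgroup_ker_le g
  rw [Module.natCard_eq_pow_finrank (K := F) (V := E)] at hnorm
  obtain ⟨m, hm⟩ := Nat.exists_eq_add_of_le h
  rw [hm] at hnorm
  obtain ⟨a, ha, hα, hβ⟩ := exists_unit_sub_mem_and_inv_sub_mem (normOneUnits F E)
    (LinearMap.ker f).toAddSubgroup (LinearMap.ker g).toAddSubgroup α β (by
      rw [Module.natCard_eq_pow_finrank (K := F) (V := E), hm]
      set q := Nat.card F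
      set k := finrank F X
      set l := finrank F Y
      have hN : q ^ (4 * (k + l) + 4 + m) ≤ Nat.card (normOneUnits F E) := by
        refine Nat.le_of_mul_le_mul_right (le_trans (le_of_eq ?_) hnorm) (by omega : 0 < q)
        ring
      calc 3 * _ ^ 4 * (q ^ (4 * (k + l) + 5 + m)) ^ 2
        _ ≤ q ^ 2 * (q ^ k * q ^ l) ^ 4 * (q ^ (4 * (k + l) + 5 + m)) ^ 2 := by
          gcongr; nlinarith
        _ = q ^ (12 * (k + l) + 12 + 2 * m) := by ring
        _ ≤ q ^ (12 * (k + l) + 12 + 3 * m) := Nat.pow_le_pow_right (by omega) (by omega)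
        _ = (q ^ (4 * (k + l) + 4 + m)) ^ 3 := by ring
        _ ≤ _ := by gcongr)
  refine ⟨a, ha, ?_, ?_⟩
  · rwa [Submodule.mem_toAddSubgroup, LinearMap.mem_ker, map_sub, sub_eq_zero] at hα
  · rwa [Submodule.mem_toAddSubgroup, LinearMap.mem_ker, map_sub, sub_eq_zero] at hβ

theorem exists_normOneUnits_map_eq (f : E →ₗ[F] X) (α : E)
    (h : 4 * finrank F X + 5 ≤ finrank F E) : ∃ a ∈ normOneUnits F E, f a = f α := by
  obtain ⟨a, ha, hα, -⟩ := exists_normOneUnits_map_eq_and_map_inv_eq f (0 : E →ₗ[F] PUnit) α 0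
    (by rwa [finrank_zero_of_subsingleton (M := PUnit), add_zero])
  exact ⟨a, ha, hα⟩

end NormOne

section Rank

variable {F V : Type*} [Field F] [AddCommGroup V] [Module F V]

/-- The rank of an endomorphism, as a natural number. -/
noncomputable abbrev rk (D : End F V) : ℕ := finrank F (LinearMap.range D)

theorem rk_mul_unit (D : End F V) (g : (End F V)ˣ) : rk (D * g.1) = rk D := by
  have hsurj : Function.Surjective g.1 := ((Module.End.isUnit_iff _).1 g.isUnit).surjective
  rw [rk, Module.End.mul_eq_comp,
    LinearMap.range_comp_of_range_eq_top _ (LinearMap.range_eq_top.2 hsurj)]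

theorem rk_unit_mul (D : End F V) (g : (End F V)ˣ) : rk (g.1 * D) = rk D := by
  have hinj : Function.Injective g.1 := ((Module.End.isUnit_iff _).1 g.isUnit).injective
  rw [rk, Module.End.mul_eq_comp, LinearMap.range_comp]
  exact (Submodule.equivMapOfInjective g.1 hinj _).finrank_eq.symm

theorem rk_pos [FiniteDimensional F V] {D : End F V} (h : D ≠ 0) : 0 < rk D := by
  rwa [Nat.pos_iff_ne_zero, ne_eq, Submodule.finrank_eq_zero, LinearMap.range_eq_bot]

theorem rk_mul_le [FiniteDimensional F V] (A B : End F V) : rk (A * B) ≤ rk A :=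
  Submodule.finrank_mono (LinearMap.range_comp_le_range _ _)

theorem injOn_range_of_rk_le_rk_mul [FiniteDimensional F V] {A D : End F V}
    (h : rk D ≤ rk (A * D)) :
    Set.InjOn A (LinearMap.range D) := by
  have hrange : LinearMap.range (A.domRestrict (LinearMap.range D)) = LinearMap.range (A * D) := by
    rw [LinearMap.range_domRestrict, Module.End.mul_eq_comp, LinearMap.range_comp]
  have hdim := (A.domRestrict (LinearMap.range D)).finrank_range_add_finrank_ker
  rw [hrange] at hdim
  have hker : LinearMap.ker (A.domRestrict (LinearMap.range D)) = ⊥ :=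
    Submodule.finrank_eq_zero.1 (by unfold rk at h; omega)
  exact Set.injOn_iff_injective.2 (LinearMap.ker_eq_bot.1 hker)

end Rank

section Commutator

open scoped commutatorElement

variable {R : Type*} [Ring R] {g k : Rˣ}

theorem val_commutatorElement_sub_one (h : (k.1 - 1) * (g.1 - 1) = 0) :
    ⁅g, k⁆.1 - 1 = (g.1 - 1) * (k.1 - 1) * (k⁻¹).1 := by
  have hk : (k.1 - 1) * (g⁻¹).1 = k.1 - 1 := by
    rw [mul_sub, mul_one, sub_eq_zero] at h
    rw [Units.mul_inv_eq_iff_eq_mul, h]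
  have hone : (1 : R) = k.1 * g.1 * (g⁻¹).1 * (k⁻¹).1 := by simp
  calc ⁅g, k⁆.1 - 1 = (g.1 * k.1 - k.1 * g.1) * (g⁻¹).1 * (k⁻¹).1 := by
        conv_lhs => rw [hone]
        simp only [commutatorElement_def, Units.val_mul, sub_mul]
    _ = ((g.1 - 1) * (k.1 - 1) - (k.1 - 1) * (g.1 - 1)) * (g⁻¹).1 * (k⁻¹).1 := by noncomm_ring
    _ = (g.1 - 1) * (k.1 - 1) * (k⁻¹).1 := by rw [h, sub_zero, mul_assoc (g.1 - 1), hk]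

theorem commutatorElement_sub_one_mul_self (h : (k.1 - 1) * (g.1 - 1) = 0) :
    (⁅g, k⁆.1 - 1) * (⁅g, k⁆.1 - 1) = 0 := by
  have hg : (k⁻¹).1 * (g.1 - 1) = g.1 - 1 := by
    have h' := h
    rw [sub_mul, one_mul, sub_eq_zero] at h'
    rw [Units.inv_mul_eq_iff_eq_mul, h']
  rw [val_commutatorElement_sub_one h]
  calc (g.1 - 1) * (k.1 - 1) * (k⁻¹).1 * ((g.1 - 1) * (k.1 - 1) * (k⁻¹).1)
    _ = (g.1 - 1) * (k.1 - 1) * ((k⁻¹).1 * (g.1 - 1)) * (k.1 - 1) * (k⁻¹).1 := by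
        simp only [mul_assoc]
    _ = 0 := by rw [hg, mul_assoc (g.1 - 1), h, mul_zero, zero_mul, zero_mul]

end Commutator

section SquareZero

open scoped commutatorElement

variable {F E : Type*} [Field F] [Field E] [Algebra F E]

/-- For a subspace `W` of `E`, the linear map sending `x` to the map `w ↦ D (x * w)` on `W`. -/
noncomputable def mulCompOn (D : End F E) (W : Submodule F E) :
    E →ₗ[F] W →ₗ[F] LinearMap.range D :=
  LinearMap.mk₂ F (fun x w => D.rangeRestrict (x * w)) (by simp [add_mul]) (by simp)
    (by simp [mul_add]) (by simp)

/-- The nonzero endomorphisms `D` of square zero for which `1 + D` belongs to `H`. -/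
def squareZeroDisplacements (H : Subgroup (End F E)ˣ) : Set (End F E) :=
  {D | D ≠ 0 ∧ D * D = 0 ∧ ∃ g ∈ H, g.1 = 1 + D}

variable [Finite F] [Finite E]

theorem exists_normOneUnits_sandwich_eq (D : End F E) (c : E)
    (hD : 8 * rk D ^ 2 + 5 ≤ finrank F E) :
    ∃ a ∈ normOneUnits F E, D * Algebra.lmul F E a * D = D * Algebra.lmul F E c * D ∧
      D * Algebra.lmul F E (a⁻¹ : Eˣ) * D = 0 := by
  have sandwich_congr {x y : E}
      (h : mulCompOn D (LinearMap.range D) x = mulCompOn D (LinearMap.range D) y) :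
      D * Algebra.lmul F E x * D = D * Algebra.lmul F E y * D := by
    ext u
    exact congrArg Subtype.val (LinearMap.congr_fun h ⟨D u, LinearMap.mem_range_self D u⟩)
  have hdim := Module.finrank_linearMap F F (LinearMap.range D) (LinearMap.range D)
  obtain ⟨a, ha, hc, hzero⟩ := exists_normOneUnits_map_eq_and_map_inv_eq
    (F := F) (X := LinearMap.range D →ₗ[F] LinearMap.range D)
    (Y := LinearMap.range D →ₗ[F] LinearMap.range D)
    (mulCompOn D (LinearMap.range D)) (mulCompOn D (LinearMap.range D)) c 0
    (by rw [hdim]; linarith)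
  refine ⟨a, ha, sandwich_congr hc, ?_⟩
  rw [sandwich_congr hzero, map_zero, mul_zero, zero_mul]

/-- With `D = g - 1` and a norm-one `a` such that `D a D = D c D` and `D a⁻¹ D = 0`, the commutator
of `g` and `a g a⁻¹` has the displacement `D c D` up to units. -/
theorem exists_mem_squareZeroDisplacements {H : Subgroup (End F E)ˣ} (hH : normOneTorus F E ≤ H)
    {g : (End F E)ˣ} (hg : g ∈ H) (hrk : 8 * rk (g.1 - 1) ^ 2 + 5 ≤ finrank F E) {c : E}
    (hc : (g.1 - 1) * Algebra.lmul F E c * (g.1 - 1) ≠ 0) :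
    ∃ D ∈ squareZeroDisplacements H,
      rk D = rk ((g.1 - 1) * Algebra.lmul F E c * (g.1 - 1)) := by
  obtain ⟨a, ha, hac, ha_inv⟩ := exists_normOneUnits_sandwich_eq _ c hrk
  let m : (End F E)ˣ := Units.map (Algebra.lmul F E : E →* End F E) a
  have hm : m ∈ H := hH (Subgroup.mem_map_of_mem _ ha)
  let k := m * g * m⁻¹
  have hk : k.1 - 1 = m.1 * (g.1 - 1) * (m⁻¹).1 := by
    simp only [k, Units.val_mul, mul_sub, sub_mul, mul_one, Units.mul_inv]
  have hzero : (k.1 - 1) * (g.1 - 1) = 0 := by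
    rw [hk, mul_assoc, mul_assoc, ← mul_assoc (g.1 - 1)]
    exact (congrArg (m.1 * ·) ha_inv).trans (mul_zero _)
  have hrank : rk (⁅g, k⁆.1 - 1) = rk ((g.1 - 1) * Algebra.lmul F E c * (g.1 - 1)) := by
    rw [val_commutatorElement_sub_one hzero, rk_mul_unit, hk, ← mul_assoc, ← mul_assoc,
      rk_mul_unit, ← hac]
    rfl
  refine ⟨⁅g, k⁆.1 - 1, ⟨?_, commutatorElement_sub_one_mul_self hzero, ⁅g, k⁆, ?_, by abel⟩, hrank⟩
  · intro h
    have := rk_pos hc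
    rw [← hrank, h, rk, LinearMap.range_zero, finrank_bot] at this
    exact this.false
  · have hkH : k ∈ H := H.mul_mem (H.mul_mem hm hg) (H.inv_mem hm)
    exact H.mul_mem (H.mul_mem (H.mul_mem hg hkH) (H.inv_mem hg)) (H.inv_mem hkH)

theorem exists_mem_squareZeroDisplacements_rk_le {H : Subgroup (End F E)ˣ}
    (hH : normOneTorus F E ≤ H) {g : (End F E)ˣ} (hg : g ∈ H)
    (hrk : 8 * rk (g.1 - 1) ^ 2 + 5 ≤ finrank F E) (hne : g.1 - 1 ≠ 0) :
    ∃ D ∈ squareZeroDisplacements H, rk D ≤ rk (g.1 - 1) := by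
  obtain ⟨v, hv⟩ := DFunLike.exists_ne hne
  obtain ⟨D, hD, hrkD⟩ := exists_mem_squareZeroDisplacements hH hg hrk
    (c := v / (g.1 - 1) v) fun h => hv <| by
      have hv' := LinearMap.congr_fun h v
      rwa [Module.End.mul_apply, Module.End.mul_apply, Algebra.coe_lmul_eq_mul,
        LinearMap.mul_apply_apply, div_mul_cancel₀ _ hv, LinearMap.zero_apply] at hv'
  refine ⟨D, hD, ?_⟩
  rw [hrkD, mul_assoc]
  exact rk_mul_le _ _

end SquareZero

section MultiplierField

variable {F E : Type*} [Field F] [Field E] [Algebra F E]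

/-- The intermediate field of all `k` with `k W ⊆ W`. -/
def multiplierField [Algebra.IsAlgebraic F E] (W : Submodule F E) : IntermediateField F E :=
  let S : Subalgebra F E :=
    { carrier := {k | ∀ w ∈ W, k * w ∈ W}
      mul_mem' := fun {a b} ha hb w hw => by simpa only [mul_assoc] using ha _ (hb _ hw)
      one_mem' := fun w hw => by rwa [one_mul]
      add_mem' := fun {a b} ha hb w hw => by
        simpa only [add_mul] using W.add_mem (ha w hw) (hb w hw)
      zero_mem' := fun w _ => by simp only [zero_mul, W.zero_mem]
      algebraMap_mem' := fun c w hw => by simpa only [Algebra.smul_def] using W.smul_mem c hw }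
  S.toIntermediateField fun x hx =>
    S.inv_mem_of_algebraic (x := ⟨x, hx⟩) (Algebra.IsAlgebraic.isAlgebraic x)

theorem mem_multiplierField [Algebra.IsAlgebraic F E] {W : Submodule F E} {k : E} :
    k ∈ multiplierField W ↔ ∀ w ∈ W, k * w ∈ W := Iff.rfl

theorem finrank_map_lmul {c : E} (hc : c ≠ 0) (W : Submodule F E) :
    finrank F (W.map (Algebra.lmul F E c)) = finrank F W :=
  (Submodule.equivMapOfInjective _ (mul_right_injective₀ hc) W).finrank_eq.symm

theorem finrank_multiplierField_ker_le [FiniteDimensional F E] {D : End F E} (hD : D ≠ 0) :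
    finrank F (multiplierField (LinearMap.ker D)) ≤ rk D := by
  obtain ⟨v, hv⟩ := DFunLike.exists_ne hD
  let f : multiplierField (LinearMap.ker D) →ₗ[F] LinearMap.range D :=
    D.rangeRestrict ∘ₗ LinearMap.mulRight F v ∘ₗ
      (multiplierField (LinearMap.ker D)).val.toLinearMap
  refine LinearMap.finrank_le_finrank_of_injective (f := f)
    ((injective_iff_map_eq_zero f).2 fun k hk => ?_)
  by_contra hk0
  have hk1 : (k : E) ≠ 0 := fun h => hk0 (Subtype.ext h)
  have hker : D (k * v) = 0 := congrArg Subtype.val hk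
  have := mem_multiplierField.1 (inv_mem k.2) _ hker
  rw [inv_mul_cancel_left₀ hk1] at this
  exact hv this

theorem intermediateField_coe_eq_rootSet [Finite E] (K : IntermediateField F E) :
    (K : Set E) = (X ^ Nat.card K - X : E[X]).rootSet E := by
  have := Fintype.ofFinite K
  have hone : 1 < Nat.card K := Finite.one_lt_card
  have hne : (X ^ Nat.card K - X : E[X]) ≠ 0 := FiniteField.X_pow_card_sub_X_ne_zero E hone
  refine Set.eq_of_subset_of_ncard_le (fun x hx => ?_) ?_ (Set.toFinite _)
  · have hpow := congrArg Subtype.val (FiniteField.pow_card (⟨x, hx⟩ : K))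
    rw [← Nat.card_eq_fintype_card] at hpow
    exact mem_rootSet.2 ⟨hne, by simpa [sub_eq_zero] using hpow⟩
  · exact (ncard_rootSet_le _ E).trans
      (FiniteField.X_pow_card_sub_X_natDegree_eq E hone).le

theorem intermediateField_eq_of_finrank_eq [Finite E] {K L : IntermediateField F E}
    (h : finrank F K = finrank F L) : K = L := by
  have hcard : Nat.card K = Nat.card L := by
    have : Finite F := Finite.of_injective _ (algebraMap F E).injective
    rw [Module.natCard_eq_pow_finrank (K := F), h, ← Module.natCard_eq_pow_finrank]
  rw [← SetLike.coe_set_eq, intermediateField_coe_eq_rootSet, intermediateField_coe_eq_rootSet L,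
    hcard]

theorem finrank_dvd_rk_of_map_mul (K : IntermediateField F E) {D : End F E}
    (h : ∀ k ∈ K, ∀ v, D (v * k) = D v * k) : finrank F K ∣ rk D := by
  let f : E →ₗ[K] E :=
    { toFun := D
      map_add' := map_add D
      map_smul' := fun k v => by
        have hk := h k k.2 v
        rwa [mul_comm v, mul_comm (D v)] at hk }
  have hrange : rk D = finrank F (LinearMap.range f) :=
    (LinearEquiv.refl F (LinearMap.range D)).finrank_eq
  rw [hrange, ← Module.finrank_mul_finrank F K (LinearMap.range f)]
  exact dvd_mul_right _ _

theorem eq_of_mul_add_mul_eq {K : IntermediateField F E} {u w k k₁ k₂ : E} (hu : u ≠ 0)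
    (hw : w / u ∉ K) (hk : k ∈ K) (hk₁ : k₁ ∈ K) (hk₂ : k₂ ∈ K)
    (h : u * k₁ + w * k = (u + w) * k₂) : k₁ = k := by
  have hmul : w * (k - k₂) = u * (k₂ - k₁) := by linear_combination h
  by_cases hkk : k - k₂ = 0
  · rw [hkk, mul_zero, eq_comm, mul_eq_zero, or_iff_right hu] at hmul
    linear_combination -hmul - hkk
  · refine absurd ?_ hw
    rw [show w / u = (k₂ - k₁) / (k - k₂) by rw [div_eq_div_iff hu hkk, hmul, mul_comm]]
    exact div_mem (sub_mem hk₂ hk₁) (sub_mem hk hk₂)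

end MultiplierField

section MinimalDisplacement

variable {F E : Type*} [Field F] [Field E] [Algebra F E]

/-- `D` has minimal rank among the square-zero displacements of `H`. -/
structure IsMinimalDisplacement (H : Subgroup (End F E)ˣ) (D : End F E) : Prop where
  mem : D ∈ squareZeroDisplacements H
  rk_le : ∀ D' ∈ squareZeroDisplacements H, rk D ≤ rk D'

theorem IsMinimalDisplacement.conj {H : Subgroup (End F E)ˣ} {D : End F E}
    (hD : IsMinimalDisplacement H D) {m : (End F E)ˣ} (hm : m ∈ H) :
    IsMinimalDisplacement H (m.1 * D * (m⁻¹).1) := by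
  obtain ⟨⟨hne, hsq, g, hg, hgD⟩, hmin⟩ := hD
  refine ⟨⟨?_, ?_, m * g * m⁻¹, H.mul_mem (H.mul_mem hm hg) (H.inv_mem hm), ?_⟩, ?_⟩
  · rwa [ne_eq, Units.mul_left_eq_zero, Units.mul_right_eq_zero]
  · calc m.1 * D * (m⁻¹).1 * (m.1 * D * (m⁻¹).1) = m.1 * (D * D) * (m⁻¹).1 := by
          simp only [mul_assoc, Units.inv_mul_cancel_left]
      _ = 0 := by rw [hsq, mul_zero, zero_mul]
  · rw [Units.val_mul, Units.val_mul, hgD, mul_add, add_mul, mul_one, Units.mul_inv]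
  · rwa [rk_mul_unit, rk_unit_mul]

theorem exists_isMinimalDisplacement {H : Subgroup (End F E)ˣ}
    (hH : (squareZeroDisplacements H).Nonempty) : ∃ D, IsMinimalDisplacement H D := by
  obtain ⟨D, hD, hmin⟩ := (measure (rk : End F E → ℕ)).wf.has_min _ hH
  exact ⟨D, hD, fun D' hD' => not_lt.1 (hmin D' hD')⟩

variable [Finite F] [Finite E]

theorem mem_of_forall_normOneUnits {Z : Type*} [AddCommGroup Z] [Module F Z] [Module.Finite F Z]
    (f : E →ₗ[F] Z)
    (h : 4 * (finrank F Z + 1) + 5 ≤ finrank F E) {S : Submodule F E} {c : E}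
    (hS : ∀ a ∈ normOneUnits F E, f a = f c → (a : E) ∈ S) : c ∈ S := by
  by_contra hc
  obtain ⟨θ, hθc, hθS⟩ := Submodule.exists_dual_map_eq_bot_of_notMem hc inferInstance
  obtain ⟨a, ha, hfa⟩ := exists_normOneUnits_map_eq (f.prod θ) c (by
    rwa [finrank_prod, finrank_self])
  obtain ⟨hf, hθ⟩ := Prod.ext_iff.1 hfa
  have hθa : θ a = 0 := LinearMap.le_ker_iff_map.2 hθS (hS a ha hf)
  exact hθc (hθ.symm.trans hθa)

variable {H : Subgroup (End F E)ˣ} {D : End F E}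

theorem IsMinimalDisplacement.map_mul_eq_zero (hD : IsMinimalDisplacement H D)
    (hH : normOneTorus F E ≤ H) (hdim : 8 * rk D ^ 2 + 5 ≤ finrank F E) {c u u' : E}
    (hu : u ∈ LinearMap.range D) (hu0 : u ≠ 0) (hcu : D (c * u) = 0)
    (hu' : u' ∈ LinearMap.range D) : D (c * u') = 0 := by
  obtain ⟨-, -, g, hg, hgD⟩ := hD.mem
  have hg1 : g.1 - 1 = D := by rw [hgD, add_sub_cancel_left]
  by_cases hz : D * Algebra.lmul F E c * D = 0
  · obtain ⟨v, rfl⟩ := hu'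
    exact LinearMap.congr_fun hz v
  · obtain ⟨D', hD', hrk⟩ := exists_mem_squareZeroDisplacements hH hg (by rwa [hg1]) (by rwa [hg1])
    rw [hg1] at hrk
    have hinj := injOn_range_of_rk_le_rk_mul (hrk ▸ hD.rk_le D' hD')
    exact absurd (hinj hu (Submodule.zero_mem _) (by simpa using hcu)) hu0

theorem IsMinimalDisplacement.div_mem (hD : IsMinimalDisplacement H D)
    (hH : normOneTorus F E ≤ H) (hdim : 8 * rk D ^ 2 + 5 ≤ finrank F E) {u x : E}
    (hu : u ∈ LinearMap.range D) (hu0 : u ≠ 0) (hx : x ∈ LinearMap.range D) :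
    x / u ∈ multiplierField (LinearMap.ker D) := fun w hw => by
  have := hD.map_mul_eq_zero hH hdim (c := w / u) hu hu0 (by rwa [div_mul_cancel₀ _ hu0]) hx
  rwa [div_mul_comm] at this

theorem IsMinimalDisplacement.map_range_eq (hD : IsMinimalDisplacement H D)
    (hH : normOneTorus F E ≤ H) (hdim : 8 * rk D ^ 2 + 5 ≤ finrank F E) {u : E}
    (hu : u ∈ LinearMap.range D) (hu0 : u ≠ 0) :
    (LinearMap.range D).map (Algebra.lmul F E u⁻¹) =
      Subalgebra.toSubmodule (multiplierField (LinearMap.ker D)).toSubalgebra := by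
  apply Submodule.eq_of_le_of_finrank_le
  · rintro _ ⟨x, hx, rfl⟩
    have := hD.div_mem hH hdim hu hu0 hx
    rwa [div_eq_inv_mul] at this
  · rw [finrank_map_lmul (inv_ne_zero hu0)]
    exact finrank_multiplierField_ker_le hD.mem.1

theorem IsMinimalDisplacement.finrank_multiplierField (hD : IsMinimalDisplacement H D)
    (hH : normOneTorus F E ≤ H) (hdim : 8 * rk D ^ 2 + 5 ≤ finrank F E) :
    finrank F (multiplierField (LinearMap.ker D)) = rk D := by
  obtain ⟨v, hv⟩ := DFunLike.exists_ne hD.mem.1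
  have hmap := hD.map_range_eq hH hdim (LinearMap.mem_range_self D v) hv
  rw [rk, ← finrank_map_lmul (inv_ne_zero hv), hmap]
  rfl

theorem IsMinimalDisplacement.mul_mem_range (hD : IsMinimalDisplacement H D)
    (hH : normOneTorus F E ≤ H) (hdim : 8 * rk D ^ 2 + 5 ≤ finrank F E) {u k : E}
    (hu : u ∈ LinearMap.range D) (hk : k ∈ multiplierField (LinearMap.ker D)) :
    u * k ∈ LinearMap.range D := by
  rcases eq_or_ne u 0 with rfl | hu0
  · rw [zero_mul]; exact Submodule.zero_mem _
  have hmem : k ∈ Subalgebra.toSubmodule (multiplierField (LinearMap.ker D)).toSubalgebra := hk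
  rw [← hD.map_range_eq hH hdim hu hu0] at hmem
  obtain ⟨x, hx, rfl⟩ := hmem
  simpa [mul_inv_cancel_left₀ hu0] using hx

/-- `m D m⁻¹` is minimal as well, with the same multiplier field: `E` has only one subfield of each
degree. -/
theorem IsMinimalDisplacement.map_mul_div_map_mem (hD : IsMinimalDisplacement H D)
    (hH : normOneTorus F E ≤ H) (hdim : 8 * rk D ^ 2 + 5 ≤ finrank F E) {u k : E}
    (hu : u ∈ LinearMap.range D) (hu0 : u ≠ 0) {m : (End F E)ˣ} (hm : m ∈ H)
    (hk : k ∈ multiplierField (LinearMap.ker D)) :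
    m.1 (u * k) / m.1 u ∈ multiplierField (LinearMap.ker D) := by
  have hD' := hD.conj hm
  set D' := m.1 * D * (m⁻¹).1
  have hrk : rk D' = rk D := by rw [rk_mul_unit, rk_unit_mul]
  have hfield : multiplierField (LinearMap.ker D') = multiplierField (LinearMap.ker D) :=
    intermediateField_eq_of_finrank_eq (by
      rw [hD.finrank_multiplierField hH hdim, hD'.finrank_multiplierField hH (by rwa [hrk]), hrk])
  have hmap {x : E} (hx : x ∈ LinearMap.range D) : m.1 x ∈ LinearMap.range D' := by
    obtain ⟨v, rfl⟩ := hx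
    have hcomm : D' * m.1 = m.1 * D := by rw [mul_assoc, Units.inv_mul, mul_one]
    exact ⟨m.1 v, LinearMap.congr_fun hcomm v⟩
  have hinj : Function.Injective m.1 := ((Module.End.isUnit_iff _).1 m.isUnit).injective
  rw [← hfield]
  exact hD'.div_mem hH (by rwa [hrk]) (hmap hu) ((map_ne_zero_iff _ hinj).2 hu0)
    (hmap (hD.mul_mem_range hH hdim hu hk))

theorem exists_normOneUnits_sub_mem_ker_notMem {X : Type*} [AddCommGroup X] [Module F X]
    [Module.Finite F X] (f : E →ₗ[F] X) {P : Submodule F E} {u₀ : E} (u : E) (hu₀ : u₀ ≠ 0)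
    (hP : finrank F X + finrank F P < finrank F E) (hX : 4 * finrank F X + 9 ≤ finrank F E) :
    ∃ a ∈ normOneUnits F E, f (a * u₀ - u) = 0 ∧ a * u₀ - u ∉ P := by
  have hnot : ¬ LinearMap.ker f ≤ P := fun hle => by
    have hker := f.finrank_range_add_finrank_ker
    have hrange := Submodule.finrank_le (LinearMap.range f)
    have hle' := Submodule.finrank_mono hle
    omega
  obtain ⟨w, hw, hwP⟩ := SetLike.not_le_iff_exists.1 hnot
  obtain ⟨π, hπ, hπP⟩ := Submodule.exists_le_ker_of_notMem hwP
  obtain ⟨a, ha, hfa⟩ := exists_normOneUnits_map_eq ((f.prod π) ∘ₗ LinearMap.mulRight F u₀)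
    ((u + w) / u₀) (by rw [Module.finrank_prod, finrank_self]; omega)
  simp only [LinearMap.comp_apply, LinearMap.mulRight_apply, LinearMap.prod_apply, Function.prod,
    div_mul_cancel₀ _ hu₀, Prod.mk.injEq, map_add f, map_add π] at hfa
  refine ⟨a, ha, ?_, fun hmem => hπ ?_⟩
  · rw [map_sub, hfa.1, LinearMap.mem_ker.1 hw, add_zero, sub_self]
  · have := hπP hmem
    rwa [LinearMap.mem_ker, map_sub, hfa.2, add_sub_cancel_left] at this

theorem exists_normOneUnits_map_sub_mul_eq_zero (K : IntermediateField F E) (hD : 0 < rk D)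
    {u₀ u' : E} (u : E) (hu₀ : u₀ ≠ 0) (hu' : u' ≠ 0)
    (hdim : 4 * (finrank F K * rk D) + 9 ≤ finrank F E) :
    ∃ a ∈ normOneUnits F E, (∀ k ∈ K, D ((a * u₀ - u) * k) = 0) ∧ (a * u₀ - u) / u' ∉ K := by
  let W := Subalgebra.toSubmodule K.toSubalgebra
  have hHom : finrank F (W →ₗ[F] LinearMap.range D) = finrank F K * rk D :=
    Module.finrank_linearMap F F W (LinearMap.range D)
  have hW : finrank F (W.map (Algebra.lmul F E u')) = finrank F K := finrank_map_lmul hu' _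
  have hmul : finrank F K ≤ finrank F K * rk D := Nat.le_mul_of_pos_right _ hD
  obtain ⟨a, ha, hzero, hnotMem⟩ := exists_normOneUnits_sub_mem_ker_notMem (F := F)
    (X := W →ₗ[F] LinearMap.range D) (P := W.map (Algebra.lmul F E u')) (mulCompOn D W) u hu₀
    (by omega) (by omega)
  refine ⟨a, ha, fun k hk => ?_, fun hK => hnotMem ⟨_, hK, mul_div_cancel₀ _ hu'⟩⟩
  exact congrArg Subtype.val (LinearMap.congr_fun hzero ⟨k, hk⟩)

/-- Perturbing `u = a₀ u₀` by some `w` with `(g - 1) (w K) = 0` and `w / g u ∉ K`, the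
`K`-rationality of `g (u k) / g u` and of `g ((u + w) k) / g (u + w)` forces `g (u k) = g u * k`. -/
theorem IsMinimalDisplacement.map_normOneUnits_mul (hD : IsMinimalDisplacement H D)
    (hH : normOneTorus F E ≤ H) {g : (End F E)ˣ} (hg : g ∈ H) (hle : rk D ≤ rk (g.1 - 1))
    (hdim : 8 * rk (g.1 - 1) ^ 2 + 5 ≤ finrank F E) {u₀ k : E} (hu₀ : u₀ ∈ LinearMap.range D)
    (hu₀0 : u₀ ≠ 0) {a₀ : Eˣ} (ha₀ : a₀ ∈ normOneUnits F E)
    (hk : k ∈ multiplierField (LinearMap.ker D)) :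
    g.1 (a₀ * u₀ * k) = g.1 (a₀ * u₀) * k := by
  have hrk : 0 < rk D := rk_pos hD.mem.1
  have hdimD : 8 * rk D ^ 2 + 5 ≤ finrank F E := by nlinarith
  have hfin := hD.finrank_multiplierField hH hdimD
  have hrational {a : Eˣ} (ha : a ∈ normOneUnits F E) :
      g.1 (a * u₀ * k) / g.1 (a * u₀) ∈ multiplierField (LinearMap.ker D) := by
    rw [mul_assoc]
    exact hD.map_mul_div_map_mem hH hdimD hu₀ hu₀0
      (H.mul_mem hg (hH (Subgroup.mem_map_of_mem _ ha))) hk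
  have hinj : Function.Injective g.1 := ((Module.End.isUnit_iff _).1 g.isUnit).injective
  have hne (a : Eˣ) : g.1 (a * u₀) ≠ 0 :=
    (map_ne_zero_iff _ hinj).2 (mul_ne_zero a.ne_zero hu₀0)
  obtain ⟨a, ha, hfix, hw⟩ := exists_normOneUnits_map_sub_mul_eq_zero (D := g.1 - 1)
    (multiplierField (LinearMap.ker D)) (by omega) (a₀ * u₀) hu₀0 (hne a₀) (by rw [hfin]; nlinarith)
  set w := a * u₀ - a₀ * u₀
  have hau : a * u₀ = a₀ * u₀ + w := by ring
  have hgw {l : E} (hl : l ∈ multiplierField (LinearMap.ker D)) : g.1 (w * l) = w * l :=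
    sub_eq_zero.1 (hfix l hl)
  have hgw_one : g.1 w = w := by simpa only [mul_one] using hgw (one_mem _)
  have hquot : g.1 (a₀ * u₀ * k) / g.1 (a₀ * u₀) = k :=
    eq_of_mul_add_mul_eq (hne a₀) hw hk (hrational ha₀) (hrational ha) (by
      rw [mul_div_cancel₀ _ (hne a₀), ← hgw_one, ← map_add, ← hau, hgw_one,
        mul_div_cancel₀ _ (hne a), hau, add_mul, map_add, hgw hk])
  rw [← div_mul_cancel₀ (g.1 (a₀ * u₀ * k)) (hne a₀), hquot, mul_comm]

theorem IsMinimalDisplacement.map_mul (hD : IsMinimalDisplacement H D)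
    (hH : normOneTorus F E ≤ H) {g : (End F E)ˣ} (hg : g ∈ H) (hle : rk D ≤ rk (g.1 - 1))
    (hdim : 8 * rk (g.1 - 1) ^ 2 + 5 ≤ finrank F E) {k : E}
    (hk : k ∈ multiplierField (LinearMap.ker D)) (v : E) : g.1 (v * k) = g.1 v * k := by
  obtain ⟨v₀, hv₀⟩ := DFunLike.exists_ne hD.mem.1
  have hrk : 0 < rk D := rk_pos hD.mem.1
  let S : Submodule F E :=
    LinearMap.eqLocus (g.1 ∘ₗ LinearMap.mulRight F (D v₀ * k))
      (LinearMap.mulRight F k ∘ₗ g.1 ∘ₗ LinearMap.mulRight F (D v₀))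
  have hmem : v / D v₀ ∈ S :=
    mem_of_forall_normOneUnits (0 : E →ₗ[F] PUnit)
      (by rw [finrank_zero_of_subsingleton]; nlinarith) fun a ha _ => by
      have := hD.map_normOneUnits_mul hH hg hle hdim (LinearMap.mem_range_self D v₀) hv₀ ha hk
      rwa [mul_assoc] at this
  simpa [S, ← mul_assoc, div_mul_cancel₀ _ hv₀] using hmem

/-- The minimal rank is the degree of a subfield, and it divides the rank of every small
displacement in `H`. -/
theorem exists_mem_squareZeroDisplacements_rk_eq_one (hH : normOneTorus F E ≤ H)
    (hdim : 2 ≤ finrank F E)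
    (hp : ∀ p, p.Prime → p ∣ finrank F E → ∃ g ∈ H, 0 < rk (g.1 - 1) ∧
      8 * rk (g.1 - 1) ^ 2 + 5 ≤ finrank F E ∧ ¬ p ∣ rk (g.1 - 1)) :
    ∃ D ∈ squareZeroDisplacements H, rk D = 1 := by
  have hexists {g : (End F E)ˣ} (hg : g ∈ H) (hpos : 0 < rk (g.1 - 1))
      (hsmall : 8 * rk (g.1 - 1) ^ 2 + 5 ≤ finrank F E) :
      ∃ D ∈ squareZeroDisplacements H, rk D ≤ rk (g.1 - 1) :=
    exists_mem_squareZeroDisplacements_rk_le hH hg hsmall fun h => by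
      rw [h, rk, LinearMap.range_zero, finrank_bot] at hpos
      exact hpos.false
  obtain ⟨p₀, hp₀, hp₀_dvd⟩ := Nat.exists_prime_and_dvd (show finrank F E ≠ 1 by omega)
  obtain ⟨g₀, hg₀, hpos₀, hsmall₀, -⟩ := hp p₀ hp₀ hp₀_dvd
  obtain ⟨D₀, hD₀, -⟩ := hexists hg₀ hpos₀ hsmall₀
  obtain ⟨D, hD⟩ := exists_isMinimalDisplacement ⟨D₀, hD₀⟩
  refine ⟨D, hD.mem, ?_⟩
  by_contra hne
  have hle {g : (End F E)ˣ} (hg : g ∈ H) (hpos : 0 < rk (g.1 - 1))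
      (hsmall : 8 * rk (g.1 - 1) ^ 2 + 5 ≤ finrank F E) : rk D ≤ rk (g.1 - 1) := by
    obtain ⟨D', hD', hrk⟩ := hexists hg hpos hsmall
    exact (hD.rk_le D' hD').trans hrk
  have hfin := hD.finrank_multiplierField hH (by nlinarith [hle hg₀ hpos₀ hsmall₀])
  have hdvd : rk D ∣ finrank F E :=
    ⟨_, hfin ▸ (Module.finrank_mul_finrank F (multiplierField (LinearMap.ker D)) E).symm⟩
  obtain ⟨p, hprime, hpD⟩ := Nat.exists_prime_and_dvd hne
  obtain ⟨g, hg, hpos, hsmall, hpg⟩ := hp p hprime (hpD.trans hdvd)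
  refine hpg (hpD.trans ?_)
  rw [← hfin]
  refine finrank_dvd_rk_of_map_mul _ fun k hk v => ?_
  simp only [LinearMap.sub_apply, Module.End.one_apply, sub_mul,
    hD.map_mul hH hg (hle hg hpos hsmall) hsmall hk v]

end MinimalDisplacement

section Transvections

variable {F V : Type*} [Field F] [AddCommGroup V] [Module F V]

/-- `H` contains the map `x ↦ x + φ x • u`. -/
def ContainsTransvection (H : Subgroup (End F V)ˣ) (φ : Dual F V) (u : V) : Prop :=
  ∃ g ∈ H, g.1 = LinearMap.transvection φ u

variable {H : Subgroup (End F V)ˣ} {φ ψ : Dual F V} {u v : V}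

namespace ContainsTransvection

theorem zero_left : ContainsTransvection H 0 u :=
  ⟨1, H.one_mem, by rw [LinearMap.transvection.of_left_eq_zero]; rfl⟩

theorem zero_right : ContainsTransvection H φ 0 :=
  ⟨1, H.one_mem, by rw [LinearMap.transvection.of_right_eq_zero]; rfl⟩

theorem add_left (hφ : ContainsTransvection H φ u) (hψ : ContainsTransvection H ψ u)
    (hu : φ u = 0) : ContainsTransvection H (φ + ψ) u := by
  obtain ⟨g, hg, hgφ⟩ := hφ
  obtain ⟨k, hk, hkψ⟩ := hψ
  refine ⟨g * k, H.mul_mem hg hk, ?_⟩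
  rw [← LinearMap.transvection.comp_of_right_eq hu, Units.val_mul, hgφ, hkψ, Module.End.mul_eq_comp]

theorem add_right (hu : ContainsTransvection H φ u) (hv : ContainsTransvection H φ v)
    (hφ : φ v = 0) : ContainsTransvection H φ (u + v) := by
  obtain ⟨g, hg, hgu⟩ := hu
  obtain ⟨k, hk, hkv⟩ := hv
  refine ⟨g * k, H.mul_mem hg hk, ?_⟩
  rw [← LinearMap.transvection.comp_of_left_eq hφ, Units.val_mul, hgu, hkv, Module.End.mul_eq_comp]

theorem smul_left_iff {c : F} :
    ContainsTransvection H (c • φ) u ↔ ContainsTransvection H φ (c • u) := by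
  have h : LinearMap.transvection (c • φ) u = LinearMap.transvection φ (c • u) := by
    ext x
    simp only [LinearMap.transvection.apply, LinearMap.smul_apply, smul_eq_mul, smul_smul,
      mul_comm]
  rw [ContainsTransvection, h, ContainsTransvection]

open scoped commutatorElement in
theorem commutator (hφ : ContainsTransvection H φ u) (hψ : ContainsTransvection H ψ v)
    (hψu : ψ u = 0) (hψv : ψ v = 0) : ContainsTransvection H (φ v • ψ) u := by
  obtain ⟨g, hg, hgφ⟩ := hφ
  obtain ⟨k, hk, hkψ⟩ := hψ
  have hkg : (k.1 - 1) * (g.1 - 1) = 0 := by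
    ext x
    simp [hgφ, hkψ, LinearMap.transvection.apply, hψu]
  have hkk : (k.1 - 1) * (k⁻¹).1 = k.1 - 1 := by
    rw [Units.mul_inv_eq_iff_eq_mul]
    ext x
    simp [hkψ, LinearMap.transvection.apply, hψv]
  refine ⟨⁅g, k⁆, H.mul_mem (H.mul_mem (H.mul_mem hg hk) (H.inv_mem hg)) (H.inv_mem hk), ?_⟩
  rw [← sub_add_cancel ⁅g, k⁆.1 1, val_commutatorElement_sub_one hkg, mul_assoc, hkk]
  ext x
  simp [hgφ, hkψ, LinearMap.transvection.apply, add_comm, smul_smul, mul_comm]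

theorem conj (h : ContainsTransvection H φ u) {g : (End F V)ˣ} (hg : g ∈ H) :
    ContainsTransvection H (φ ∘ₗ (g⁻¹).1) (g.1 u) := by
  obtain ⟨t, ht, htφ⟩ := h
  refine ⟨g * t * g⁻¹, H.mul_mem (H.mul_mem hg ht) (H.inv_mem hg), ?_⟩
  ext x
  have hgx : g.1 ((g⁻¹).1 x) = x := LinearMap.congr_fun (Units.mul_inv g) x
  simp [htφ, LinearMap.transvection.apply, hgx]

end ContainsTransvection

/-- The forms `φ` vanishing at `u` such that `H` contains every transvection `x ↦ x + (c φ x) u`. -/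
def transvectionDuals (H : Subgroup (End F V)ˣ) (u : V) : Submodule F (Dual F V) where
  carrier := {φ | φ u = 0 ∧ ∀ c : F, ContainsTransvection H (c • φ) u}
  add_mem' := fun {φ ψ} hφ hψ =>
    ⟨by rw [LinearMap.add_apply, hφ.1, hψ.1, add_zero], fun c => by
      rw [smul_add]
      exact (hφ.2 c).add_left (hψ.2 c) (by rw [LinearMap.smul_apply, hφ.1, smul_zero])⟩
  zero_mem' := ⟨LinearMap.zero_apply u, fun c => by rw [smul_zero]; exact .zero_left⟩
  smul_mem' := fun a φ hφ =>
    ⟨by rw [LinearMap.smul_apply, hφ.1, smul_zero], fun c => by rw [smul_smul]; exact hφ.2 _⟩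

/-- The vectors `u` in the kernel of `φ` such that `H` contains every transvection
`x ↦ x + φ x • c • u`. -/
def transvectionCenters (H : Subgroup (End F V)ˣ) (φ : Dual F V) : Submodule F V where
  carrier := {u | φ u = 0 ∧ ∀ c : F, ContainsTransvection H φ (c • u)}
  add_mem' := fun {u v} hu hv =>
    ⟨by rw [map_add, hu.1, hv.1, add_zero], fun c => by
      rw [smul_add]
      exact (hu.2 c).add_right (hv.2 c) (by rw [map_smul, hv.1, smul_zero])⟩
  zero_mem' := ⟨map_zero φ, fun c => by rw [smul_zero]; exact .zero_right⟩
  smul_mem' := fun a u hu =>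
    ⟨by rw [map_smul, hu.1, smul_zero], fun c => by rw [smul_smul]; exact hu.2 _⟩

theorem exists_eq_smulRight_of_rk_eq_one {D : End F V} (h : rk D = 1) :
    ∃ (φ : Dual F V) (u : V), φ ≠ 0 ∧ u ≠ 0 ∧ D = φ.smulRight u := by
  obtain ⟨⟨u, hu⟩, hu0, hspan⟩ := finrank_eq_one_iff'.1 h
  let e : F ≃ₗ[F] LinearMap.range D :=
    .ofBijective (LinearMap.toSpanSingleton F (LinearMap.range D) ⟨u, hu⟩)
      ⟨smul_left_injective F hu0, hspan⟩
  have hD : D = ((e.symm : LinearMap.range D →ₗ[F] F) ∘ₗ D.rangeRestrict).smulRight u := by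
    ext x
    have := congrArg Subtype.val (e.apply_symm_apply (D.rangeRestrict x))
    exact this.symm
  refine ⟨_, u, fun hφ => ?_, fun h0 => hu0 (Subtype.ext h0), hD⟩
  rw [hφ, LinearMap.zero_smulRight] at hD
  rw [hD, rk, LinearMap.range_zero, finrank_bot] at h
  exact zero_ne_one h

end Transvections

section FieldTransvections

variable {F E : Type*} [Field F] [Field E] [Algebra F E]

/-- The form `x ↦ φ (c x)`, as a linear function of `c`. -/
def mulDual (φ : Dual F E) : E →ₗ[F] Dual F E := (LinearMap.mul F E).compr₂ φ

theorem mulDual_apply (φ : Dual F E) (c x : E) : mulDual φ c x = φ (c * x) := rfl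

theorem mulDual_one (φ : Dual F E) : mulDual φ 1 = φ := by
  ext x
  rw [mulDual_apply, one_mul]

theorem mulDual_mulDual (φ : Dual F E) (c d : E) : mulDual (mulDual φ c) d = mulDual φ (c * d) := by
  ext x
  simp only [mulDual_apply, mul_assoc]

theorem mulDual_injective {φ : Dual F E} (hφ : φ ≠ 0) : Function.Injective (mulDual φ) := by
  rw [injective_iff_map_eq_zero]
  intro c hc
  by_contra hc0
  refine hφ (LinearMap.ext fun x => ?_)
  rw [← mul_inv_cancel_left₀ hc0 x, ← mulDual_apply, hc]
  rfl

theorem mulDual_surjective [FiniteDimensional F E] {φ : Dual F E} (hφ : φ ≠ 0) :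
    Function.Surjective (mulDual φ) :=
  (LinearMap.injective_iff_surjective_of_finrank_eq_finrank Subspace.dual_finrank_eq.symm).1
    (mulDual_injective hφ)

theorem exists_map_eq_and_map_mul_eq_zero {φ : Dual F E} (hφ : φ ≠ 0) {d : E}
    (hd : d ∉ Submodule.span F {(1 : E)}) (c : F) : ∃ x, φ x = c ∧ φ (d * x) = 0 := by
  obtain ⟨x, hdx, hx⟩ : ∃ x, φ (d * x) = 0 ∧ φ x ≠ 0 := by
    by_contra! h
    have hmem : φ ∈ Submodule.span F (Set.range fun _ : Unit => mulDual φ d) :=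
      mem_span_of_iInf_ker_le_ker fun x hx => h x (by simpa [mulDual_apply] using hx)
    rw [Set.range_const, Submodule.mem_span_singleton] at hmem
    obtain ⟨l, hl⟩ := hmem
    have hld : l • d = 1 := mulDual_injective hφ (by rw [map_smul, hl, mulDual_one])
    have hl0 : l ≠ 0 := fun hl0 => one_ne_zero (by rw [← hld, hl0, zero_smul])
    exact hd (Submodule.mem_span_singleton.2 ⟨l⁻¹, by rw [← hld, inv_smul_smul₀ hl0]⟩)
  exact ⟨(c / φ x) • x, by simp [hx], by simp [hdx]⟩

variable {H : Subgroup (End F E)ˣ} {φ ψ : Dual F E} {u : E}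

theorem ContainsTransvection.mulDual_inv (hH : normOneTorus F E ≤ H)
    (h : ContainsTransvection H φ u) {a : Eˣ} (ha : a ∈ normOneUnits F E) :
    ContainsTransvection H (mulDual φ (a⁻¹ : Eˣ)) (a * u) :=
  h.conj (hH (Subgroup.mem_map_of_mem _ ha))

variable [Finite F] [Finite E]

theorem mulDual_mem_transvectionDuals_of_mem_normOneUnits (hH : normOneTorus F E ≤ H)
    (hdim : 17 ≤ finrank F E) (h : ContainsTransvection H φ u) (hφ : φ ≠ 0) (hu : φ u = 0)
    (hu0 : u ≠ 0)
    {d : Eˣ} (hd : d ∈ normOneUnits F E) (hd1 : (d : E) ∉ Submodule.span F {(1 : E)})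
    (hdu : φ (d * u) = 0) : mulDual φ d ∈ transvectionDuals H u := by
  refine ⟨hdu, fun c => ?_⟩
  obtain ⟨x, hx, hdx⟩ := exists_map_eq_and_map_mul_eq_zero hφ hd1 c
  obtain ⟨y, hy⟩ := LinearMap.surjective hφ 1
  obtain ⟨a, ha, hax, hay⟩ := exists_normOneUnits_map_eq_and_map_inv_eq
    ((mulDual φ u).prod (mulDual φ (d * u))) (mulDual φ ((d⁻¹ : Eˣ) * u)) (x / u)
    (y / ((d⁻¹ : Eˣ) * u)) (by rwa [finrank_prod, finrank_self])
  have hau : φ (a * u) = c :=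
    calc φ (a * u) = φ (u * a) := by rw [mul_comm]
      _ = φ (u * (x / u)) := congrArg Prod.fst hax
      _ = c := by rw [mul_div_cancel₀ _ hu0, hx]
  have hdau : φ (d * (a * u)) = 0 :=
    calc φ (d * (a * u)) = φ (d * u * a) := by rw [mul_comm (a : E), mul_assoc]
      _ = φ (d * u * (x / u)) := congrArg Prod.snd hax
      _ = 0 := by rw [mul_assoc, mul_div_cancel₀ _ hu0, hdx]
  have hadu : φ ((a⁻¹ : Eˣ) * ((d⁻¹ : Eˣ) * u)) = 1 :=
    calc φ ((a⁻¹ : Eˣ) * ((d⁻¹ : Eˣ) * u)) = φ ((d⁻¹ : Eˣ) * u * (a⁻¹ : Eˣ)) := by rw [mul_comm]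
      _ = φ ((d⁻¹ : Eˣ) * u * (y / ((d⁻¹ : Eˣ) * u))) := hay
      _ = 1 := by rw [mul_div_cancel₀ _ (mul_ne_zero (Units.ne_zero _) hu0), hy]
  have hd_inv := h.mulDual_inv hH (inv_mem hd)
  rw [inv_inv] at hd_inv
  have hstep := (h.mulDual_inv hH ha).commutator hd_inv hdau (by
    rw [mulDual_apply, Units.mul_inv_cancel_left, hu])
  rw [mulDual_apply, hadu, one_smul] at hstep
  exact hau ▸ h.commutator hstep hdu hdau

theorem mem_transvectionDuals (hH : normOneTorus F E ≤ H)
    (hdim : 17 ≤ finrank F E) (h : ContainsTransvection H φ u) (hφ : φ ≠ 0) (hu : φ u = 0)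
    (hu0 : u ≠ 0)
    (hψ : ψ u = 0) : ψ ∈ transvectionDuals H u := by
  obtain ⟨c, rfl⟩ := mulDual_surjective hφ ψ
  let X : Submodule F E := (transvectionDuals H u).comap (mulDual φ)
  let U : Submodule F E := Submodule.span F {1}
  have hX {c : E} (hcu : mulDual φ u c = 0) (hcU : c ∉ U) : c ∈ X := by
    obtain ⟨θ, hθc, hθU⟩ := Submodule.exists_dual_map_eq_bot_of_notMem hcU inferInstance
    refine mem_of_forall_normOneUnits ((mulDual φ u).prod θ)
      (by rwa [finrank_prod, finrank_self]) fun a ha hac => ?_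
    obtain ⟨hau, haθ⟩ := Prod.ext_iff.1 hac
    refine mulDual_mem_transvectionDuals_of_mem_normOneUnits hH hdim h hφ hu hu0 ha
      (fun haU => hθc ?_) ?_
    · exact haθ.symm.trans (LinearMap.le_ker_iff_map.2 hθU haU)
    · rw [mul_comm]
      exact hau.trans hcu
  have hcu : mulDual φ u c = 0 := by rwa [mulDual_apply, mul_comm, ← mulDual_apply]
  by_cases hcU : c ∈ U
  swap
  · exact hX hcu hcU
  obtain ⟨w, hwu, hwU⟩ : ∃ w, mulDual φ u w = 0 ∧ w ∉ U := by
    by_contra! hle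
    have h1 : finrank F (LinearMap.ker (mulDual φ u)) ≤ 1 :=
      (Submodule.finrank_mono (t := U) hle).trans (finrank_span_singleton one_ne_zero).le
    have h2 := (mulDual φ u).finrank_range_add_finrank_ker
    have h3 := (LinearMap.range (mulDual φ u)).finrank_le
    rw [finrank_self] at h3
    omega
  have := X.sub_mem (hX (c := c + w) (by rw [map_add, hcu, hwu, add_zero])
    fun h => hwU ((U.add_mem_iff_right hcU).1 h)) (hX hwu hwU)
  rwa [add_sub_cancel_right] at this

theorem mem_transvectionCenters (hH : normOneTorus F E ≤ H)
    (hdim : 17 ≤ finrank F E) (h : ContainsTransvection H φ u) (hφ : φ ≠ 0) (hu : φ u = 0)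
    (hu0 : u ≠ 0)
    {v : E} (hv : ψ v = 0) : v ∈ transvectionCenters H ψ := by
  have hmem : v / u ∈ (transvectionCenters H ψ).comap (LinearMap.mulRight F u) := by
    refine mem_of_forall_normOneUnits (mulDual ψ u) (by rw [finrank_self]; omega) fun a ha hau => ?_
    have hψa : ψ (a * u) = 0 := by
      rw [mul_comm, ← mulDual_apply, hau, mulDual_apply, mul_div_cancel₀ _ hu0, hv]
    refine ⟨hψa, fun c => ?_⟩
    have := ((mem_transvectionDuals hH hdim h hφ hu hu0
      (show mulDual ψ a u = 0 from hψa)).2 c).mulDual_inv hH ha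
    rwa [← map_smul, mulDual_mulDual, smul_mul_assoc, Units.mul_inv, map_smul, mulDual_one,
      ContainsTransvection.smul_left_iff] at this
  simpa [hu0] using hmem

theorem containsTransvection_of_normOneTorus_le (hH : normOneTorus F E ≤ H)
    (hdim : 17 ≤ finrank F E)
    (hp : ∀ p, p.Prime → p ∣ finrank F E → ∃ g ∈ H, 0 < rk (g.1 - 1) ∧
      8 * rk (g.1 - 1) ^ 2 + 5 ≤ finrank F E ∧ ¬ p ∣ rk (g.1 - 1))
    (hu : φ u = 0) : ContainsTransvection H φ u := by
  obtain ⟨D, ⟨-, hDD, g, hg, hgD⟩, hrk⟩ :=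
    exists_mem_squareZeroDisplacements_rk_eq_one hH (by omega) hp
  obtain ⟨φ₀, u₀, hφ₀, hu₀, rfl⟩ := exists_eq_smulRight_of_rk_eq_one hrk
  have hφu₀ : φ₀ u₀ = 0 := by
    obtain ⟨x, hx⟩ := LinearMap.surjective hφ₀ 1
    simpa [hx, hu₀] using LinearMap.congr_fun hDD x
  have h₀ : ContainsTransvection H φ₀ u₀ := ⟨g, hg, by rw [hgD]; rfl⟩
  have := (mem_transvectionCenters hH hdim h₀ hφ₀ hφu₀ hu₀ hu).2 1
  rwa [one_smul] at this

end FieldTransvections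

section Generation

open Matrix

variable {ι F : Type*} [Fintype ι] [DecidableEq ι] [Field F] {i j : ι}

theorem val_transvection_mul_transvection_mul_transvection (hij : i ≠ j) {c : F} (hc : c ≠ 0) :
    (SpecialLinearGroup.transvection hij c * SpecialLinearGroup.transvection hij.symm (-c⁻¹) *
      SpecialLinearGroup.transvection hij c : SpecialLinearGroup ι F).1 =
      1 + single i j c - single j i c⁻¹ - single i i 1 - single j j 1 := by
  change ((1 : Matrix ι ι F) + single i j c) * (1 + single j i (-c⁻¹)) * (1 + single i j c) = _
  simp only [mul_add, add_mul, single_mul_single_same, single_mul_single_of_ne _ _ _ _ hij.symm,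
    one_mul, mul_one, mul_neg, neg_mul, mul_inv_cancel₀ hc, inv_mul_cancel₀ hc, ← single_neg]
  abel

theorem val_diag2n (hij : i ≠ j) {c : F} (hc : c ≠ 0) :
    (SpecialLinearGroup.diag2n hij c hc).1 =
      1 + single i i c - single i i 1 + single j j c⁻¹ - single j j 1 := by
  rw [SpecialLinearGroup.diag2n_coe]
  ext k l
  simp only [diagonal_apply, Matrix.add_apply, Matrix.sub_apply, single_apply, one_apply]
  by_cases hkl : k = l
  · subst hkl
    by_cases hk : i = k
    · subst hk
      simp [hij.symm]
    · by_cases hk' : j = k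
      · subst hk'
        simp [hij, hij.symm]
      · simp [hk, hk', Ne.symm hk, Ne.symm hk']
  · have hi : ¬ (i = k ∧ i = l) := fun h => hkl (h.1.symm.trans h.2)
    have hj : ¬ (j = k ∧ j = l) := fun h => hkl (h.1.symm.trans h.2)
    simp only [hkl, hi, hj, if_false]
    ring

theorem diag2n_eq_prod_transvection (hij : i ≠ j) {c : F} (hc : c ≠ 0) :
    SpecialLinearGroup.diag2n hij c hc =
      (SpecialLinearGroup.transvection hij c * SpecialLinearGroup.transvection hij.symm (-c⁻¹) *
        SpecialLinearGroup.transvection hij c) *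
      (SpecialLinearGroup.transvection hij (-1) *
        SpecialLinearGroup.transvection hij.symm (-(-1)⁻¹) *
        SpecialLinearGroup.transvection hij (-1)) := by
  refine Subtype.ext ?_
  rw [val_diag2n, show ∀ A B : SpecialLinearGroup ι F, (A * B).1 = A.1 * B.1 from fun _ _ => rfl,
    val_transvection_mul_transvection_mul_transvection hij hc,
    val_transvection_mul_transvection_mul_transvection hij (neg_ne_zero.2 one_ne_zero)]
  simp only [mul_add, add_mul, mul_sub, sub_mul, single_mul_single_same,
    single_mul_single_of_ne _ _ _ _ hij, single_mul_single_of_ne _ _ _ _ hij.symm,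
    one_mul, mul_one, inv_neg, inv_one, mul_neg, ← single_neg]
  abel

theorem eq_top_of_transvection_mem [Nontrivial ι] {H : Subgroup (SpecialLinearGroup ι F)}
    (h : ∀ i j (hij : i ≠ j) (c : F), SpecialLinearGroup.transvection hij c ∈ H) : H = ⊤ := by
  refine (Subgroup.eq_top_iff' H).2 fun M =>
    SpecialLinearGroup.diagonal_transvection_induction' (· ∈ H) M (fun i j hij c hc => ?_) h
      fun _ _ => H.mul_mem
  have hw {c : F} : SpecialLinearGroup.transvection hij c *
      SpecialLinearGroup.transvection hij.symm (-c⁻¹) * SpecialLinearGroup.transvection hij c ∈ H :=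
    H.mul_mem (H.mul_mem (h _ _ _ _) (h _ _ _ _)) (h _ _ _ _)
  rw [diag2n_eq_prod_transvection]
  exact H.mul_mem hw hw

end Generation

section InvariableGenerators

theorem invGen_of_forall_closure_eq_top {G : Type*} [Group G] {x y : G}
    (h : ∀ k : G, Subgroup.closure {x, k * y * k⁻¹} = ⊤) : InvGen x y := fun g k => by
  have hmap := congrArg (Subgroup.map (MulAut.conj g).toMonoidHom) (h (g⁻¹ * k))
  rw [MonoidHom.map_closure, Set.image_pair, Subgroup.map_top_of_surjective _
    (MulAut.conj g).surjective] at hmap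
  simpa [mul_assoc] using hmap

variable {ι F : Type*} [Fintype ι] [DecidableEq ι] [Field F]

/-- The rank of `y - 1`, for the action of `y` on `Fⁿ`. -/
noncomputable def displacementRank (y : Matrix.SpecialLinearGroup ι F) : ℕ :=
  rk (Matrix.toLin' y.1 - 1)

variable {V : Type*} [AddCommGroup V] [Module F V] (b : Basis ι F V)

/-- The action of `SL_n(F)` on a vector space identified with `Fⁿ` through a basis. -/
noncomputable def basisRep : Matrix.SpecialLinearGroup ι F →* (End F V)ˣ :=
  (Units.map (Matrix.toLinAlgEquiv b : Matrix ι ι F →* End F V)).comp Matrix.SpecialLinearGroup.toGL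

theorem val_basisRep (y : Matrix.SpecialLinearGroup ι F) :
    (basisRep b y).1 = Matrix.toLin b b y.1 := rfl

theorem basisRep_injective : Function.Injective (basisRep b) := fun _ _ h =>
  Subtype.ext ((Matrix.toLin b b).injective (congrArg Units.val h))

theorem rk_basisRep_sub_one (y : Matrix.SpecialLinearGroup ι F) :
    rk ((basisRep b y).1 - 1) = displacementRank y := by
  have hb : (basisRep b y).1 - 1 = Matrix.toLin b b (y.1 - 1) := by
    rw [val_basisRep, map_sub, Matrix.toLin_one]
    rfl
  have hstd : Matrix.toLin' y.1 - 1 =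
      Matrix.toLin (Pi.basisFun F ι) (Pi.basisFun F ι) (y.1 - 1) := by
    rw [Matrix.toLin_eq_toLin', map_sub, Matrix.toLin'_one]
    rfl
  rw [displacementRank, hb, hstd, rk, rk, ← Matrix.rank_eq_finrank_range_toLin,
    ← Matrix.rank_eq_finrank_range_toLin]

theorem displacementRank_conj (k y : Matrix.SpecialLinearGroup ι F) :
    displacementRank (k * y * k⁻¹) = displacementRank y := by
  let ρ := basisRep (Pi.basisFun F ι)
  have hconj : (ρ (k * y * k⁻¹)).1 - 1 = (ρ k).1 * ((ρ y).1 - 1) * ((ρ k)⁻¹).1 := by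
    rw [map_mul, map_mul, map_inv, mul_sub, sub_mul, mul_one, Units.mul_inv, Units.val_mul,
      Units.val_mul]
  rw [← rk_basisRep_sub_one (Pi.basisFun F ι), hconj, rk_mul_unit, rk_unit_mul,
    rk_basisRep_sub_one]

theorem eq_top_of_containsTransvection [Nontrivial ι]
    {H : Subgroup (Matrix.SpecialLinearGroup ι F)}
    (h : ∀ φ u, φ u = 0 → ContainsTransvection (H.map (basisRep b)) φ u) : H = ⊤ := by
  refine eq_top_of_transvection_mem fun i j hij c => ?_
  obtain ⟨-, ⟨t, ht, rfl⟩, htc⟩ := h (b.coord j) (c • b i) (by simp [hij])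
  suffices t = Matrix.SpecialLinearGroup.transvection hij c from this ▸ ht
  refine basisRep_injective b (Units.ext (htc.trans (b.ext fun l => ?_)))
  rw [val_basisRep, Matrix.SpecialLinearGroup.transvection_coe, map_add, Matrix.toLin_one,
    LinearMap.add_apply, Matrix.toLin_self]
  simp [LinearMap.transvection.apply, Matrix.single_apply, ite_and, Finsupp.single_apply, eq_comm]

theorem exists_map_zpowers_eq_normOneTorus {E : Type*} [Field E] [Finite E] [Algebra F E]
    (b : Basis ι F E) :
    ∃ x, (Subgroup.zpowers x).map (basisRep b) = normOneTorus F E := by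
  obtain ⟨⟨ζ, hζ⟩, hgen⟩ := IsCyclic.exists_generator (α := normOneUnits F E)
  have hnorm : Algebra.norm F (ζ : E) = 1 := congrArg Units.val hζ
  have hzpowers : Subgroup.zpowers ζ = normOneUnits F E :=
    le_antisymm (Subgroup.zpowers_le.2 hζ) fun a ha => by
      obtain ⟨z, hz⟩ := hgen ⟨a, ha⟩
      exact ⟨z, congrArg Subtype.val hz⟩
  let x : Matrix.SpecialLinearGroup ι F :=
    ⟨Algebra.leftMulMatrix b (ζ : E), by rw [← Algebra.norm_eq_matrix_det, hnorm]⟩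
  have hx : basisRep b x = Units.map (Algebra.lmul F E : E →* End F E) ζ :=
    Units.ext (Matrix.toLin_toMatrix b b _)
  exact ⟨x, by rw [MonoidHom.map_zpowers, hx, ← MonoidHom.map_zpowers, hzpowers, normOneTorus]⟩

theorem exists_forall_invGen [Finite F] {n : ℕ} (hn : 17 ≤ n) :
    ∃ x : Matrix.SpecialLinearGroup (Fin n) F, ∀ y,
      (∀ p, p.Prime → p ∣ n → ∃ m, 0 < displacementRank (y ^ m) ∧
        8 * displacementRank (y ^ m) ^ 2 + 5 ≤ n ∧ ¬ p ∣ displacementRank (y ^ m)) →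
      InvGen x y := by
  obtain ⟨p, hp⟩ := CharP.exists F
  have : Fact p.Prime := ⟨CharP.char_is_prime F p⟩
  have : NeZero n := ⟨by omega⟩
  have : Nontrivial (Fin n) := Fin.nontrivial_iff_two_le.2 (by omega)
  have hdim : finrank F (FiniteField.Extension F p n) = n := FiniteField.finrank_extension F p n
  let b := finBasisOfFinrankEq F (FiniteField.Extension F p n) hdim
  obtain ⟨x, hx⟩ := exists_map_zpowers_eq_normOneTorus b
  refine ⟨x, fun y hy => invGen_of_forall_closure_eq_top fun k => ?_⟩
  refine eq_top_of_containsTransvection b fun φ u =>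
    containsTransvection_of_normOneTorus_le ?_ (hn.trans_eq hdim.symm) fun q hq hqn => ?_
  · rw [← hx]
    exact Subgroup.map_mono (Subgroup.zpowers_le.2 (Subgroup.subset_closure (Set.mem_insert _ _)))
  obtain ⟨m, hm⟩ := hy q hq (hdim ▸ hqn)
  refine ⟨basisRep b ((k * y * k⁻¹) ^ m), Subgroup.mem_map_of_mem _ (Subgroup.pow_mem _
    (Subgroup.subset_closure (Set.mem_insert_of_mem _ (Set.mem_singleton _))) m), ?_⟩
  rwa [rk_basisRep_sub_one, conj_pow, displacementRank_conj, hdim]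

end InvariableGenerators

section Embeddings

variable (R : Type*) [CommRing R] (M M' N : Type*) [AddCommGroup M] [Module R M]
  [AddCommGroup M'] [Module R M'] [AddCommGroup N] [Module R N]

/-- The module `M` is isomorphic to a submodule of `N`. -/
def Embeds : Prop := ∃ φ : M →ₗ[R] N, Function.Injective φ

/-- The number of injective linear maps from `M` to `N`. -/
noncomputable def embeddingCount : ℕ := Nat.card {φ : M →ₗ[R] N // Function.Injective φ}

variable {R M M' N}

theorem embeddingCount_ne_zero [Finite M] [Finite N] :
    embeddingCount R M N ≠ 0 ↔ Embeds R M N := by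
  have : Finite (M →ₗ[R] N) := DFunLike.finite _
  rw [embeddingCount, Nat.card_ne_zero, nonempty_subtype, Embeds]
  exact and_iff_left inferInstance

theorem card_linearEquiv_le_embeddingCount [Finite M] [Finite N] (h : Embeds R M N) :
    Nat.card (M ≃ₗ[R] M) ≤ embeddingCount R M N := by
  obtain ⟨φ, hφ⟩ := h
  have : Finite (M →ₗ[R] N) := DFunLike.finite _
  refine Nat.card_le_card_of_injective
    (fun α : M ≃ₗ[R] M => ⟨φ ∘ₗ α.toLinearMap, hφ.comp α.injective⟩) fun α β h => ?_
  ext m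
  exact hφ (LinearMap.congr_fun (congrArg Subtype.val h) m)

theorem card_linearEquiv_mul_le_card_prod [Finite M] [Finite M'] :
    Nat.card (M ≃ₗ[R] M) * Nat.card (M' ≃ₗ[R] M') ≤ Nat.card ((M × M') ≃ₗ[R] M × M') := by
  have : Finite ((M × M') ≃ₗ[R] M × M') := DFunLike.finite _
  rw [← Nat.card_prod]
  refine Nat.card_le_card_of_injective (fun α => α.1.prodCongr α.2) fun α β h => ?_
  refine Prod.ext (LinearEquiv.ext fun m => ?_) (LinearEquiv.ext fun m => ?_)
  · exact congrArg Prod.fst (LinearEquiv.congr_fun h (m, 0))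
  · exact congrArg Prod.snd (LinearEquiv.congr_fun h (0, m))

theorem injective_coprod_iff {φ : M →ₗ[R] N} {ψ : M' →ₗ[R] N} :
    Function.Injective (φ.coprod ψ) ↔ Function.Injective φ ∧ Function.Injective ψ ∧
      Disjoint (LinearMap.range φ) (LinearMap.range ψ) := by
  refine ⟨fun h => ⟨?_, ?_, ?_⟩, fun ⟨hφ, hψ, h⟩ => ?_⟩
  · rw [← φ.coprod_inl ψ]
    exact h.comp LinearMap.inl_injective
  · rw [← φ.coprod_inr ψ]
    exact h.comp LinearMap.inr_injective
  · rw [Submodule.disjoint_def]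
    rintro _ ⟨m, rfl⟩ ⟨m', hm'⟩
    have h0 : φ.coprod ψ (m, -m') = φ.coprod ψ 0 := by simp [hm']
    exact (congrArg φ (Prod.ext_iff.1 (h h0)).1).trans (map_zero φ)
  · rw [← LinearMap.ker_eq_bot, LinearMap.ker_coprod_of_disjoint_range _ _ h,
      LinearMap.ker_eq_bot.2 hφ, LinearMap.ker_eq_bot.2 hψ, Submodule.prod_bot]

theorem embeddingCount_prod {p q : R} (hpq : IsCoprime p q) (hp : ∀ m : M, p • m = 0)
    (hq : ∀ m : M', q • m = 0) :
    embeddingCount R (M × M') N = embeddingCount R M N * embeddingCount R M' N := by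
  have hdisj (φ : M →ₗ[R] N) (ψ : M' →ₗ[R] N) :
      Disjoint (LinearMap.range φ) (LinearMap.range ψ) := by
    rw [Submodule.disjoint_def]
    rintro _ ⟨m, rfl⟩ ⟨m', hm'⟩
    obtain ⟨a, b, hab⟩ := hpq
    calc φ m = a • p • φ m + b • q • φ m := by rw [smul_smul, smul_smul, ← add_smul, hab, one_smul]
      _ = 0 := by rw [← hm', ← map_smul ψ q, hq, hm', ← map_smul φ p, hp]; simp
  rw [embeddingCount, embeddingCount, embeddingCount, ← Nat.card_prod]
  refine Nat.card_congr (((LinearMap.coprodEquiv R).toEquiv.subtypeEquiv fun φ => ?_).symm.trans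
    Equiv.subtypeProdEquivProd)
  exact ⟨fun h => injective_coprod_iff.2 ⟨h.1, h.2, hdisj _ _⟩,
    fun h => ⟨(injective_coprod_iff.1 h).1, (injective_coprod_iff.1 h).2.1⟩⟩

theorem isAtom_range_of_injective [IsSimpleModule R M] {φ : M →ₗ[R] N}
    (hφ : Function.Injective φ) : IsAtom (LinearMap.range φ) :=
  isSimpleModule_iff_isAtom.1 (IsSimpleModule.congr (LinearEquiv.ofInjective φ hφ).symm)

theorem exists_linearEquiv_comp_eq {φ ψ : M →ₗ[R] N} (hφ : Function.Injective φ)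
    (hψ : Function.Injective ψ) (h : LinearMap.range ψ = LinearMap.range φ) :
    ∃ α : M ≃ₗ[R] M, φ ∘ₗ α.toLinearMap = ψ := by
  refine ⟨LinearEquiv.ofInjective ψ hψ ≪≫ₗ LinearEquiv.ofEq _ _ h ≪≫ₗ
    (LinearEquiv.ofInjective φ hφ).symm, LinearMap.ext fun m => ?_⟩
  exact congrArg Subtype.val ((LinearEquiv.ofInjective φ hφ).apply_symm_apply _)

theorem disjoint_range_or_exists_comp_eq [IsSimpleModule R M] {φ ψ : M →ₗ[R] N}
    (hφ : Function.Injective φ) (hψ : Function.Injective ψ) :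
    Disjoint (LinearMap.range φ) (LinearMap.range ψ) ∨
      ∃ α : M ≃ₗ[R] M, φ ∘ₗ α.toLinearMap = ψ := by
  by_cases h : LinearMap.range ψ = LinearMap.range φ
  · exact .inr (exists_linearEquiv_comp_eq hφ hψ h)
  · exact .inl ((isAtom_range_of_injective hφ).disjoint_of_ne (isAtom_range_of_injective hψ)
      (Ne.symm h))

theorem embeddingCount_sq [IsSimpleModule R M] [Finite M] [Finite N] :
    embeddingCount R M N ^ 2 =
      embeddingCount R (M × M) N + Nat.card (M ≃ₗ[R] M) * embeddingCount R M N := by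
  let A := {φ : M →ₗ[R] N // Function.Injective φ}
  have : Finite (M →ₗ[R] N) := DFunLike.finite _
  have : Finite (M × M →ₗ[R] N) := DFunLike.finite _
  have : Finite (M ≃ₗ[R] M) := DFunLike.finite _
  let disjointPair (φ : {φ : M × M →ₗ[R] N // Function.Injective φ}) : A × A :=
    (⟨φ.1 ∘ₗ LinearMap.inl R M M, φ.2.comp LinearMap.inl_injective⟩,
      ⟨φ.1 ∘ₗ LinearMap.inr R M M, φ.2.comp LinearMap.inr_injective⟩)
  let associatedPair (p : (M ≃ₗ[R] M) × A) : A × A :=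
    (p.2, ⟨p.2.1 ∘ₗ p.1.toLinearMap, p.2.2.comp p.1.injective⟩)
  have : Nontrivial M := IsSimpleModule.nontrivial R M
  have hbij : Function.Bijective (Sum.elim disjointPair associatedPair) := by
    refine ⟨.sumElim (fun φ ψ h => ?_) (fun p p' h => ?_) fun φ ⟨α, ψ⟩ h => ?_, fun ⟨φ, ψ⟩ => ?_⟩
    · have h₁ := congrArg (fun p : A × A => p.1.1) h
      have h₂ := congrArg (fun p : A × A => p.2.1) h
      exact Subtype.ext (LinearMap.prod_ext h₁ h₂)
    · have h₁ : p.2 = p'.2 := congrArg Prod.fst h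
      have h₂ : p.2.1 ∘ₗ p.1.toLinearMap = p'.2.1 ∘ₗ p'.1.toLinearMap :=
        congrArg (fun p : A × A => p.2.1) h
      rw [← h₁] at h₂
      exact Prod.ext (LinearEquiv.ext fun m => p.2.2 (LinearMap.congr_fun h₂ m)) h₁
    · have h₁ (m : M) : φ.1 (m, 0) = ψ.1 m :=
        LinearMap.congr_fun (congrArg (fun p : A × A => p.1.1) h) m
      have h₂ (m : M) : φ.1 (0, m) = ψ.1 (α m) :=
        LinearMap.congr_fun (congrArg (fun p : A × A => p.2.1) h) m
      obtain ⟨m, hm⟩ := exists_ne (0 : M)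
      exact hm (congrArg Prod.snd (φ.2 ((h₁ (α m)).trans (h₂ m).symm))).symm
    · rcases disjoint_range_or_exists_comp_eq φ.2 ψ.2 with hd | ⟨α, hα⟩
      · exact ⟨.inl ⟨φ.1.coprod ψ.1, injective_coprod_iff.2 ⟨φ.2, ψ.2, hd⟩⟩,
          Prod.ext (Subtype.ext (LinearMap.coprod_inl ..)) (Subtype.ext (LinearMap.coprod_inr ..))⟩
      · exact ⟨.inr (α, φ), Prod.ext rfl (Subtype.ext hα)⟩
  rw [sq, embeddingCount, ← Nat.card_prod, ← Nat.card_eq_of_bijective _ hbij, Nat.card_sum,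
    Nat.card_prod]
  rfl

end Embeddings

section CyclicModules

variable {R N : Type*} [CommRing R] [AddCommGroup N] [Module R N]

theorem card_linearEquiv_quotient (I : Ideal R) :
    Nat.card ((R ⧸ I) ≃ₗ[R] R ⧸ I) = Nat.card (R ⧸ I)ˣ := by
  have hmul (α : (R ⧸ I) ≃ₗ[R] R ⧸ I) (a : R ⧸ I) : α a = a * α 1 := by
    obtain ⟨r, rfl⟩ := Ideal.Quotient.mk_surjective a
    simpa [Algebra.smul_def] using α.map_smul r 1
  refine Nat.card_congr
    { toFun α := ⟨α 1, α.symm 1, ?_, ?_⟩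
      invFun u := DistribMulAction.toLinearEquiv R (R ⧸ I) u
      left_inv α := LinearEquiv.ext fun a => ?_
      right_inv u := Units.ext (mul_one _) }
  · rw [mul_comm, ← hmul, α.apply_symm_apply]
  · rw [← hmul, α.apply_symm_apply]
  · exact (mul_comm _ _).trans (hmul α a).symm

theorem exists_injective_quotient_torsionOf (v : N) :
    ∃ φ : R ⧸ Ideal.torsionOf R N v →ₗ[R] N, Function.Injective φ ∧ v ∈ LinearMap.range φ := by
  let e := Ideal.quotTorsionOfEquivSpanSingleton R N v
  refine ⟨Submodule.subtype _ ∘ₗ e.toLinearMap, Subtype.val_injective.comp e.injective,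
    e.symm ⟨v, Submodule.mem_span_singleton_self v⟩, ?_⟩
  simp

variable [IsPrincipalIdealRing R] {f : R}

theorem isSimpleModule_quotient_span (hf : Irreducible f) :
    IsSimpleModule R (R ⧸ Ideal.span {f}) :=
  isSimpleModule_iff_isCoatom.2 (PrincipalIdealRing.isMaximal_of_irreducible hf).out

theorem exists_injective_quotient_span (hf : Irreducible f) {v : N} (hfv : f • v = 0)
    (hv : v ≠ 0) :
    ∃ φ : R ⧸ Ideal.span {f} →ₗ[R] N, Function.Injective φ ∧ v ∈ LinearMap.range φ := by
  have htors : Ideal.span {f} = Ideal.torsionOf R N v :=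
    (PrincipalIdealRing.isMaximal_of_irreducible hf).eq_of_le
      (fun h => hv ((Ideal.torsionOf_eq_top_iff R v).1 h))
      ((Ideal.span_singleton_le_iff_mem _).2 hfv)
  rw [htors]
  exact exists_injective_quotient_torsionOf v

theorem smul_eq_zero_of_not_embeds_sq [IsDomain R] (hf : Irreducible f)
    (h : ¬ Embeds R (R ⧸ Ideal.span {f * f}) N) {v : N} (hv : f • f • v = 0) : f • v = 0 := by
  by_contra hfv
  refine h ?_
  suffices htors : Ideal.span {f * f} = Ideal.torsionOf R N v by
    rw [htors]
    exact (exists_injective_quotient_torsionOf v).imp fun _ => And.left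
  obtain ⟨a, ha⟩ := (IsPrincipalIdealRing.principal (Ideal.torsionOf R N v)).principal
  have hmem (b : R) : a ∣ b ↔ b • v = 0 := by
    rw [← Ideal.mem_span_singleton, ← Ideal.submodule_span_eq, ← ha, Ideal.mem_torsionOf_iff]
  obtain ⟨i, hi, hai⟩ := (dvd_prime_pow hf.prime 2).1
    ((hmem (f ^ 2)).2 (by rw [sq, mul_smul, hv]))
  have hi2 : i = 2 := by
    by_contra hne
    refine hfv ((hmem f).1 (hai.dvd.trans ?_))
    simpa only [pow_one] using pow_dvd_pow f (show i ≤ 1 by omega)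
  rw [ha, Ideal.submodule_span_eq, ← sq, Ideal.span_singleton_eq_span_singleton, ← hi2]
  exact hai.symm

theorem exists_range_eq_torsionBy (hf : Irreducible f) (h : Embeds R (R ⧸ Ideal.span {f}) N)
    (h2 : ¬ Embeds R ((R ⧸ Ideal.span {f}) × (R ⧸ Ideal.span {f})) N) :
    ∃ φ : R ⧸ Ideal.span {f} →ₗ[R] N, Function.Injective φ ∧
      LinearMap.range φ = Submodule.torsionBy R N f := by
  have := isSimpleModule_quotient_span hf
  obtain ⟨φ, hφ⟩ := h
  refine ⟨φ, hφ, le_antisymm ?_ fun w hw => ?_⟩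
  · rintro _ ⟨u, rfl⟩
    have hfu : f • u = 0 := by
      obtain ⟨r, rfl⟩ := Ideal.Quotient.mk_surjective u
      exact Ideal.Quotient.eq_zero_iff_mem.2 (Ideal.mem_span_singleton.2 (dvd_mul_right f r))
    rw [Submodule.mem_torsionBy_iff, ← map_smul, hfu, map_zero]
  · by_cases hw0 : w = 0
    · exact hw0 ▸ zero_mem _
    obtain ⟨ψ, hψ, hwψ⟩ := exists_injective_quotient_span hf hw hw0
    rcases disjoint_range_or_exists_comp_eq hφ hψ with hd | ⟨α, rfl⟩
    · exact absurd ⟨_, injective_coprod_iff.2 ⟨hφ, hψ, hd⟩⟩ h2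
    · exact LinearMap.range_comp_le_range _ _ hwψ

end CyclicModules

section PrimaryComponent

variable {R N : Type*} [CommRing R] [AddCommGroup N] [Module R N] {f P Q : R}

theorem range_lsmul_eq_torsionBy (hfP : IsCoprime f P) (h : ∀ v : N, f • P • v = 0) :
    LinearMap.range (LinearMap.lsmul R N P) = Submodule.torsionBy R N f := by
  refine le_antisymm ?_ fun v hv => ?_
  · rintro _ ⟨v, rfl⟩
    exact h v
  · obtain ⟨a, b, hab⟩ := hfP
    refine ⟨b • v, ?_⟩
    calc P • b • v = a • f • v + P • b • v := by
          rw [show f • v = 0 from hv, smul_zero, zero_add]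
      _ = (a * f + b * P) • v := by module
      _ = v := by rw [hab, one_smul]

-- Along the prime factorization of `Q`: a prime acting injectively can be cancelled, one dividing
-- `P` is absorbed by a power of `P`, and `f` itself by the assumption on `f`.
theorem exists_forall_smul_pow_smul_eq_zero [IsDomain R] [UniqueFactorizationMonoid R]
    (hQ : Q ≠ 0) (hf : ∀ v : N, f • f • v = 0 → f • v = 0)
    (h : ∀ g, Prime g → g ∣ Q → (∀ v : N, g • v = 0 → v = 0) ∨ Associated g f ∨ g ∣ P) :
    ∃ k : ℕ, ∀ v : N, Q • v = 0 → f • P ^ k • v = 0 := by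
  induction Q using UniqueFactorizationMonoid.induction_on_prime with
  | h₁ => exact absurd rfl hQ
  | h₂ u hu => exact ⟨0, fun v hv => by rw [hu.smul_eq_zero.1 hv, smul_zero, smul_zero]⟩
  | h₃ Q g hQ0 hg ih =>
    obtain ⟨k, hk⟩ := ih hQ0 fun g' hg' hdvd => h g' hg' (hdvd.mul_left g)
    have hgv (v : N) (hv : (g * Q) • v = 0) : g • f • P ^ k • v = 0 := by
      have := hk (g • v) (by rwa [smul_smul, mul_comm])
      rwa [smul_comm (P ^ k), smul_comm f] at this
    rcases h g hg (dvd_mul_right g Q) with hinj | ⟨u, hu⟩ | ⟨c, hc⟩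
    · exact ⟨k, fun v hv => hinj _ (hgv v hv)⟩
    · refine ⟨k, fun v hv => hf _ ?_⟩
      calc f • f • P ^ k • v = (u : R) • g • f • P ^ k • v := by
            rw [smul_smul (u : R), mul_comm, hu]
        _ = 0 := by rw [hgv v hv, smul_zero]
    · refine ⟨k + 1, fun v hv => ?_⟩
      calc f • P ^ (k + 1) • v = c • g • f • P ^ k • v := by
            rw [smul_smul c, mul_comm c, ← hc, pow_succ', mul_smul, smul_comm f]
        _ = 0 := by rw [hgv v hv, smul_zero]

end PrimaryComponent

section Average

variable {α : Type*} [Finite α]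

/-- The average of a real function over a finite type, as a linear functional. -/
noncomputable def average : (α → ℝ) →ₗ[ℝ] ℝ :=
  letI := Fintype.ofFinite α
  { toFun := univ.expect
    map_add' := expect_add_distrib _
    map_smul' c f := (smul_expect c univ f).symm }

theorem average_apply [inst : Fintype α] (f : α → ℝ) : average f = (∑ a, f a) / Nat.card α := by
  rw [Nat.card_eq_fintype_card, ← Fintype.expect_eq_sum_div_card]
  obtain rfl : inst = Fintype.ofFinite α := Subsingleton.elim _ _
  rfl

theorem average_mono {f g : α → ℝ} (h : f ≤ g) : average f ≤ average g := by
  have := Fintype.ofFinite α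
  rw [average_apply, average_apply]
  gcongr
  exact h _

theorem average_one [Nonempty α] : average (1 : α → ℝ) = 1 := by
  have := Fintype.ofFinite α
  simp [average_apply]

/-- The proportion of elements of a finite type satisfying a predicate. -/
noncomputable def proportion (Q : α → Prop) : ℝ := average (Set.indicator {a | Q a} 1)

theorem proportion_eq (Q : α → Prop) :
    proportion Q = Nat.card {a // Q a} / Nat.card α := by
  classical
  have := Fintype.ofFinite α
  simp [proportion, average_apply, Set.indicator_apply, Fintype.card_subtype]

theorem proportion_nonneg (Q : α → Prop) : 0 ≤ proportion Q := by
  rw [proportion_eq]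
  positivity

theorem proportion_mono {Q Q' : α → Prop} (h : ∀ a, Q a → Q' a) :
    proportion Q ≤ proportion Q' :=
  average_mono (Set.indicator_le_indicator_of_subset h fun _ => zero_le_one)

theorem proportion_or_le (Q Q' : α → Prop) :
    proportion (fun a => Q a ∨ Q' a) ≤ proportion Q + proportion Q' := by
  rw [proportion, proportion, proportion, ← map_add]
  refine average_mono fun a => ?_
  by_cases hQ : Q a <;> by_cases hQ' : Q' a <;> simp [hQ, hQ']

theorem proportion_exists_mem_le {ι : Type*} (s : Finset ι) (Q : ι → α → Prop) :
    proportion (fun a => ∃ i ∈ s, Q i a) ≤ ∑ i ∈ s, proportion (Q i) := by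
  classical
  induction s using Finset.induction_on with
  | empty => simp [proportion_eq]
  | insert i s hi ih =>
    simp only [Finset.exists_mem_insert, Finset.sum_insert hi]
    exact (proportion_or_le _ _).trans (by gcongr)

theorem proportion_not [Nonempty α] (Q : α → Prop) :
    proportion (fun a => ¬ Q a) = 1 - proportion Q := by
  rw [eq_sub_iff_add_eq, proportion, proportion, ← map_add, ← average_one (α := α)]
  congr 1
  ext a
  by_cases hQ : Q a <;> simp [hQ]

theorem mul_proportion_le_average {Q : α → Prop} {f : α → ℝ} {c : ℝ} (hf : 0 ≤ f)
    (h : ∀ a, Q a → c ≤ f a) : c * proportion Q ≤ average f := by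
  rw [proportion, ← smul_eq_mul, ← map_smul]
  refine average_mono fun a => ?_
  by_cases hQ : Q a
  · simpa [hQ] using h a hQ
  · simpa [hQ] using hf a

end Average

section TransitiveActions

open MulAction

variable {G X : Type*} [Group G] [MulAction G X]

theorem card_smul_eq [IsPretransitive G X] (x y : X) :
    Nat.card {g : G // g • x = y} = Nat.card (stabilizer G x) := by
  obtain ⟨h, rfl⟩ := exists_smul_eq G x y
  refine (Nat.card_congr ((Equiv.mulLeft h).subtypeEquiv fun g => ?_)).symm
  rw [mem_stabilizer_iff, Equiv.coe_mulLeft, mul_smul, smul_left_cancel_iff]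

-- For `τ = id` this is Burnside's lemma.
theorem average_card_smul_eq [Finite G] [IsPretransitive G X] [Nonempty X] (τ : X → X) :
    average (fun g : G => (Nat.card {x : X // g • x = τ x} : ℝ)) = 1 := by
  obtain ⟨x₀⟩ := ‹Nonempty X›
  have : Finite X := Finite.of_surjective (· • x₀) (exists_smul_eq G x₀)
  have := Fintype.ofFinite G
  have := Fintype.ofFinite X
  have hstab (x : X) : Nat.card (stabilizer G x) * Nat.card X = Nat.card G := by
    rw [← index_stabilizer_of_transitive G x, Subgroup.card_mul_index]
  have hcount : ∑ g : G, Nat.card {x : X // g • x = τ x} = Nat.card G := by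
    calc ∑ g : G, Nat.card {x : X // g • x = τ x}
        = Nat.card (Σ x : X, {g : G // g • x = τ x}) := by
          rw [← Nat.card_sigma]
          exact Nat.card_congr ⟨fun p => ⟨p.2, p.1, p.2.2⟩, fun p => ⟨p.2, p.1, p.2.2⟩,
            fun _ => rfl, fun _ => rfl⟩
      _ = ∑ x : X, Nat.card (stabilizer G x) := by
          simp only [Nat.card_sigma, card_smul_eq]
      _ = ∑ _x : X, Nat.card G / Nat.card X := Finset.sum_congr rfl fun x _ =>
          Nat.eq_div_of_mul_eq_left Nat.card_pos.ne' (hstab x)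
      _ = Nat.card G := by
          rw [sum_const, card_univ, ← Nat.card_eq_fintype_card, smul_eq_mul,
            Nat.mul_div_cancel' (Dvd.intro_left _ (hstab x₀))]
  rw [average_apply, ← Nat.cast_sum, hcount, div_self (Nat.cast_ne_zero.2 Nat.card_pos.ne')]

end TransitiveActions

section EmbeddingAction

variable {F ι U : Type*} [Field F] [Fintype ι] [DecidableEq ι] [AddCommGroup U] [Module F U]

theorem toLin'_injective (g : Matrix.SpecialLinearGroup ι F) :
    Function.Injective (Matrix.toLin' g.1) :=
  (Matrix.SpecialLinearGroup.toLin' g).injective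

/-- The special linear group acts on the injective linear maps into the standard module by
composition. -/
noncomputable instance embeddingAction :
    MulAction (Matrix.SpecialLinearGroup ι F) {φ : U →ₗ[F] (ι → F) // Function.Injective φ} where
  smul g φ := ⟨Matrix.toLin' g.1 ∘ₗ φ.1, (toLin'_injective g).comp φ.2⟩
  one_smul φ := Subtype.ext (congrArg (· ∘ₗ φ.1) Matrix.toLin'_one)
  mul_smul g h φ := Subtype.ext (congrArg (· ∘ₗ φ.1) (Matrix.toLin'_mul g.1 h.1))

-- A linear automorphism carrying `φ` to `ψ` is corrected to determinant one by a multiple of a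
-- transvection that fixes the range of `ψ`.
theorem exists_specialLinearGroup_comp_eq (hU : finrank F U < Fintype.card ι)
    {φ ψ : U →ₗ[F] (ι → F)} (hφ : Function.Injective φ) (hψ : Function.Injective ψ) :
    ∃ g : Matrix.SpecialLinearGroup ι F, Matrix.toLin' g.1 ∘ₗ φ = ψ := by
  obtain ⟨e, he⟩ := Submodule.exists_linearEquiv_restrict_eq
    ((LinearEquiv.ofInjective φ hφ).symm ≪≫ₗ LinearEquiv.ofInjective ψ hψ)
  have heφ (u : U) : e (φ u) = ψ u := by
    simpa using (he (LinearEquiv.ofInjective φ hφ u)).symm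
  obtain ⟨v, hv⟩ : ∃ v, v ∉ LinearMap.range ψ := by
    by_contra! h
    have hrank := LinearMap.finrank_range_of_inj hψ
    rw [(eq_top_iff.2 fun v _ => h v : LinearMap.range ψ = ⊤), finrank_top,
      finrank_fintype_fun_eq_card] at hrank
    exact hU.ne' hrank
  obtain ⟨f, hfv, hf⟩ := Submodule.exists_le_ker_of_notMem hv
  set δ := LinearMap.det e.toLinearMap
  have hδ : δ ≠ 0 := (LinearEquiv.isUnit_det' e).ne_zero
  let t := LinearMap.transvection f (((f v)⁻¹ * (δ⁻¹ - 1)) • v)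
  have hdet : LinearMap.det t = δ⁻¹ := by
    rw [LinearMap.transvection.det, map_smul, smul_eq_mul]
    field_simp
    ring
  refine ⟨⟨LinearMap.toMatrix' (t ∘ₗ e.toLinearMap), ?_⟩, LinearMap.ext fun u => ?_⟩
  · rw [LinearMap.det_toMatrix', LinearMap.det_comp, hdet, inv_mul_cancel₀ hδ]
  · have hfψ : f (ψ u) = 0 := hf ⟨u, rfl⟩
    simp [heφ, t, LinearMap.transvection.apply, hfψ]

theorem isPretransitive_embeddingAction (hU : finrank F U < Fintype.card ι) :
    MulAction.IsPretransitive (Matrix.SpecialLinearGroup ι F)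
      {φ : U →ₗ[F] (ι → F) // Function.Injective φ} :=
  ⟨fun φ ψ => (exists_specialLinearGroup_comp_eq hU φ.2 ψ.2).imp fun _ h => Subtype.ext h⟩

end EmbeddingAction

section MatrixModules

variable {F : Type*} [Field F]

theorem map_polynomial_smul {M N : Type*} [AddCommGroup M] [Module F M] [Module F[X] M]
    [IsScalarTower F F[X] M] [AddCommGroup N] [Module F N] [Module F[X] N]
    [IsScalarTower F F[X] N] {φ : M →ₗ[F] N}
    (h : ∀ m, φ ((X : F[X]) • m) = (X : F[X]) • φ m)
    (P : F[X]) (m : M) : φ (P • m) = P • φ m := by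
  induction P using Polynomial.induction_on generalizing m with
  | C a => rw [← algebraMap_eq, algebraMap_smul, algebraMap_smul, map_smul]
  | add P Q hP hQ => rw [add_smul, add_smul, map_add, hP, hQ]
  | monomial k a ih => rw [pow_succ, ← mul_assoc, mul_smul, ih, h, ← mul_smul]

variable {ι : Type*} [Fintype ι] [DecidableEq ι]

/-- The vector space `ι → F` as an `F[X]`-module, on which `X` acts as the matrix `y`. -/
abbrev MatrixModule (y : Matrix.SpecialLinearGroup ι F) : Type _ :=
  Module.AEval' (Matrix.toLin' y.1)

variable {M : Type*} [AddCommGroup M] [Module F M] [Module F[X] M] [IsScalarTower F F[X] M]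

theorem embeddingCount_matrixModule (hX : Function.Injective fun m : M => (X : F[X]) • m)
    (y : Matrix.SpecialLinearGroup ι F) :
    embeddingCount F[X] M (MatrixModule y) =
      Nat.card {φ : {φ : M →ₗ[F] (ι → F) // Function.Injective φ} //
        y • φ = ⟨φ.1 ∘ₗ Algebra.lsmul F F M (X : F[X]), φ.2.comp hX⟩} := by
  have hcomm (φ : {φ : M →ₗ[F] (ι → F) // Function.Injective φ}) :
      y • φ = ⟨φ.1 ∘ₗ Algebra.lsmul F F M (X : F[X]), φ.2.comp hX⟩ ↔
        ∀ m, φ.1 ((X : F[X]) • m) = Matrix.toLin' y.1 (φ.1 m) := by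
    rw [Subtype.ext_iff, LinearMap.ext_iff]
    exact forall_congr' fun m => eq_comm
  let N := Module.AEval' (Matrix.toLin' y.1)
  let e : (ι → F) ≃ₗ[F] N := Module.AEval'.of (Matrix.toLin' y.1)
  have hinv (φ : {φ : M →ₗ[F] (ι → F) // Function.Injective φ})
      (hφ : y • φ = ⟨φ.1 ∘ₗ Algebra.lsmul F F M (X : F[X]), φ.2.comp hX⟩) (m : M) :
      (e.toLinearMap ∘ₗ φ.1) ((X : F[X]) • m) = (X : F[X]) • (e.toLinearMap ∘ₗ φ.1) m :=
    (congrArg e ((hcomm φ).1 hφ m)).trans (Module.AEval'.X_smul_of _ _).symm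
  exact Nat.card_congr
    { toFun φ := ⟨⟨e.symm.toLinearMap ∘ₗ φ.1.restrictScalars F, e.symm.injective.comp φ.2⟩,
        (hcomm _).2 fun m => (congrArg e.symm (φ.1.map_smul X m)).trans
          (Module.AEval.of_symm_X_smul (Matrix.toLin' y.1) (φ.1 m))⟩
      invFun φ := ⟨{ e.toLinearMap ∘ₗ φ.1.1 with map_smul' := map_polynomial_smul (hinv φ.1 φ.2) },
        e.injective.comp φ.1.2⟩
      left_inv _ := rfl
      right_inv _ := rfl }

theorem average_embeddingCount [Finite F] [Module.Finite F M]
    (hX : Function.Injective fun m : M => (X : F[X]) • m) (hM : finrank F M < Fintype.card ι) :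
    average (fun y : Matrix.SpecialLinearGroup ι F =>
      (embeddingCount F[X] M (MatrixModule y) : ℝ)) = 1 := by
  have := isPretransitive_embeddingAction (F := F) (ι := ι) (U := M) hM
  have : Nonempty {φ : M →ₗ[F] (ι → F) // Function.Injective φ} :=
    nonempty_subtype.2 (finrank_le_iff_exists_linearMap.1
      (hM.le.trans_eq (finrank_fintype_fun_eq_card F).symm))
  simp only [embeddingCount_matrixModule hX]
  exact average_card_smul_eq _

end MatrixModules

section EmbeddingSpan

universe u v

variable {F : Type u} [Field F] {ι : Type v} [Fintype ι] [DecidableEq ι]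

/-- The functions on the special linear group spanned by the embedding counts, into the module of
the matrix, of the modules of dimension at most `d` over `F` that are annihilated by `P`. -/
def embeddingSpan (F : Type u) [Field F] (ι : Type v) [Fintype ι] [DecidableEq ι] (P : F[X])
    (d : ℕ) : Submodule ℝ (Matrix.SpecialLinearGroup ι F → ℝ) :=
  Submodule.span ℝ {h | ∃ (M : Type u) (_ : AddCommGroup M) (_ : Module F M) (_ : Module F[X] M)
    (_ : IsScalarTower F F[X] M), Module.Finite F M ∧ (∀ m : M, P • m = 0) ∧ finrank F M ≤ d ∧
      (fun y => (embeddingCount F[X] M (MatrixModule y) : ℝ)) = h}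

theorem embeddingCount_mem_embeddingSpan {M : Type u} [AddCommGroup M] [Module F M] [Module F[X] M]
    [IsScalarTower F F[X] M] [Module.Finite F M] {P : F[X]} (hP : ∀ m : M, P • m = 0) {d : ℕ}
    (hd : finrank F M ≤ d) :
    (fun y => (embeddingCount F[X] M (MatrixModule y) : ℝ)) ∈ embeddingSpan F ι P d :=
  Submodule.subset_span ⟨M, _, _, _, ‹_›, ‹_›, hP, hd, rfl⟩

theorem embeddingSpan_mono {P Q : F[X]} (hPQ : P ∣ Q) {d e : ℕ} (hde : d ≤ e) :
    embeddingSpan F ι P d ≤ embeddingSpan F ι Q e := by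
  refine Submodule.span_mono ?_
  rintro _ ⟨M, _, _, _, _, hfin, hP, hd, rfl⟩
  obtain ⟨R, rfl⟩ := hPQ
  exact ⟨M, _, _, _, ‹_›, hfin, fun m => by rw [mul_comm, mul_smul, hP, smul_zero],
    hd.trans hde, rfl⟩

theorem const_mem_embeddingSpan (P : F[X]) (d : ℕ) (c : ℝ) :
    (fun _ => c) ∈ embeddingSpan F ι P d := by
  have h (y : Matrix.SpecialLinearGroup ι F) :
      embeddingCount F[X] PUnit.{u + 1} (MatrixModule y) = 1 := by
    rw [embeddingCount, Nat.card_eq_one_iff_unique]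
    exact ⟨⟨fun φ ψ => Subtype.ext (Subsingleton.elim _ _)⟩,
      ⟨0, Function.injective_of_subsingleton _⟩⟩
  have h1 : (fun _ => (1 : ℝ)) ∈ embeddingSpan F ι P d := by
    simpa only [h, Nat.cast_one] using embeddingCount_mem_embeddingSpan (M := PUnit.{u + 1})
      (P := P) (ι := ι) (d := d) (fun _ => rfl)
      (finrank_zero_of_subsingleton.trans_le d.zero_le)
  simpa [Pi.smul_def] using Submodule.smul_mem _ c h1

theorem mul_mem_embeddingSpan {P Q : F[X]} (hPQ : IsCoprime P Q) {d e : ℕ}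
    {f g : Matrix.SpecialLinearGroup ι F → ℝ} (hf : f ∈ embeddingSpan F ι P d)
    (hg : g ∈ embeddingSpan F ι Q e) : f * g ∈ embeddingSpan F ι (P * Q) (d + e) := by
  have hmul := Submodule.mul_mem_mul hf hg
  rw [embeddingSpan, embeddingSpan, Submodule.span_mul_span] at hmul
  refine Submodule.span_mono ?_ hmul
  rintro _ ⟨_, ⟨M, _, _, _, _, _, hP, hd, rfl⟩, _, ⟨N, _, _, _, _, _, hQ, he, rfl⟩, rfl⟩
  refine ⟨M × N, inferInstance, inferInstance, inferInstance, inferInstance, inferInstance,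
    fun m => Prod.ext ?_ ?_, by rw [finrank_prod]; lia, funext fun y => ?_⟩
  · rw [Prod.smul_fst, mul_comm, mul_smul, hP, smul_zero, Prod.fst_zero]
  · rw [Prod.smul_snd, mul_smul, hQ, smul_zero, Prod.snd_zero]
  · rw [embeddingCount_prod hPQ hP hQ, Nat.cast_mul]
    rfl

theorem smul_X_injective {M : Type*} [AddCommGroup M] [Module F[X] M] {P : F[X]}
    (hPX : IsCoprime P X) (hP : ∀ m : M, P • m = 0) :
    Function.Injective fun m : M => (X : F[X]) • m := by
  obtain ⟨U, V, h⟩ := hPX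
  refine Function.LeftInverse.injective (g := fun m => V • m) fun m => ?_
  calc V • (X : F[X]) • m = (U * P + V * X) • m := by simp only [add_smul, mul_smul, hP, smul_zero,
        zero_add]
    _ = m := by rw [h, one_smul]

variable [Finite F]

theorem average_mul_of_mem_embeddingSpan {P Q : F[X]} (hPQ : IsCoprime P Q) (hPX : IsCoprime P X)
    (hQX : IsCoprime Q X) {d e : ℕ} (hde : d + e < Fintype.card ι)
    {f g : Matrix.SpecialLinearGroup ι F → ℝ} (hf : f ∈ embeddingSpan F ι P d)
    (hg : g ∈ embeddingSpan F ι Q e) : average (f * g) = average f * average g := by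
  induction hf, hg using Submodule.span_induction₂ with
  | mem_mem f g hf hg =>
    obtain ⟨M, _, _, _, _, _, hP, hd, rfl⟩ := hf
    obtain ⟨N, _, _, _, _, _, hQ, he, rfl⟩ := hg
    have hX : Function.Injective fun m : M × N => (X : F[X]) • m :=
      (smul_X_injective hPX hP).prodMap (smul_X_injective hQX hQ)
    rw [average_embeddingCount (smul_X_injective hPX hP) (by lia),
      average_embeddingCount (smul_X_injective hQX hQ) (by lia), one_mul,
      ← average_embeddingCount (ι := ι) hX (by rw [finrank_prod]; lia)]
    simp only [embeddingCount_prod hPQ hP hQ, Nat.cast_mul]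
    rfl
  | zero_left => simp
  | zero_right => simp
  | add_left f₁ f₂ g _ _ _ h₁ h₂ => rw [add_mul, map_add, map_add, add_mul, h₁, h₂]
  | add_right f g₁ g₂ _ _ _ h₁ h₂ => rw [mul_add, map_add, map_add, mul_add, h₁, h₂]
  | smul_left c f g _ _ h => rw [smul_mul_assoc, map_smul, map_smul, h, smul_mul_assoc]
  | smul_right c f g _ _ h => rw [mul_smul_comm, map_smul, map_smul, h, mul_smul_comm]

theorem average_prod_of_mem_embeddingSpan {J : Type*} (s : Finset J) {P : J → F[X]}
    (hP : (s : Set J).Pairwise fun i j => IsCoprime (P i) (P j))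
    (hPX : ∀ j ∈ s, IsCoprime (P j) X) {d : J → ℕ} (hd : ∑ j ∈ s, d j < Fintype.card ι)
    {f : J → Matrix.SpecialLinearGroup ι F → ℝ}
    (hf : ∀ j ∈ s, f j ∈ embeddingSpan F ι (P j) (d j)) :
    ∏ j ∈ s, f j ∈ embeddingSpan F ι (∏ j ∈ s, P j) (∑ j ∈ s, d j) ∧
      average (∏ j ∈ s, f j) = ∏ j ∈ s, average (f j) := by
  classical
  induction s using Finset.induction_on with
  | empty => exact ⟨const_mem_embeddingSpan _ _ 1, average_one⟩
  | insert a s ha ih =>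
    have : Std.Symm fun i j => IsCoprime (P i) (P j) := ⟨fun _ _ h => h.symm⟩
    rw [coe_insert, Set.pairwise_insert_of_symm_of_notMem (mt mem_coe.1 ha)] at hP
    rw [forall_mem_insert] at hPX hf
    rw [sum_insert ha] at hd
    rw [sum_insert ha, prod_insert ha, prod_insert ha, prod_insert ha]
    obtain ⟨hmem, hprod⟩ := ih hP.1 hPX.2 (by lia) hf.2
    have hcop : IsCoprime (P a) (∏ j ∈ s, P j) := IsCoprime.prod_right hP.2
    exact ⟨mul_mem_embeddingSpan hcop hf.1 hmem, hprod ▸ average_mul_of_mem_embeddingSpan hcop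
      hPX.1 (IsCoprime.prod_left hPX.2) hd hf.1 hmem⟩

end EmbeddingSpan

section CyclicModules

universe u v

variable {F : Type u} [Field F]

/-- The cyclic `F[X]`-module with annihilator generated by `f`. -/
abbrev CyclicModule (f : F[X]) : Type u := F[X] ⧸ Ideal.span {f}

/-- The monic irreducible polynomials other than `X`, which are the possible irreducible factors of
the characteristic polynomial of an invertible matrix. -/
structure IsMonicPrime (f : F[X]) : Prop where
  monic : f.Monic
  irreducible : Irreducible f
  ne_X : f ≠ X

namespace IsMonicPrime

variable {f g : F[X]}

theorem natDegree_pos (hf : IsMonicPrime f) : 0 < f.natDegree :=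
  hf.irreducible.natDegree_pos

theorem isCoprime (hf : IsMonicPrime f) (hg : IsMonicPrime g) (hfg : f ≠ g) : IsCoprime f g :=
  hf.irreducible.coprime_iff_not_dvd.2 fun h =>
    hfg (eq_of_monic_of_associated hf.monic hg.monic
      (hf.irreducible.associated_of_dvd hg.irreducible h))

theorem isCoprime_X (hf : IsMonicPrime f) : IsCoprime f X :=
  hf.irreducible.coprime_iff_not_dvd.2 fun h =>
    hf.ne_X (eq_of_monic_of_associated hf.monic monic_X
      (hf.irreducible.associated_of_dvd irreducible_X h))

end IsMonicPrime

theorem smul_cyclicModule_eq_zero (f : F[X]) (m : CyclicModule f) : f • m = 0 := by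
  obtain ⟨g, rfl⟩ := Ideal.Quotient.mk_surjective m
  exact Ideal.Quotient.eq_zero_iff_mem.2 (Ideal.mul_mem_right _ _ (Ideal.mem_span_singleton_self f))

theorem finite_cyclicModule [Finite F] {f : F[X]} (hf : f.Monic) : Finite (CyclicModule f) :=
  have := hf.finite_quotient
  Module.finite_of_finite F

theorem card_cyclicModule {f : F[X]} (hf : f.Monic) :
    Nat.card (CyclicModule f) = Nat.card F ^ f.natDegree := by
  have := hf.finite_quotient
  rw [Module.natCard_eq_pow_finrank (K := F), finrank_quotient_span_eq_natDegree]

theorem card_units_cyclicModule {f : F[X]} (hf : IsMonicPrime f) :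
    Nat.card (CyclicModule f)ˣ = Nat.card F ^ f.natDegree - 1 := by
  have : (Ideal.span {f}).IsMaximal :=
    PrincipalIdealRing.isMaximal_of_irreducible hf.irreducible
  let := Ideal.Quotient.field (Ideal.span {f})
  rw [Nat.card_units, card_cyclicModule hf.monic]

theorem embeds_prod_iff {M M' N : Type*} [AddCommGroup M] [Module F[X] M] [Finite M]
    [AddCommGroup M'] [Module F[X] M'] [Finite M'] [AddCommGroup N] [Module F[X] N] [Finite N]
    {P Q : F[X]} (hPQ : IsCoprime P Q) (hP : ∀ m : M, P • m = 0) (hQ : ∀ m : M', Q • m = 0) :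
    Embeds F[X] (M × M') N ↔ Embeds F[X] M N ∧ Embeds F[X] M' N := by
  rw [← embeddingCount_ne_zero, embeddingCount_prod hPQ hP hQ, mul_ne_zero_iff,
    embeddingCount_ne_zero, embeddingCount_ne_zero]

variable [Finite F]

theorem one_lt_card_pow_natDegree {f : F[X]} (hf : IsMonicPrime f) :
    1 < Nat.card F ^ f.natDegree :=
  Nat.one_lt_pow hf.natDegree_pos.ne' Finite.one_lt_card

-- The units of `F[X] / (f²)` are the complement of the kernel of the map to `F[X] / (f)`.
theorem sq_le_card_units_cyclicModule_mul_self {f : F[X]} (hf : IsMonicPrime f) :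
    (Nat.card F ^ f.natDegree - 1) ^ 2 ≤ Nat.card (CyclicModule (f * f))ˣ := by
  classical
  have := finite_cyclicModule (hf.monic.mul hf.monic)
  let π : CyclicModule (f * f) →+* CyclicModule f := Ideal.Quotient.factor
    (Ideal.span_singleton_le_span_singleton.2 (dvd_mul_left f f))
  have hπ : Function.Surjective π := Ideal.Quotient.factor_surjective _
  have hcard := AddSubgroup.card_eq_card_quotient_mul_card_addSubgroup π.toAddMonoidHom.ker
  rw [Nat.card_congr (QuotientAddGroup.quotientKerEquivOfSurjective π.toAddMonoidHom hπ).toEquiv,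
    card_cyclicModule (hf.monic.mul hf.monic), card_cyclicModule hf.monic,
    hf.monic.natDegree_mul hf.monic, pow_add] at hcard
  have hker := Nat.eq_of_mul_eq_mul_left (one_lt_card_pow_natDegree hf).pos hcard
  have hunit (r : CyclicModule (f * f)) (hr : r ∉ π.toAddMonoidHom.ker) : IsUnit r := by
    obtain ⟨g, rfl⟩ := Ideal.Quotient.mk_surjective r
    have hfg : IsCoprime f g := hf.irreducible.coprime_iff_not_dvd.2 fun h =>
      hr (Ideal.Quotient.eq_zero_iff_mem.2 (Ideal.mem_span_singleton.2 h))
    obtain ⟨u, v, huv⟩ := hfg.mul_left hfg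
    refine IsUnit.of_mul_eq_one (Ideal.Quotient.mk _ v) ?_
    rw [← map_mul, ← map_one (Ideal.Quotient.mk _), Ideal.Quotient.eq, ← huv, mul_comm g v,
      sub_add_cancel_right]
    exact neg_mem (Ideal.mul_mem_left _ _ (Ideal.mem_span_singleton_self _))
  have hle : Nat.card {r // r ∉ π.toAddMonoidHom.ker} ≤ Nat.card (CyclicModule (f * f))ˣ :=
    Nat.card_le_card_of_injective (fun r => (hunit r.1 r.2).unit) fun r s h =>
      Subtype.ext (congrArg Units.val h)
  have hsum := Nat.card_congr (Equiv.sumCompl (· ∈ π.toAddMonoidHom.ker))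
  rw [Nat.card_sum, card_cyclicModule (hf.monic.mul hf.monic), hf.monic.natDegree_mul hf.monic,
    pow_add] at hsum
  obtain ⟨k, hk⟩ := Nat.exists_eq_add_of_lt (one_lt_card_pow_natDegree hf)
  have hker' : Nat.card {r // r ∈ π.toAddMonoidHom.ker} = Nat.card F ^ f.natDegree := hker.symm
  rw [hk] at hsum hker' ⊢
  have : (1 + k + 1 - 1) ^ 2 = (1 + k) ^ 2 := rfl
  nlinarith

/-- The inverse of the number of automorphisms of `F[X] / (f)`, for irreducible `f`: to leading
order, the probability that a random matrix has `f` as a factor of its characteristic polynomial. -/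
noncomputable def weight (f : F[X]) : ℝ := ((Nat.card F : ℝ) ^ f.natDegree - 1)⁻¹

variable {f g : F[X]}

theorem weight_eq (hf : IsMonicPrime f) :
    weight f = ((Nat.card (CyclicModule f ≃ₗ[F[X]] CyclicModule f) : ℕ) : ℝ)⁻¹ := by
  rw [card_linearEquiv_quotient, card_units_cyclicModule hf,
    Nat.cast_sub (one_lt_card_pow_natDegree hf).le, Nat.cast_pow, Nat.cast_one, weight]

theorem weight_pos (hf : IsMonicPrime f) : 0 < weight f :=
  inv_pos.2 (sub_pos.2 (mod_cast one_lt_card_pow_natDegree hf))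

variable {ι : Type v} [Fintype ι] [DecidableEq ι]

instance finite_matrixModule (y : Matrix.SpecialLinearGroup ι F) : Finite (MatrixModule y) :=
  inferInstanceAs (Finite (ι → F))

theorem proportion_embeds_le {M : Type*} [AddCommGroup M] [Module F M] [Module F[X] M]
    [IsScalarTower F F[X] M] [Module.Finite F M] {P : F[X]} (hPX : IsCoprime P X)
    (hP : ∀ m : M, P • m = 0) (hM : finrank F M < Fintype.card ι) :
    proportion (fun y : Matrix.SpecialLinearGroup ι F => Embeds F[X] M (MatrixModule y)) ≤
      (Nat.card (M ≃ₗ[F[X]] M) : ℝ)⁻¹ := by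
  have : Finite M := Module.finite_of_finite F
  have : Finite (M ≃ₗ[F[X]] M) := DFunLike.finite _
  have hmarkov := mul_proportion_le_average
    (Q := fun y : Matrix.SpecialLinearGroup ι F => Embeds F[X] M (MatrixModule y))
    (f := fun y => (embeddingCount F[X] M (MatrixModule y) : ℝ))
    (fun y => Nat.cast_nonneg _) fun y hy => Nat.cast_le.2 (card_linearEquiv_le_embeddingCount hy)
  rw [average_embeddingCount (smul_X_injective hPX hP) hM] at hmarkov
  rwa [← one_div, le_div_iff₀' (mod_cast Nat.card_pos)]

theorem proportion_embeds_cyclicModule_le (hf : IsMonicPrime f)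
    (hn : f.natDegree < Fintype.card ι) :
    proportion (fun y : Matrix.SpecialLinearGroup ι F =>
      Embeds F[X] (CyclicModule f) (MatrixModule y)) ≤ weight f := by
  have := hf.monic.finite_quotient
  rw [weight_eq hf]
  exact proportion_embeds_le hf.isCoprime_X (smul_cyclicModule_eq_zero f)
    (by rwa [finrank_quotient_span_eq_natDegree])

theorem proportion_embeds_prod_cyclicModule_le (hf : IsMonicPrime f) (hg : IsMonicPrime g)
    (hn : f.natDegree + g.natDegree < Fintype.card ι) :
    proportion (fun y : Matrix.SpecialLinearGroup ι F =>
      Embeds F[X] (CyclicModule f × CyclicModule g) (MatrixModule y)) ≤ weight f * weight g := by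
  have := hf.monic.finite_quotient
  have := hg.monic.finite_quotient
  have := finite_cyclicModule hf.monic
  have := finite_cyclicModule hg.monic
  have hP (m : CyclicModule f × CyclicModule g) : (f * g) • m = 0 := by
    refine Prod.ext ?_ ?_
    · rw [Prod.smul_fst, mul_comm, mul_smul, smul_cyclicModule_eq_zero, smul_zero, Prod.fst_zero]
    · rw [Prod.smul_snd, mul_smul, smul_cyclicModule_eq_zero, smul_zero, Prod.snd_zero]
  refine (proportion_embeds_le (hf.isCoprime_X.mul_left hg.isCoprime_X) hP ?_).trans ?_
  · rwa [finrank_prod, finrank_quotient_span_eq_natDegree, finrank_quotient_span_eq_natDegree]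
  · rw [weight_eq hf, weight_eq hg, ← mul_inv]
    have := Nat.card_pos_iff.2 ⟨⟨LinearEquiv.refl F[X] (CyclicModule f)⟩, DFunLike.finite _⟩
    have := Nat.card_pos_iff.2 ⟨⟨LinearEquiv.refl F[X] (CyclicModule g)⟩, DFunLike.finite _⟩
    exact inv_anti₀ (by positivity) (mod_cast card_linearEquiv_mul_le_card_prod)

theorem proportion_embeds_cyclicModule_mul_self_le (hf : IsMonicPrime f)
    (hn : 2 * f.natDegree < Fintype.card ι) :
    proportion (fun y : Matrix.SpecialLinearGroup ι F =>
      Embeds F[X] (CyclicModule (f * f)) (MatrixModule y)) ≤ weight f ^ 2 := by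
  have := (hf.monic.mul hf.monic).finite_quotient
  refine (proportion_embeds_le (hf.isCoprime_X.mul_left hf.isCoprime_X)
    (smul_cyclicModule_eq_zero (f * f)) ?_).trans ?_
  · rwa [finrank_quotient_span_eq_natDegree, hf.monic.natDegree_mul hf.monic, ← two_mul]
  · rw [card_linearEquiv_quotient, weight, inv_pow]
    refine inv_anti₀ (pow_pos (inv_pos.1 (weight_pos hf)) 2) ?_
    simpa [Nat.cast_sub (one_lt_card_pow_natDegree hf).le] using
      Nat.cast_le (α := ℝ).2 (sq_le_card_units_cyclicModule_mul_self hf)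

end CyclicModules

section ProperOrders

theorem gcd_lcm_dvd_lcm_gcd (a b c : ℕ) : a.gcd (b.lcm c) ∣ (a.gcd b).lcm (a.gcd c) := by
  rcases a.eq_zero_or_pos with rfl | ha
  · simp only [Nat.gcd_zero_left, dvd_rfl]
  have hgcd : (a.gcd b).gcd (a.gcd c) = a.gcd (b.gcd c) := by
    rw [← Nat.gcd_assoc, Nat.gcd_right_comm a b a, Nat.gcd_self, Nat.gcd_assoc]
  have hprod := Nat.gcd_mul_lcm (a.gcd b) (a.gcd c)
  rw [hgcd] at hprod
  refine Nat.dvd_of_mul_dvd_mul_left (Nat.gcd_pos_of_pos_left (b.gcd c) ha) ?_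
  rw [hprod, ← Nat.gcd_mul_left (a.gcd b) a c, ← Nat.gcd_mul_right a a b,
    ← Nat.gcd_mul_right a c b]
  refine Nat.dvd_gcd (Nat.dvd_gcd ?_ ?_) (Nat.dvd_gcd ?_ ?_)
  · exact mul_dvd_mul (Nat.gcd_dvd_left _ _) (Nat.gcd_dvd_left _ _)
  · exact mul_dvd_mul ((Nat.gcd_dvd_right _ _).trans (Nat.gcd_dvd_left _ _)) (Nat.gcd_dvd_left _ _)
  · rw [mul_comm]
    exact mul_dvd_mul (Nat.gcd_dvd_left _ _) ((Nat.gcd_dvd_right _ _).trans (Nat.gcd_dvd_right _ _))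
  · rw [← Nat.gcd_mul_lcm b c]
    exact mul_dvd_mul (Nat.gcd_dvd_right _ _) (Nat.gcd_dvd_right _ _)

theorem gcd_finset_lcm_dvd {α : Type*} (a : ℕ) (s : Finset α) (g : α → ℕ) :
    a.gcd (s.lcm g) ∣ s.lcm fun i => a.gcd (g i) := by
  classical
  induction s using Finset.induction_on with
  | empty => simp only [lcm_empty, Nat.gcd_one_right, dvd_rfl]
  | insert i s _ ih =>
    rw [lcm_insert, lcm_insert]
    exact (gcd_lcm_dvd_lcm_gcd _ _ _).trans (lcm_dvd_lcm dvd_rfl ih)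

/-- The least common multiple of the orders `q ^ e - 1` of the multiplicative groups of the proper
subfields of the field with `q ^ d` elements. -/
def properOrder (q d : ℕ) : ℕ := d.properDivisors.lcm fun e => q ^ e - 1

theorem dvd_properOrder {q d a : ℕ} (hd : 0 < d) (ha : a ∣ q ^ d - 1) {s : Finset ℕ}
    (hs : ∀ e ∈ s, ¬ d ∣ e) (has : a ∣ s.lcm fun e => q ^ e - 1) : a ∣ properOrder q d := by
  refine (Nat.dvd_gcd ha has).trans ((gcd_finset_lcm_dvd _ _ _).trans
    (Finset.lcm_dvd fun e he => ?_))
  rw [Nat.pow_sub_one_gcd_pow_sub_one]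
  refine Finset.dvd_lcm (f := fun e => q ^ e - 1) (Nat.mem_properDivisors.2
    ⟨Nat.gcd_dvd_left _ _, (Nat.gcd_le_left _ hd).lt_of_ne fun h => hs e he ?_⟩)
  exact h ▸ Nat.gcd_dvd_right d e

theorem prod_eval_cyclotomic {q e : ℕ} (hq : 0 < q) (he : 0 < e) :
    ∏ i ∈ e.divisors, (cyclotomic i ℤ).eval (q : ℤ) = ((q ^ e - 1 : ℕ) : ℤ) := by
  rw [← eval_prod, prod_cyclotomic_eq_X_pow_sub_one he, Nat.cast_sub (Nat.one_le_pow _ _ hq)]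
  simp

-- Every `q ^ e - 1` divides the product of the cyclotomic values over the proper divisors of `d`;
-- the remaining factor of `q ^ d - 1` is the value of the `d`-th cyclotomic polynomial.
theorem two_mul_properOrder_le {q d : ℕ} (hq : 2 ≤ q) (hd : 2 ≤ d) :
    2 * properOrder q d ≤ q ^ d - 1 := by
  set K := ∏ i ∈ d.properDivisors, (cyclotomic i ℤ).eval (q : ℤ)
  have hdvd : properOrder q d ∣ K.natAbs := by
    refine Finset.lcm_dvd fun e he => ?_
    obtain ⟨hed, hlt⟩ := Nat.mem_properDivisors.1 he
    have he0 : 0 < e := Nat.pos_of_dvd_of_pos hed (by lia)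
    rw [← Int.natCast_dvd, ← prod_eval_cyclotomic (by lia) he0]
    refine prod_dvd_prod_of_subset _ _ _ fun i hi => Nat.mem_properDivisors.2 ?_
    exact ⟨(Nat.dvd_of_mem_divisors hi).trans hed, (Nat.divisor_le hi).trans_lt hlt⟩
  have hsplit := congrArg Int.natAbs (prod_eval_cyclotomic (q := q) (e := d) (by lia) (by lia))
  rw [← Nat.insert_self_properDivisors (by lia), prod_insert Nat.self_notMem_properDivisors,
    Int.natAbs_mul, Int.natAbs_natCast] at hsplit
  have hd1 : 1 < q ^ d := Nat.one_lt_pow (by lia) hq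
  have hpos : 0 < K.natAbs := Nat.pos_of_ne_zero fun h => by rw [h, mul_zero] at hsplit; lia
  have hlarge := sub_one_lt_natAbs_cyclotomic_eval (n := d) (q := q) (by lia) (by lia)
  rw [← hsplit]
  exact Nat.mul_le_mul (by lia) (Nat.le_of_dvd hpos hdvd)

end ProperOrders

section PrimePolynomials

variable {F : Type*} [Field F]

theorem dvd_of_squarefree_of_forall_dvd {P Q : F[X]} (hP : Squarefree P) (hQ : Q ≠ 0)
    (h : ∀ g : F[X], g.Monic → Irreducible g → g ∣ P → g ∣ Q) : P ∣ Q := by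
  classical
  refine (hP.isRadical.dvd_radical hP.ne_zero).trans
    ((UniqueFactorizationMonoid.radical_dvd_iff_primeFactors_subset hQ).2 fun g hg => ?_)
  rw [UniqueFactorizationMonoid.mem_primeFactors,
    Polynomial.mem_normalizedFactors_iff hP.ne_zero] at hg
  obtain ⟨hirr, hmonic, hdvd⟩ := hg
  rw [UniqueFactorizationMonoid.mem_primeFactors,
    Polynomial.mem_normalizedFactors_iff hQ]
  exact ⟨hirr, hmonic, h g hmonic hirr hdvd⟩

theorem natDegree_X_pow_sub_one (N : ℕ) : ((X : F[X]) ^ N - 1).natDegree = N := by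
  rw [← C_1, natDegree_X_pow_sub_C]

theorem X_pow_sub_one_ne_zero {N : ℕ} (hN : 0 < N) : (X : F[X]) ^ N - 1 ≠ 0 := by
  rw [← C_1]
  exact X_pow_sub_C_ne_zero hN 1

theorem X_pow_sub_one_dvd {M N : ℕ} (h : M ∣ N) : (X : F[X]) ^ M - 1 ∣ X ^ N - 1 := by
  obtain ⟨k, rfl⟩ := h
  simpa only [one_pow, pow_mul] using sub_dvd_pow_sub_pow ((X : F[X]) ^ M) 1 k

theorem ne_X_of_dvd_X_pow_sub_one {g : F[X]} {N : ℕ} (hN : 0 < N) (h : g ∣ X ^ N - 1) : g ≠ X := by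
  rintro rfl
  have h1 : (X : F[X]) ∣ 1 := (dvd_sub_right (dvd_pow_self X hN.ne')).1 h
  exact not_isUnit_X (isUnit_of_dvd_one h1)

variable [Finite F]

theorem X_mul_X_pow_card_sub_one (e : ℕ) :
    (X : F[X]) * (X ^ (Nat.card F ^ e - 1) - 1) = X ^ Nat.card F ^ e - X := by
  rw [mul_sub, mul_one, ← pow_succ', Nat.sub_add_cancel (Nat.one_le_pow _ _ Finite.card_pos)]

theorem IsMonicPrime.dvd_X_pow_card_sub_one_iff {f : F[X]} (hf : IsMonicPrime f) {e : ℕ} :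
    f ∣ X ^ (Nat.card F ^ e - 1) - 1 ↔ f.natDegree ∣ e := by
  rw [hf.irreducible.natDegree_dvd_iff_dvd_X_pow_card_pow_sub_X, ← X_mul_X_pow_card_sub_one,
    Iff.intro (fun h => h.mul_left X) hf.isCoprime_X.dvd_of_dvd_mul_left]

theorem finite_setOf_isMonicPrime (d : ℕ) :
    {f : F[X] | IsMonicPrime f ∧ f.natDegree = d}.Finite := by
  have : Finite (degreeLT F (d + 1)) := .of_equiv _ (degreeLTEquiv F (d + 1)).toEquiv.symm
  refine (Set.toFinite (degreeLT F (d + 1) : Set F[X])).subset ?_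
  rintro f ⟨-, rfl⟩
  exact mem_degreeLT.2 (degree_le_natDegree.trans_lt (mod_cast Nat.lt_succ_self _))

variable (F) in
/-- The monic irreducible polynomials of degree `d` other than `X`. -/
noncomputable def primesOfDegree (d : ℕ) : Finset F[X] := (finite_setOf_isMonicPrime d).toFinset

theorem mem_primesOfDegree {d : ℕ} {f : F[X]} :
    f ∈ primesOfDegree F d ↔ IsMonicPrime f ∧ f.natDegree = d :=
  Set.Finite.mem_toFinset _

open Classical in
variable (F) in
/-- The monic irreducible polynomials of degree `d` whose roots have an order that does not divide
the least common multiple of the orders of the elements of proper subfields. -/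
noncomputable def newPrimesOfDegree (d : ℕ) : Finset F[X] :=
  {f ∈ primesOfDegree F d | ¬ f ∣ X ^ properOrder (Nat.card F) d - 1}

theorem mem_newPrimesOfDegree {d : ℕ} {f : F[X]} : f ∈ newPrimesOfDegree F d ↔
    f ∈ primesOfDegree F d ∧ ¬ f ∣ X ^ properOrder (Nat.card F) d - 1 :=
  by
  classical
  exact mem_filter

theorem newPrimesOfDegree_subset (d : ℕ) : newPrimesOfDegree F d ⊆ primesOfDegree F d :=
  fun _ hf => (mem_newPrimesOfDegree.1 hf).1

theorem natDegree_prod_of_subset_primesOfDegree {d : ℕ} {s : Finset F[X]}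
    (hs : s ⊆ primesOfDegree F d) : (∏ f ∈ s, f).natDegree = #s * d := by
  rw [natDegree_prod_of_monic _ _ fun f hf => (mem_primesOfDegree.1 (hs hf)).1.monic,
    sum_congr rfl fun f hf => (mem_primesOfDegree.1 (hs hf)).2, sum_const, smul_eq_mul]

theorem card_primesOfDegree_mul_le {d : ℕ} (hd : 0 < d) :
    #(primesOfDegree F d) * d ≤ Nat.card F ^ d - 1 := by
  have hdvd : ∏ f ∈ primesOfDegree F d, f ∣ X ^ (Nat.card F ^ d - 1) - 1 := by
    refine prod_dvd_of_coprime (fun f hf g hg hfg => ?_) fun f hf => ?_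
    · exact (mem_primesOfDegree.1 hf).1.isCoprime (mem_primesOfDegree.1 hg).1 hfg
    · obtain ⟨hfp, rfl⟩ := mem_primesOfDegree.1 hf
      exact hfp.dvd_X_pow_card_sub_one_iff.2 dvd_rfl
  have hcard : 1 < Nat.card F ^ d := Nat.one_lt_pow hd.ne' Finite.one_lt_card
  have hdeg := natDegree_le_of_dvd hdvd (X_pow_sub_one_ne_zero (by lia))
  rwa [natDegree_prod_of_subset_primesOfDegree subset_rfl, natDegree_X_pow_sub_one] at hdeg

theorem properOrder_pos {q d : ℕ} (hq : 2 ≤ q) : 0 < properOrder q d := by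
  refine Nat.pos_of_ne_zero fun h => ?_
  obtain ⟨e, he, h⟩ := Finset.lcm_eq_zero_iff.1 h
  have := Nat.one_lt_pow (Nat.pos_of_mem_properDivisors he).ne' hq
  lia

theorem squarefree_X_pow_card_sub_one {d : ℕ} (hd : 0 < d) :
    Squarefree ((X : F[X]) ^ (Nat.card F ^ d - 1) - 1) := by
  have := Fintype.ofFinite F
  refine (X_pow_sub_one_separable_iff.2 ?_).squarefree
  rw [Nat.cast_sub (Nat.one_le_pow _ _ Finite.card_pos), Nat.cast_pow, Nat.card_eq_fintype_card,
    FiniteField.cast_card_eq_zero, zero_pow hd.ne', Nat.cast_one, zero_sub]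
  exact neg_ne_zero.2 one_ne_zero

theorem X_pow_card_sub_one_dvd {d : ℕ} (hd : 0 < d) :
    (X : F[X]) ^ (Nat.card F ^ d - 1) - 1 ∣
      (X ^ properOrder (Nat.card F) d - 1) * ∏ f ∈ newPrimesOfDegree F d, f := by
  have hcard : 1 < Nat.card F ^ d := Nat.one_lt_pow hd.ne' Finite.one_lt_card
  have hprod : (∏ f ∈ newPrimesOfDegree F d, f).Monic := monic_prod_of_monic _ _ fun f hf =>
    (mem_primesOfDegree.1 (newPrimesOfDegree_subset d hf)).1.monic
  refine dvd_of_squarefree_of_forall_dvd (squarefree_X_pow_card_sub_one hd)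
    (mul_ne_zero (X_pow_sub_one_ne_zero (properOrder_pos Finite.one_lt_card)) hprod.ne_zero)
    fun g hmonic hirr hdvd => ?_
  have hg : IsMonicPrime g := ⟨hmonic, hirr, ne_X_of_dvd_X_pow_sub_one (by lia) hdvd⟩
  have hdeg : g.natDegree ∣ d := hg.dvd_X_pow_card_sub_one_iff.1 hdvd
  by_cases hB : g ∣ X ^ properOrder (Nat.card F) d - 1
  · exact hB.mul_right _
  refine (dvd_prod_of_mem (fun f => f) (mem_newPrimesOfDegree.2
    ⟨mem_primesOfDegree.2 ⟨hg, ?_⟩, hB⟩)).mul_left _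
  by_contra hne
  refine hB ((hg.dvd_X_pow_card_sub_one_iff.2 dvd_rfl).trans (X_pow_sub_one_dvd ?_))
  exact Finset.dvd_lcm (f := fun e => Nat.card F ^ e - 1)
    (Nat.mem_properDivisors.2 ⟨hdeg, (Nat.le_of_dvd hd hdeg).lt_of_ne hne⟩)

theorem le_two_mul_card_newPrimesOfDegree {d : ℕ} (hd : 2 ≤ d) :
    Nat.card F ^ d - 1 ≤ 2 * (#(newPrimesOfDegree F d) * d) := by
  have hB := two_mul_properOrder_le (q := Nat.card F) Finite.one_lt_card hd
  have hprod : (∏ f ∈ newPrimesOfDegree F d, f) ≠ 0 := prod_ne_zero_iff.2 fun f hf =>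
    (mem_primesOfDegree.1 (newPrimesOfDegree_subset d hf)).1.monic.ne_zero
  have hX := X_pow_sub_one_ne_zero (F := F)
    (properOrder_pos (q := Nat.card F) (d := d) Finite.one_lt_card)
  have hdeg := natDegree_le_of_dvd (X_pow_card_sub_one_dvd (by lia)) (mul_ne_zero hX hprod)
  rw [natDegree_mul hX hprod, natDegree_X_pow_sub_one, natDegree_X_pow_sub_one,
    natDegree_prod_of_subset_primesOfDegree (newPrimesOfDegree_subset d)] at hdeg
  lia

end PrimePolynomials

section PowerDisplacement

variable {F ι : Type*} [Field F] [Fintype ι] [DecidableEq ι] {y : Matrix.SpecialLinearGroup ι F}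

theorem displacementRank_pow_eq_finrank_range (m : ℕ) : displacementRank (y ^ m) =
    finrank F (LinearMap.range (LinearMap.lsmul F[X] (MatrixModule y) (X ^ m - 1))) := by
  let e := Module.AEval'.of (Matrix.toLin' y.1)
  have hmap : (LinearMap.range (Matrix.toLin' (y ^ m).1 - 1)).map e.toLinearMap =
      (LinearMap.range (LinearMap.lsmul F[X] (MatrixModule y) (X ^ m - 1))).restrictScalars F := by
    have hpow : Matrix.toLin' (y ^ m).1 = Matrix.toLin' y.1 ^ m := Matrix.toLin'_pow y.1 m
    have hcomm (v : ι → F) : e ((Matrix.toLin' (y ^ m).1 - 1) v) =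
        ((X : F[X]) ^ m - 1) • (e v : MatrixModule y) := by
      rw [sub_smul, one_smul, Module.AEval'.X_pow_smul_of, hpow]
      exact map_sub e _ _
    ext w
    constructor
    · rintro ⟨_, ⟨v, rfl⟩, rfl⟩
      exact ⟨e v, (hcomm v).symm⟩
    · rintro ⟨v, rfl⟩
      exact ⟨_, ⟨e.symm v, rfl⟩, (hcomm _).trans (congrArg _ (e.apply_symm_apply v))⟩
  rw [displacementRank, rk, ← LinearEquiv.finrank_map_eq e, hmap]
  rfl

theorem charpoly_smul (v : MatrixModule y) : (Matrix.toLin' y.1).charpoly • v = 0 := by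
  have h := Module.AEval.of_aeval_smul (R := F) (a := Matrix.toLin' y.1)
    (Matrix.toLin' y.1).charpoly ((Module.AEval'.of (Matrix.toLin' y.1)).symm v)
  rw [LinearMap.aeval_self_charpoly, zero_smul, map_zero] at h
  exact h.symm

theorem eq_zero_of_X_smul_eq_zero {v : MatrixModule y} (hv : (X : F[X]) • v = 0) : v = 0 := by
  have h := Module.AEval'.of_symm_X_smul (φ := Matrix.toLin' y.1) v
  rw [hv, map_zero] at h
  exact toLin'_injective y (h.symm.trans (map_zero _).symm)

theorem dvd_X_pow_sub_one_iff {f : F[X]} {N : ℕ} :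
    f ∣ X ^ N - 1 ↔ orderOf (Ideal.Quotient.mk (Ideal.span {f}) X) ∣ N := by
  rw [orderOf_dvd_iff_pow_eq_one, ← map_pow, ← map_one (Ideal.Quotient.mk _), Ideal.Quotient.eq,
    Ideal.mem_span_singleton]

variable [Finite F]

theorem dvd_X_pow_lcm_sub_one {g : F[X]} (hg : IsMonicPrime g) {s : Finset ℕ}
    (hs : g.natDegree ∈ s) : g ∣ X ^ (s.lcm fun e => Nat.card F ^ e - 1) - 1 :=
  (hg.dvd_X_pow_card_sub_one_iff.2 dvd_rfl).trans
    (X_pow_sub_one_dvd (Finset.dvd_lcm (f := fun e => Nat.card F ^ e - 1) hs))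

theorem not_dvd_X_pow_lcm_sub_one {d : ℕ} (hd : 0 < d) {f : F[X]}
    (hf : f ∈ newPrimesOfDegree F d) {s : Finset ℕ} (hs : ∀ e ∈ s, ¬ d ∣ e) :
    ¬ f ∣ X ^ (s.lcm fun e => Nat.card F ^ e - 1) - 1 := by
  obtain ⟨hfd, hnew⟩ := mem_newPrimesOfDegree.1 hf
  obtain ⟨hfp, rfl⟩ := mem_primesOfDegree.1 hfd
  have hroot := hfp.dvd_X_pow_card_sub_one_iff.2 dvd_rfl
  rw [dvd_X_pow_sub_one_iff] at hroot hnew ⊢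
  exact fun h => hnew (dvd_properOrder hd hroot hs h)

theorem eq_zero_or_associated_or_dvd_of_prime_of_dvd_charpoly {f : F[X]}
    (hdvd : ∀ g, IsMonicPrime g → g ≠ f → f.natDegree ∣ g.natDegree →
      ¬ Embeds F[X] (CyclicModule g) (MatrixModule y)) {g : F[X]} (hg : Prime g)
    (hgQ : g ∣ (Matrix.toLin' y.1).charpoly) :
    (∀ v : MatrixModule y, g • v = 0 → v = 0) ∨ Associated g f ∨
      g ∣ X ^ (({e ∈ Icc 1 (Fintype.card ι) | ¬ f.natDegree ∣ e}).lcm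
        fun e => Nat.card F ^ e - 1) - 1 := by
  classical
  have hassoc : Associated (normalize g) g := normalize_associated g
  have hirr : Irreducible (normalize g) := hassoc.irreducible_iff.2 hg.irreducible
  by_cases hX : normalize g = X
  · refine .inl fun v hv => eq_zero_of_X_smul_eq_zero ?_
    obtain ⟨c, hc⟩ := hassoc.symm.dvd
    rw [← hX, hc, mul_comm, mul_smul, hv, smul_zero]
  have hprime : IsMonicPrime (normalize g) := ⟨Polynomial.monic_normalize hg.ne_zero, hirr, hX⟩
  by_cases hgf : normalize g = f
  · exact .inr (.inl (hgf ▸ hassoc.symm))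
  by_cases hdeg : f.natDegree ∣ (normalize g).natDegree
  · refine .inl fun v hv => ?_
    by_contra hv0
    obtain ⟨c, hc⟩ := hassoc.symm.dvd
    have hnv : normalize g • v = 0 := by rw [hc, mul_comm, mul_smul, hv, smul_zero]
    obtain ⟨φ, hφ, -⟩ := exists_injective_quotient_span hirr hnv hv0
    exact hdvd _ hprime hgf hdeg ⟨φ, hφ⟩
  · refine .inr (.inr (hassoc.symm.dvd.trans (dvd_X_pow_lcm_sub_one hprime ?_)))
    have hle := natDegree_le_of_dvd (hassoc.dvd.trans hgQ)
      (Matrix.toLin' y.1).charpoly_monic.ne_zero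
    rw [LinearMap.charpoly_natDegree, finrank_fintype_fun_eq_card] at hle
    exact mem_filter.2 ⟨mem_Icc.2 ⟨hprime.natDegree_pos, hle⟩, hdeg⟩

theorem exists_smul_pow_smul_eq_zero {f : F[X]} (hf : IsMonicPrime f)
    (hsq : ¬ Embeds F[X] (CyclicModule (f * f)) (MatrixModule y))
    (hdvd : ∀ g, IsMonicPrime g → g ≠ f → f.natDegree ∣ g.natDegree →
      ¬ Embeds F[X] (CyclicModule g) (MatrixModule y)) :
    ∃ k, ∀ v : MatrixModule y, f • (X ^ (({e ∈ Icc 1 (Fintype.card ι) | ¬ f.natDegree ∣ e}).lcm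
      fun e => Nat.card F ^ e - 1) - 1 : F[X]) ^ k • v = 0 := by
  obtain ⟨k, hk⟩ := exists_forall_smul_pow_smul_eq_zero
    (Matrix.toLin' y.1).charpoly_monic.ne_zero
    (fun v : MatrixModule y => smul_eq_zero_of_not_embeds_sq hf.irreducible hsq)
    fun g hg hgQ => eq_zero_or_associated_or_dvd_of_prime_of_dvd_charpoly hdvd hg hgQ
  exact ⟨k, fun v => hk v (charpoly_smul v)⟩

theorem exists_displacementRank_pow_eq {d : ℕ} (hd : 0 < d) {f : F[X]}
    (hf : f ∈ newPrimesOfDegree F d)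
    (hemb : Embeds F[X] (CyclicModule f) (MatrixModule y))
    (hprod : ¬ Embeds F[X] (CyclicModule f × CyclicModule f) (MatrixModule y))
    (hsq : ¬ Embeds F[X] (CyclicModule (f * f)) (MatrixModule y))
    (hdvd : ∀ g, IsMonicPrime g → g ≠ f → d ∣ g.natDegree →
      ¬ Embeds F[X] (CyclicModule g) (MatrixModule y)) :
    ∃ m, displacementRank (y ^ m) = d := by
  obtain ⟨hfp, rfl⟩ := mem_primesOfDegree.1 (newPrimesOfDegree_subset d hf)
  obtain ⟨k, hk⟩ := exists_smul_pow_smul_eq_zero hfp hsq hdvd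
  set L := ({e ∈ Icc 1 (Fintype.card ι) | ¬ f.natDegree ∣ e}).lcm fun e => Nat.card F ^ e - 1
  obtain ⟨p, hp⟩ := CharP.exists F
  have : Fact p.Prime := ⟨CharP.char_is_prime F p⟩
  have hpow : ((X : F[X]) ^ L - 1) ^ p ^ k = X ^ (L * p ^ k) - 1 := by
    rw [sub_pow_char_pow, one_pow, pow_mul]
  have hkill (v : MatrixModule y) : f • ((X : F[X]) ^ (L * p ^ k) - 1) • v = 0 := by
    obtain ⟨j, hj⟩ := Nat.exists_eq_add_of_le (Nat.lt_pow_self (n := k)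
      (Nat.Prime.one_lt Fact.out : 1 < p)).le
    rw [← hpow, hj, pow_add, mul_smul, hk]
  have hcop : IsCoprime f (X ^ (L * p ^ k) - 1) := by
    rw [← hpow]
    exact (hfp.irreducible.coprime_iff_not_dvd.2 (not_dvd_X_pow_lcm_sub_one hd hf fun e he =>
      (mem_filter.1 he).2)).pow_right
  obtain ⟨φ, hφ, hrange⟩ := exists_range_eq_torsionBy hfp.irreducible hemb hprod
  refine ⟨L * p ^ k, ?_⟩
  rw [displacementRank_pow_eq_finrank_range, range_lsmul_eq_torsionBy hcop hkill, ← hrange,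
    ← finrank_quotient_span_eq_natDegree (f := f)]
  exact ((LinearEquiv.ofInjective φ hφ).restrictScalars F).finrank_eq.symm

end PowerDisplacement

section Deviation

universe u v

variable {F : Type u} [Field F] {ι : Type v} [Fintype ι] [DecidableEq ι] {f g : F[X]}

/-- The difference between the number of embeddings of `F[X] / (f)` into the module of a matrix and
its average `1`, scaled by the weight of `f`. -/
noncomputable def deviation (f : F[X]) (y : Matrix.SpecialLinearGroup ι F) : ℝ :=
  weight f * (embeddingCount F[X] (CyclicModule f) (MatrixModule y) - 1)

theorem deviation_mem_embeddingSpan (hf : f.Monic) :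
    deviation f ∈ embeddingSpan F ι f f.natDegree := by
  have := hf.finite_quotient
  exact Submodule.smul_mem _ (weight f) (Submodule.sub_mem _
    (embeddingCount_mem_embeddingSpan (smul_cyclicModule_eq_zero f)
      finrank_quotient_span_eq_natDegree.le) (const_mem_embeddingSpan _ _ 1))

variable [Finite F]

theorem deviation_eq_neg_weight {y : Matrix.SpecialLinearGroup ι F} (hf : IsMonicPrime f)
    (hy : ¬ Embeds F[X] (CyclicModule f) (MatrixModule y)) : deviation f y = - weight f := by
  have := finite_cyclicModule hf.monic
  rw [← embeddingCount_ne_zero, not_ne_iff] at hy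
  simp [deviation, hy]

theorem average_embeddingCount_cyclicModule (hf : IsMonicPrime f)
    (hn : f.natDegree < Fintype.card ι) : average (fun y : Matrix.SpecialLinearGroup ι F =>
      (embeddingCount F[X] (CyclicModule f) (MatrixModule y) : ℝ)) = 1 := by
  have := hf.monic.finite_quotient
  exact average_embeddingCount (smul_X_injective hf.isCoprime_X (smul_cyclicModule_eq_zero f))
    (finrank_quotient_span_eq_natDegree.trans_lt hn)

theorem average_deviation (hf : IsMonicPrime f) (hn : f.natDegree < Fintype.card ι) :
    average (deviation (ι := ι) f) = 0 := by
  have h : deviation (ι := ι) f = weight f • ((fun y =>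
      (embeddingCount F[X] (CyclicModule f) (MatrixModule y) : ℝ)) - 1) := rfl
  rw [h, map_smul, map_sub, average_embeddingCount_cyclicModule hf hn, average_one, sub_self,
    smul_zero]

theorem deviation_sq_eq (hf : IsMonicPrime f) : deviation (ι := ι) f ^ 2 =
    weight f ^ 2 • ((fun y => (embeddingCount F[X] (CyclicModule f × CyclicModule f)
      (MatrixModule y) : ℝ)) + 1) + (weight f - 2 * weight f ^ 2) •
        fun y => (embeddingCount F[X] (CyclicModule f) (MatrixModule y) : ℝ) := by
  have := finite_cyclicModule hf.monic
  have := isSimpleModule_quotient_span hf.irreducible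
  ext y
  have hsq := embeddingCount_sq (R := F[X]) (M := CyclicModule f) (N := MatrixModule y)
  have hw : weight f * (Nat.card (CyclicModule f ≃ₗ[F[X]] CyclicModule f) : ℝ) = 1 := by
    have := weight_pos hf
    rw [weight_eq hf] at this ⊢
    exact inv_mul_cancel₀ (inv_pos.1 this).ne'
  have hsq' : (embeddingCount F[X] (CyclicModule f) (MatrixModule y) : ℝ) ^ 2 =
      embeddingCount F[X] (CyclicModule f × CyclicModule f) (MatrixModule y) +
        Nat.card (CyclicModule f ≃ₗ[F[X]] CyclicModule f) *
          embeddingCount F[X] (CyclicModule f) (MatrixModule y) := mod_cast hsq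
  simp only [deviation, Pi.pow_apply, Pi.add_apply, Pi.smul_apply, Pi.one_apply, smul_eq_mul]
  linear_combination weight f ^ 2 * hsq' +
    weight f * embeddingCount F[X] (CyclicModule f) (MatrixModule y) * hw

theorem deviation_sq_mem_embeddingSpan (hf : IsMonicPrime f) :
    deviation f ^ 2 ∈ embeddingSpan F ι f (2 * f.natDegree) := by
  have := hf.monic.finite_quotient
  have hfin : finrank F (CyclicModule f) = f.natDegree := finrank_quotient_span_eq_natDegree
  rw [deviation_sq_eq hf]
  refine Submodule.add_mem _ (Submodule.smul_mem _ _ (Submodule.add_mem _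
    (embeddingCount_mem_embeddingSpan (fun m => ?_) ?_) (const_mem_embeddingSpan _ _ 1)))
    (Submodule.smul_mem _ _ (embeddingCount_mem_embeddingSpan (smul_cyclicModule_eq_zero f) ?_))
  · exact Prod.ext (smul_cyclicModule_eq_zero f _) (smul_cyclicModule_eq_zero f _)
  · rw [finrank_prod, hfin, two_mul]
  · lia

theorem average_deviation_sq (hf : IsMonicPrime f) (hn : 2 * f.natDegree < Fintype.card ι) :
    average (deviation (ι := ι) f ^ 2) = weight f := by
  have := hf.monic.finite_quotient
  have hX := smul_X_injective hf.isCoprime_X (smul_cyclicModule_eq_zero f)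
  have hX2 : Function.Injective fun m : CyclicModule f × CyclicModule f => (X : F[X]) • m :=
    hX.prodMap hX
  have hfin : finrank F (CyclicModule f) = f.natDegree := finrank_quotient_span_eq_natDegree
  rw [deviation_sq_eq hf, map_add, map_smul, map_smul, map_add, average_one,
    average_embeddingCount_cyclicModule hf (by lia),
    average_embeddingCount hX2 (by rw [finrank_prod]; lia)]
  simp only [smul_eq_mul]
  ring

theorem average_deviation_mul (hf : IsMonicPrime f) (hg : IsMonicPrime g) (hfg : f ≠ g)
    (hn : f.natDegree + g.natDegree < Fintype.card ι) :
    average (deviation (ι := ι) f * deviation g) = 0 := by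
  rw [average_mul_of_mem_embeddingSpan (hf.isCoprime hg hfg) hf.isCoprime_X hg.isCoprime_X hn
    (deviation_mem_embeddingSpan hf.monic) (deviation_mem_embeddingSpan hg.monic),
    average_deviation hf (by lia), zero_mul]

variable {S : Finset F[X]} (hS : ∀ f ∈ S, IsMonicPrime f) {D : ℕ} (hD : ∀ f ∈ S, f.natDegree ≤ D)

include hS hD

theorem sum_deviation_sq_mem_embeddingSpan :
    (∑ f ∈ S, deviation f) ^ 2 ∈ embeddingSpan F ι (∏ f ∈ S, f) (2 * D) := by
  classical
  rw [sq, sum_mul_sum]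
  refine Submodule.sum_mem _ fun f hf => Submodule.sum_mem _ fun g hg => ?_
  have hfD := hD f hf
  have hgD := hD g hg
  by_cases hfg : f = g
  · rw [← hfg, ← sq]
    exact embeddingSpan_mono (dvd_prod_of_mem _ hf) (by lia)
      (deviation_sq_mem_embeddingSpan (hS f hf))
  · have hdvd : f * g ∣ ∏ h ∈ S, h := by
      rw [← mul_prod_erase S (fun h => h) hf]
      exact mul_dvd_mul_left f (dvd_prod_of_mem _ (mem_erase.2 ⟨Ne.symm hfg, hg⟩))
    exact embeddingSpan_mono hdvd (by lia) (mul_mem_embeddingSpan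
      ((hS f hf).isCoprime (hS g hg) hfg) (deviation_mem_embeddingSpan (hS f hf).monic)
      (deviation_mem_embeddingSpan (hS g hg).monic))

theorem average_sum_deviation_sq (hn : 2 * D < Fintype.card ι) :
    average ((∑ f ∈ S, deviation (ι := ι) f) ^ 2) = ∑ f ∈ S, weight f := by
  classical
  rw [sq, sum_mul_sum, map_sum]
  refine sum_congr rfl fun f hf => ?_
  have hfD := hD f hf
  rw [map_sum, sum_eq_single f, ← sq, average_deviation_sq (hS f hf) (by lia)]
  · intro g hg hgf
    have hgD := hD g hg
    exact average_deviation_mul (hS f hf) (hS g hg) hgf.symm (by lia)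
  · exact fun h => (h hf).elim

end Deviation

section ManyFamilies

variable {F ι J : Type*} [Field F] [Finite F] [Fintype ι] [DecidableEq ι] {s : Finset J}
  {S : J → Finset F[X]} {D : J → ℕ}

theorem average_prod_sum_deviation_sq (hS : ∀ j ∈ s, ∀ f ∈ S j, IsMonicPrime f)
    (hD : ∀ j ∈ s, ∀ f ∈ S j, f.natDegree ≤ D j) (hdisj : (s : Set J).PairwiseDisjoint S)
    (hn : ∑ j ∈ s, 2 * D j < Fintype.card ι) :
    average (∏ j ∈ s, (∑ f ∈ S j, deviation (ι := ι) f) ^ 2) = ∏ j ∈ s, ∑ f ∈ S j, weight f := by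
  have hcop : (s : Set J).Pairwise fun i j => IsCoprime (∏ f ∈ S i, f) (∏ f ∈ S j, f) :=
    fun i hi j hj hij => IsCoprime.prod_left fun f hf => IsCoprime.prod_right fun g hg =>
      (hS i hi f hf).isCoprime (hS j hj g hg) (disjoint_iff_ne.1 (hdisj hi hj hij) f hf g hg)
  rw [(average_prod_of_mem_embeddingSpan s hcop
    (fun j hj => IsCoprime.prod_left fun f hf => (hS j hj f hf).isCoprime_X) hn
    fun j hj => sum_deviation_sq_mem_embeddingSpan (hS j hj) (hD j hj)).2]
  exact prod_congr rfl fun j hj => average_sum_deviation_sq (hS j hj) (hD j hj)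
    ((single_le_sum (fun i _ => Nat.zero_le (2 * D i)) hj).trans_lt hn)

-- Chebyshev's inequality for all the families at once: averages of products of squared deviations
-- of distinct families factor.
theorem proportion_forall_not_embeds_le (hS : ∀ j ∈ s, ∀ f ∈ S j, IsMonicPrime f)
    (hD : ∀ j ∈ s, ∀ f ∈ S j, f.natDegree ≤ D j) (hdisj : (s : Set J).PairwiseDisjoint S)
    (hn : ∑ j ∈ s, 2 * D j < Fintype.card ι) {c : ℝ} (hc : 0 < c)
    (hw : ∀ j ∈ s, c ≤ ∑ f ∈ S j, weight f) :
    proportion (fun y : Matrix.SpecialLinearGroup ι F => ∀ j ∈ s, ∀ f ∈ S j,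
      ¬ Embeds F[X] (CyclicModule f) (MatrixModule y)) ≤ c⁻¹ ^ #s := by
  set μ := ∏ j ∈ s, ∑ f ∈ S j, weight f
  have hμ : c ^ #s ≤ μ := prod_const c ▸ prod_le_prod (fun _ _ => hc.le) hw
  have hμ0 : 0 < μ := (pow_pos hc _).trans_le hμ
  have hcheb := mul_proportion_le_average (c := μ ^ 2)
    (f := ∏ j ∈ s, (∑ f ∈ S j, deviation (ι := ι) f) ^ 2)
    (Q := fun y : Matrix.SpecialLinearGroup ι F => ∀ j ∈ s, ∀ f ∈ S j,
      ¬ Embeds F[X] (CyclicModule f) (MatrixModule y)) (fun y => by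
      rw [prod_apply]
      exact prod_nonneg fun _ _ => sq_nonneg _)
    fun y hy => by
      rw [← prod_pow, prod_apply]
      refine (prod_congr rfl fun j hj => ?_).le
      rw [Pi.pow_apply, Finset.sum_apply, sum_congr rfl fun f hf =>
        deviation_eq_neg_weight (hS j hj f hf) (hy j hj f hf), sum_neg_distrib, neg_sq]
  rw [average_prod_sum_deviation_sq hS hD hdisj hn, sq, mul_assoc] at hcheb
  have hle := (le_inv_mul_iff₀ hμ0).2 (le_of_mul_le_mul_left (hcheb.trans_eq (mul_one μ).symm) hμ0)
  rw [inv_pow]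
  exact (hle.trans_eq (mul_one _)).trans (inv_anti₀ (pow_pos hc _) hμ)

end ManyFamilies

section RareEvents

variable {F : Type*} [Field F] [Finite F] {d : ℕ}

theorem sum_weight_eq {s : Finset F[X]} (hs : s ⊆ primesOfDegree F d) :
    ∑ f ∈ s, weight f = #s / ((Nat.card F : ℝ) ^ d - 1) := by
  have h : ∀ f ∈ s, weight f = ((Nat.card F : ℝ) ^ d - 1)⁻¹ := fun f hf => by
    rw [weight, (mem_primesOfDegree.1 (hs hf)).2]
  rw [sum_congr rfl h, sum_const, nsmul_eq_mul, div_eq_mul_inv]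

theorem card_pow_sub_one_pos (hd : 0 < d) : 0 < (Nat.card F : ℝ) ^ d - 1 :=
  sub_pos.2 (one_lt_pow₀ (mod_cast Finite.one_lt_card) hd.ne')

theorem sum_weight_primesOfDegree_le (hd : 0 < d) :
    ∑ f ∈ primesOfDegree F d, weight f ≤ (d : ℝ)⁻¹ := by
  have hle : (#(primesOfDegree F d) * d : ℝ) ≤ (Nat.card F : ℝ) ^ d - 1 := by
    have := card_primesOfDegree_mul_le (F := F) hd
    have h1 : 1 ≤ Nat.card F ^ d := Nat.one_le_pow _ _ Finite.card_pos
    rw [← Nat.cast_pow, ← Nat.cast_one, ← Nat.cast_sub h1]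
    exact_mod_cast this
  rw [sum_weight_eq subset_rfl, div_le_iff₀ (card_pow_sub_one_pos hd), inv_mul_eq_div,
    le_div_iff₀ (by positivity)]
  exact hle

theorem le_sum_weight_newPrimesOfDegree (hd : 2 ≤ d) :
    (2 * d : ℝ)⁻¹ ≤ ∑ f ∈ newPrimesOfDegree F d, weight f := by
  have hle : (Nat.card F : ℝ) ^ d - 1 ≤ 2 * (#(newPrimesOfDegree F d) * d) := by
    have := le_two_mul_card_newPrimesOfDegree (F := F) hd
    have h1 : 1 ≤ Nat.card F ^ d := Nat.one_le_pow _ _ Finite.card_pos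
    rw [← Nat.cast_pow, ← Nat.cast_one, ← Nat.cast_sub h1]
    exact_mod_cast this
  rw [sum_weight_eq (newPrimesOfDegree_subset d), le_div_iff₀ (card_pow_sub_one_pos (by lia)),
    inv_mul_le_iff₀ (by positivity)]
  linarith

theorem weight_le {f : F[X]} (hf : IsMonicPrime f) : weight f ≤ (f.natDegree : ℝ)⁻¹ :=
  (single_le_sum (f := weight) (fun _ hg => (weight_pos (mem_primesOfDegree.1 hg).1).le)
    (mem_primesOfDegree.2 ⟨hf, rfl⟩)).trans (sum_weight_primesOfDegree_le hf.natDegree_pos)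

theorem sum_Ico_inv_sq_le {A : ℕ} (hA : 0 < A) (B : ℕ) :
    ∑ d ∈ Ico A B, ((d : ℝ) ^ 2)⁻¹ ≤ 2 / A := by
  obtain ⟨a, rfl⟩ := Nat.exists_eq_succ_of_ne_zero hA.ne'
  have hIoo : Ico a.succ B = Ioo a B := by ext; simp
  rw [hIoo, Nat.cast_succ]
  exact sum_Ioo_inv_sq_le a B

theorem sum_Icc_inv_le (n : ℕ) : ∑ k ∈ Icc 1 n, (k : ℝ)⁻¹ ≤ 1 + Real.log n := by
  have h := harmonic_le_one_add_log n
  rw [harmonic_eq_sum_Icc] at h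
  push_cast at h
  exact h

variable {ι : Type*} [Fintype ι] [DecidableEq ι] {A B : ℕ}

theorem proportion_exists_embeds_mul_self_le (hA : 0 < A) (hB : 2 * B ≤ Fintype.card ι) :
    proportion (fun y : Matrix.SpecialLinearGroup ι F => ∃ d ∈ Ico A B, ∃ f ∈ primesOfDegree F d,
      Embeds F[X] (CyclicModule (f * f)) (MatrixModule y)) ≤ 2 / A := by
  refine (proportion_exists_mem_le _ _).trans (le_trans (sum_le_sum fun d hd => ?_)
    (sum_Ico_inv_sq_le hA B))
  obtain ⟨hAd, hdB⟩ := mem_Ico.1 hd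
  have hd0 : 0 < d := hA.trans_le hAd
  calc _ ≤ ∑ f ∈ primesOfDegree F d, weight f ^ 2 :=
        (proportion_exists_mem_le _ _).trans (sum_le_sum fun f hf => by
          obtain ⟨hfp, rfl⟩ := mem_primesOfDegree.1 hf
          exact proportion_embeds_cyclicModule_mul_self_le hfp (by lia))
    _ ≤ (d : ℝ)⁻¹ * ∑ f ∈ primesOfDegree F d, weight f := by
        rw [mul_sum]
        refine sum_le_sum fun f hf => ?_
        obtain ⟨hfp, rfl⟩ := mem_primesOfDegree.1 hf
        rw [sq]
        exact mul_le_mul_of_nonneg_right (weight_le hfp) (weight_pos hfp).le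
    _ ≤ (d : ℝ)⁻¹ * (d : ℝ)⁻¹ := by gcongr; exact sum_weight_primesOfDegree_le hd0
    _ = ((d : ℝ) ^ 2)⁻¹ := by rw [sq, mul_inv]

theorem proportion_exists_embeds_prod_le {e : ℕ} (hd : 0 < d) (he : 0 < e)
    (hn : d + e < Fintype.card ι) :
    proportion (fun y : Matrix.SpecialLinearGroup ι F => ∃ f ∈ primesOfDegree F d,
      ∃ g ∈ primesOfDegree F e, Embeds F[X] (CyclicModule f × CyclicModule g) (MatrixModule y)) ≤
      (d : ℝ)⁻¹ * (e : ℝ)⁻¹ := by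
  calc _ ≤ ∑ f ∈ primesOfDegree F d, ∑ g ∈ primesOfDegree F e, weight f * weight g :=
        (proportion_exists_mem_le _ _).trans (sum_le_sum fun f hf =>
          (proportion_exists_mem_le _ _).trans (sum_le_sum fun g hg => by
            obtain ⟨hfp, rfl⟩ := mem_primesOfDegree.1 hf
            obtain ⟨hgp, rfl⟩ := mem_primesOfDegree.1 hg
            exact proportion_embeds_prod_cyclicModule_le hfp hgp hn))
    _ ≤ (d : ℝ)⁻¹ * (e : ℝ)⁻¹ := by
        rw [← sum_mul_sum]
        exact mul_le_mul (sum_weight_primesOfDegree_le hd) (sum_weight_primesOfDegree_le he)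
          (sum_nonneg fun g hg => (weight_pos (mem_primesOfDegree.1 hg).1).le) (by positivity)

theorem proportion_exists_embeds_prod_dvd_le (hA : 0 < A) :
    proportion (fun y : Matrix.SpecialLinearGroup ι F => ∃ d ∈ Ico A B,
      ∃ k ∈ {k ∈ Icc 1 (Fintype.card ι) | d + d * k < Fintype.card ι}, ∃ f ∈ primesOfDegree F d,
        ∃ g ∈ primesOfDegree F (d * k),
          Embeds F[X] (CyclicModule f × CyclicModule g) (MatrixModule y)) ≤
      2 / A * (1 + Real.log (Fintype.card ι)) := by
  calc _ ≤ ∑ d ∈ Ico A B, ∑ k ∈ {k ∈ Icc 1 (Fintype.card ι) | d + d * k < Fintype.card ι},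
        ((d : ℝ) ^ 2)⁻¹ * (k : ℝ)⁻¹ :=
        (proportion_exists_mem_le _ _).trans (sum_le_sum fun d hd =>
          (proportion_exists_mem_le _ _).trans (sum_le_sum fun k hk => by
            obtain ⟨hk, hn⟩ := mem_filter.1 hk
            have hd0 : 0 < d := hA.trans_le (mem_Ico.1 hd).1
            have hk0 : 0 < k := (mem_Icc.1 hk).1
            refine (proportion_exists_embeds_prod_le hd0 (Nat.mul_pos hd0 hk0) hn).trans_eq ?_
            rw [Nat.cast_mul]
            ring))
    _ ≤ ∑ d ∈ Ico A B, ∑ k ∈ Icc 1 (Fintype.card ι), ((d : ℝ) ^ 2)⁻¹ * (k : ℝ)⁻¹ :=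
        sum_le_sum fun d _ => sum_le_sum_of_subset_of_nonneg (filter_subset _ _)
          fun _ _ _ => by positivity
    _ ≤ 2 / A * (1 + Real.log (Fintype.card ι)) := by
        rw [← sum_mul_sum]
        exact mul_le_mul (sum_Ico_inv_sq_le hA B) (sum_Icc_inv_le _)
          (sum_nonneg fun _ _ => by positivity) (by positivity)

theorem proportion_exists_embeds_natDegree_ge_le (hB : 2 * B ≤ Fintype.card ι)
    (hn : 0 < Fintype.card ι) :
    proportion (fun y : Matrix.SpecialLinearGroup ι F =>
      ∃ e ∈ Ico (Fintype.card ι - B) (Fintype.card ι), ∃ g ∈ primesOfDegree F e,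
        Embeds F[X] (CyclicModule g) (MatrixModule y)) ≤ 2 * B / Fintype.card ι := by
  have hlower (e : ℕ) (he : e ∈ Ico (Fintype.card ι - B) (Fintype.card ι)) :
      (Fintype.card ι : ℝ) ≤ 2 * e :=
    mod_cast (show Fintype.card ι ≤ 2 * e by have := mem_Ico.1 he; lia)
  calc _ ≤ ∑ e ∈ Ico (Fintype.card ι - B) (Fintype.card ι), ∑ g ∈ primesOfDegree F e, weight g :=
        (proportion_exists_mem_le _ _).trans (sum_le_sum fun e he =>
          (proportion_exists_mem_le _ _).trans (sum_le_sum fun g hg => by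
            obtain ⟨hgp, rfl⟩ := mem_primesOfDegree.1 hg
            exact proportion_embeds_cyclicModule_le hgp (mem_Ico.1 he).2))
    _ ≤ ∑ e ∈ Ico (Fintype.card ι - B) (Fintype.card ι), 2 / (Fintype.card ι : ℝ) :=
        sum_le_sum fun e he => (sum_weight_primesOfDegree_le
          (by have := mem_Ico.1 he; lia)).trans (by
            have := hlower e he
            have h0 : (0 : ℝ) < Fintype.card ι := mod_cast hn
            rw [inv_eq_one_div, div_le_div_iff₀ (by linarith) h0]
            linarith)
    _ = 2 * B / Fintype.card ι := by
        rw [sum_const, Nat.card_Ico, Nat.sub_sub_self (by lia), nsmul_eq_mul]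
        ring

end RareEvents

section DyadicBlocks

theorem le_card_filter_not_dvd {p : ℕ} (hp : p ≠ 1) (m : ℕ) :
    m ≤ #{d ∈ Ico (2 * m) (4 * m) | ¬ p ∣ d} := by
  have hcons (i : ℕ) (h : p ∣ 2 * i) : ¬ p ∣ 2 * i + 1 := fun h' =>
    hp (Nat.dvd_one.1 ((Nat.dvd_add_right h).1 h'))
  calc m = #(Ico m (2 * m)) := by rw [Nat.card_Ico]; lia
    _ ≤ _ := card_le_card_of_injOn (fun i => if p ∣ 2 * i then 2 * i + 1 else 2 * i)
        (fun i hi => by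
          have := mem_Ico.1 hi
          refine mem_coe.2 (mem_filter.2 ?_)
          rw [mem_Ico]
          dsimp only
          split_ifs with h
          · exact ⟨by lia, hcons i h⟩
          · exact ⟨by lia, h⟩)
        fun i _ k _ hik => by
          dsimp only at hik
          split_ifs at hik <;> lia

theorem one_div_eight_le_sum_not_dvd {p : ℕ} (hp : p ≠ 1) {m : ℕ} (hm : 0 < m) :
    1 / 8 ≤ ∑ d ∈ Ico (2 * m) (4 * m) with ¬ p ∣ d, (2 * d : ℝ)⁻¹ := by
  have : (0 : ℝ) < m := mod_cast hm
  calc (1 / 8 : ℝ) = m * (8 * m : ℝ)⁻¹ := by field_simp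
    _ ≤ #{d ∈ Ico (2 * m) (4 * m) | ¬ p ∣ d} • (8 * m : ℝ)⁻¹ := by
        rw [nsmul_eq_mul]
        gcongr
        exact le_card_filter_not_dvd hp m
    _ ≤ _ := card_nsmul_le_sum _ _ _ fun d hd => by
        obtain ⟨hd1, hd2⟩ := mem_Ico.1 (mem_filter.1 hd).1
        have hd0 : (0 : ℝ) < d := mod_cast (by lia : 0 < d)
        have hd4 : (d : ℝ) ≤ 4 * m := mod_cast hd2.le
        exact inv_anti₀ (by positivity) (by linarith)

theorem div_eight_le_sum_not_dvd {p : ℕ} (hp : p ≠ 1) {m : ℕ} (hm : 0 < m) (k : ℕ) :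
    k / 8 ≤ ∑ d ∈ Ico (2 * m) (2 * m * 2 ^ k) with ¬ p ∣ d, (2 * d : ℝ)⁻¹ := by
  induction k with
  | zero => simp
  | succ k ih =>
    have hblock := one_div_eight_le_sum_not_dvd hp (Nat.mul_pos hm (Nat.two_pow_pos k))
    have hsplit := sum_Ico_consecutive (fun d : ℕ => if ¬ p ∣ d then (2 * d : ℝ)⁻¹ else 0)
      (show 2 * m ≤ 2 * m * 2 ^ k from Nat.le_mul_of_pos_right _ (Nat.two_pow_pos k))
      (show 2 * m * 2 ^ k ≤ 2 * m * 2 ^ (k + 1) by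
        gcongr
        · exact one_le_two
        · lia)
    rw [sum_filter] at ih hblock ⊢
    rw [show 2 * (m * 2 ^ k) = 2 * m * 2 ^ k by ring,
      show 4 * (m * 2 ^ k) = 2 * m * 2 ^ (k + 1) by ring] at hblock
    push_cast
    linarith

variable {F : Type*} [Field F] [Finite F] {p J : ℕ}

open Classical in
variable (F) in
/-- The polynomials in `newPrimesOfDegree F d` for the `d` in `[2 ^ (16 * j), 2 ^ (16 * (j + 1)))`
that are not divisible by `p`. Blocks of this length make the total weight at least `2`. -/
noncomputable def newPrimesBlock (p j : ℕ) : Finset F[X] :=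
  {d ∈ Ico (2 ^ (16 * j)) (2 ^ (16 * (j + 1))) | ¬ p ∣ d}.biUnion (newPrimesOfDegree F)

theorem mem_newPrimesBlock {j : ℕ} {f : F[X]} : f ∈ newPrimesBlock F p j ↔
    ∃ d, (2 ^ (16 * j) ≤ d ∧ d < 2 ^ (16 * (j + 1))) ∧ ¬ p ∣ d ∧ f ∈ newPrimesOfDegree F d := by
  simp only [newPrimesBlock, mem_biUnion, mem_filter, mem_Ico, and_assoc]

theorem isMonicPrime_and_natDegree_mem_of_mem_newPrimesBlock {j : ℕ} {f : F[X]}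
    (hf : f ∈ newPrimesBlock F p j) :
    IsMonicPrime f ∧ 2 ^ (16 * j) ≤ f.natDegree ∧ f.natDegree < 2 ^ (16 * (j + 1)) := by
  obtain ⟨d, hd, -, hfd⟩ := mem_newPrimesBlock.1 hf
  obtain ⟨hfp, rfl⟩ := mem_primesOfDegree.1 (newPrimesOfDegree_subset d hfd)
  exact ⟨hfp, hd⟩

theorem pairwiseDisjoint_newPrimesBlock (s : Set ℕ) :
    s.PairwiseDisjoint (newPrimesBlock F p) := by
  have hlt {i j : ℕ} {f : F[X]} (hi : f ∈ newPrimesBlock F p i) (hj : f ∈ newPrimesBlock F p j) :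
      i < j + 1 := by
    have h := (isMonicPrime_and_natDegree_mem_of_mem_newPrimesBlock hi).2.1.trans_lt
      (isMonicPrime_and_natDegree_mem_of_mem_newPrimesBlock hj).2.2
    have := (Nat.pow_lt_pow_iff_right one_lt_two).1 h
    lia
  exact fun i _ j _ hij => disjoint_left.2 fun f hi hj =>
    hij (le_antisymm (Nat.le_of_lt_succ (hlt hi hj)) (Nat.le_of_lt_succ (hlt hj hi)))

theorem two_le_sum_weight_newPrimesBlock (hp : p ≠ 1) {j : ℕ} (hj : 0 < j) :
    2 ≤ ∑ f ∈ newPrimesBlock F p j, weight f := by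
  classical
  obtain ⟨m, hm⟩ : 2 ∣ 2 ^ (16 * j) := dvd_pow_self 2 (by lia)
  have hm0 : 0 < m := by have := Nat.two_pow_pos (16 * j); lia
  have hend : 2 ^ (16 * (j + 1)) = 2 * m * 2 ^ 16 := by rw [← hm]; ring
  have hdisj : (({d ∈ Ico (2 ^ (16 * j)) (2 ^ (16 * (j + 1))) | ¬ p ∣ d} : Finset ℕ) :
      Set ℕ).PairwiseDisjoint (newPrimesOfDegree F) := fun d _ e _ hde =>
    disjoint_left.2 fun f hd he => hde <|
      (mem_primesOfDegree.1 (newPrimesOfDegree_subset d hd)).2.symm.trans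
        (mem_primesOfDegree.1 (newPrimesOfDegree_subset e he)).2
  calc (2 : ℝ) = (16 : ℕ) / 8 := by norm_num
    _ ≤ ∑ d ∈ Ico (2 ^ (16 * j)) (2 ^ (16 * (j + 1))) with ¬ p ∣ d, (2 * d : ℝ)⁻¹ := by
        rw [hend, hm]
        exact div_eight_le_sum_not_dvd hp hm0 16
    _ ≤ ∑ d ∈ Ico (2 ^ (16 * j)) (2 ^ (16 * (j + 1))) with ¬ p ∣ d,
          ∑ f ∈ newPrimesOfDegree F d, weight f :=
        sum_le_sum fun d hd => le_sum_weight_newPrimesOfDegree (by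
          have := (mem_Ico.1 (mem_filter.1 hd).1).1
          lia)
    _ = ∑ f ∈ newPrimesBlock F p j, weight f := by
        rw [newPrimesBlock, sum_biUnion]
        convert hdisj

theorem sum_two_mul_two_pow_lt (hJ : 0 < J) :
    ∑ j ∈ Ico J (7 * J), 2 * 2 ^ (16 * (j + 1)) < 2 ^ (256 * J) := by
  calc ∑ j ∈ Ico J (7 * J), 2 * 2 ^ (16 * (j + 1))
      ≤ #(Ico J (7 * J)) • (2 * 2 ^ (112 * J)) := sum_le_card_nsmul _ _ _ fun j hj => by
        have := mem_Ico.1 hj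
        exact Nat.mul_le_mul_left _ (Nat.pow_le_pow_right two_pos (by lia))
    _ = 12 * J * 2 ^ (112 * J) := by
        rw [Nat.card_Ico, smul_eq_mul, show 7 * J - J = 6 * J by lia]
        ring
    _ < 2 ^ (4 + J) * 2 ^ (112 * J) := by
        gcongr
        rw [pow_add]
        have := Nat.lt_two_pow_self (n := J)
        lia
    _ ≤ 2 ^ (256 * J) := by
        rw [← pow_add]
        exact Nat.pow_le_pow_right two_pos (by lia)

theorem proportion_forall_newPrimesOfDegree_not_embeds_le {ι : Type*} [Fintype ι] [DecidableEq ι]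
    (hp : p ≠ 1) (hJ : 0 < J) (hn : 2 ^ (256 * J) ≤ Fintype.card ι) :
    proportion (fun y : Matrix.SpecialLinearGroup ι F => ∀ d ∈ Ico (2 ^ (16 * J)) (2 ^ (112 * J)),
      ¬ p ∣ d → ∀ f ∈ newPrimesOfDegree F d, ¬ Embeds F[X] (CyclicModule f) (MatrixModule y)) ≤
      (1 / 2) ^ (6 * J) := by
  have hblocks := proportion_forall_not_embeds_le (ι := ι) (s := Ico J (7 * J))
    (S := newPrimesBlock F p) (D := fun j => 2 ^ (16 * (j + 1))) (c := 2)
    (fun j _ f hf => (isMonicPrime_and_natDegree_mem_of_mem_newPrimesBlock hf).1)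
    (fun j _ f hf => (isMonicPrime_and_natDegree_mem_of_mem_newPrimesBlock hf).2.2.le)
    (pairwiseDisjoint_newPrimesBlock _) ((sum_two_mul_two_pow_lt hJ).trans_le hn) two_pos
    fun j hj => two_le_sum_weight_newPrimesBlock hp (hJ.trans_le (mem_Ico.1 hj).1)
  rw [Nat.card_Ico, show 7 * J - J = 6 * J by lia, ← one_div] at hblocks
  refine (proportion_mono fun y hy j hj f hf => ?_).trans hblocks
  obtain ⟨d, ⟨hd1, hd2⟩, hpd, hfd⟩ := mem_newPrimesBlock.1 hf
  have := mem_Ico.1 hj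
  exact hy d (mem_Ico.2 ⟨(Nat.pow_le_pow_right two_pos (by lia)).trans hd1,
    hd2.trans_le (Nat.pow_le_pow_right two_pos (by lia))⟩) hpd f hfd

end DyadicBlocks

section RareFactors

universe u v

variable {F : Type u} [Field F] [Finite F] {ι : Type v} [Fintype ι] [DecidableEq ι]
  {y : Matrix.SpecialLinearGroup ι F} {A B : ℕ}

/-- The matrices whose module contains `F[X] / (f²)` with `deg f` in `[A, B)`, or
`F[X] / (f) × F[X] / (g)` with `deg f` in `[A, B)` dividing `deg g` and `deg f + deg g` less than
the size of the matrix, or `F[X] / (g)` with `deg g` within `B` of the size of the matrix. For other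
matrices, an irreducible factor of the characteristic polynomial of degree `d` in `[A, B)` is
simple, and no other irreducible factor has degree divisible by `d`. -/
def HasRareFactor (A B : ℕ) (y : Matrix.SpecialLinearGroup ι F) : Prop :=
  (∃ d ∈ Ico A B, ∃ f ∈ primesOfDegree F d,
    Embeds F[X] (CyclicModule (f * f)) (MatrixModule y)) ∨
  (∃ d ∈ Ico A B, ∃ k ∈ {k ∈ Icc 1 (Fintype.card ι) | d + d * k < Fintype.card ι},
    ∃ f ∈ primesOfDegree F d, ∃ g ∈ primesOfDegree F (d * k),
      Embeds F[X] (CyclicModule f × CyclicModule g) (MatrixModule y)) ∨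
  ∃ e ∈ Ico (Fintype.card ι - B) (Fintype.card ι), ∃ g ∈ primesOfDegree F e,
    Embeds F[X] (CyclicModule g) (MatrixModule y)

theorem proportion_hasRareFactor_le (hA : 0 < A) (hB : 2 * B ≤ Fintype.card ι)
    (hn : 0 < Fintype.card ι) :
    proportion (HasRareFactor (F := F) (ι := ι) A B) ≤
      2 / A + (2 / A * (1 + Real.log (Fintype.card ι)) + 2 * B / Fintype.card ι) :=
  (proportion_or_le _ _).trans <| add_le_add (proportion_exists_embeds_mul_self_le hA hB) <|
    (proportion_or_le _ _).trans <| add_le_add (proportion_exists_embeds_prod_dvd_le hA)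
      (proportion_exists_embeds_natDegree_ge_le hB hn)

omit [Finite F] in
theorem natDegree_add_natDegree_le {f g : F[X]} (hf : f.Monic) (hg : g.Monic)
    (h : Embeds F[X] (CyclicModule f × CyclicModule g) (MatrixModule y)) :
    f.natDegree + g.natDegree ≤ Fintype.card ι := by
  have := hf.finite_quotient
  have := hg.finite_quotient
  obtain ⟨φ, hφ⟩ := h
  calc f.natDegree + g.natDegree = finrank F (CyclicModule f × CyclicModule g) := by
        rw [finrank_prod, finrank_quotient_span_eq_natDegree, finrank_quotient_span_eq_natDegree]
    _ ≤ finrank F (MatrixModule y) :=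
        LinearMap.finrank_le_finrank_of_injective (f := φ.restrictScalars F) hφ
    _ = Fintype.card ι := (Module.AEval'.of (Matrix.toLin' y.1)).finrank_eq.symm.trans
        (finrank_fintype_fun_eq_card F)

theorem not_embeds_of_not_hasRareFactor (hy : ¬ HasRareFactor A B y) (hA : 0 < A) {f g : F[X]}
    (hf : IsMonicPrime f) (hfd : f.natDegree ∈ Ico A B)
    (hemb : Embeds F[X] (CyclicModule f) (MatrixModule y)) (hg : IsMonicPrime g) (hgf : g ≠ f)
    (hdvd : f.natDegree ∣ g.natDegree) : ¬ Embeds F[X] (CyclicModule g) (MatrixModule y) := by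
  intro hembg
  have := finite_cyclicModule hf.monic
  have := finite_cyclicModule hg.monic
  have hprod : Embeds F[X] (CyclicModule f × CyclicModule g) (MatrixModule y) :=
    (embeds_prod_iff (hf.isCoprime hg hgf.symm) (smul_cyclicModule_eq_zero f)
      (smul_cyclicModule_eq_zero g)).2 ⟨hemb, hembg⟩
  have hle := natDegree_add_natDegree_le hf.monic hg.monic hprod
  obtain ⟨hAd, hdB⟩ := mem_Ico.1 hfd
  obtain ⟨k, hk⟩ := hdvd
  have hk0 : 0 < k := Nat.pos_of_ne_zero fun h => hg.natDegree_pos.ne' (by rw [hk, h, mul_zero])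
  have hkle : k ≤ f.natDegree * k := Nat.le_mul_of_pos_left k (hA.trans_le hAd)
  rcases hle.lt_or_eq with hlt | heq
  · rw [hk] at hlt
    exact hy (.inr (.inl ⟨f.natDegree, hfd, k, mem_filter.2 ⟨mem_Icc.2 ⟨hk0, by lia⟩, hlt⟩, f,
      mem_primesOfDegree.2 ⟨hf, rfl⟩, g, mem_primesOfDegree.2 ⟨hg, hk⟩, hprod⟩))
  · exact hy (.inr (.inr ⟨g.natDegree, mem_Ico.2 ⟨by lia, by lia⟩, g,
      mem_primesOfDegree.2 ⟨hg, rfl⟩, hembg⟩))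

theorem exists_displacementRank_pow_eq_of_not_hasRareFactor (hy : ¬ HasRareFactor A B y)
    (hA : 0 < A) (hB : 2 * B ≤ Fintype.card ι) {d : ℕ} (hd : d ∈ Ico A B) {f : F[X]}
    (hf : f ∈ newPrimesOfDegree F d) (hemb : Embeds F[X] (CyclicModule f) (MatrixModule y)) :
    ∃ m, displacementRank (y ^ m) = d := by
  have hfd := newPrimesOfDegree_subset d hf
  obtain ⟨hfp, rfl⟩ := mem_primesOfDegree.1 hfd
  obtain ⟨hAd, hdB⟩ := mem_Ico.1 hd
  refine exists_displacementRank_pow_eq hfp.natDegree_pos hf hemb (fun hprod => hy (.inr (.inl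
    ⟨_, hd, 1, mem_filter.2 ⟨mem_Icc.2 ⟨le_rfl, by lia⟩, by lia⟩, f, hfd, f, ?_, hprod⟩)))
    (fun hsq => hy (.inl ⟨_, hd, f, hfd, hsq⟩))
    fun g hg hgf hdvd => not_embeds_of_not_hasRareFactor hy hA hfp hd hemb hg hgf hdvd
  rwa [mul_one]

end RareFactors

section Main

variable {n J : ℕ}

theorem card_primeFactors_le {b : ℕ} (hn : n ≠ 0) (hb : n ≤ 2 ^ b) : #n.primeFactors ≤ b :=
  (Nat.pow_le_pow_iff_right one_lt_two).1 <|
    calc 2 ^ #n.primeFactors ≤ ∏ p ∈ n.primeFactors, p :=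
          pow_card_le_prod _ _ _ fun _ hp => (Nat.prime_of_mem_primeFactors hp).two_le
      _ ≤ n := Nat.le_of_dvd (Nat.pos_of_ne_zero hn) (Nat.prod_primeFactors_dvd n)
      _ ≤ 2 ^ b := hb

theorem succ_mul_half_pow_le_one (J : ℕ) : (J + 1) * (1 / 2 : ℝ) ^ J ≤ 1 := by
  rw [one_div_pow, mul_one_div, div_le_one (by positivity)]
  exact_mod_cast Nat.lt_two_pow_self (n := J)

theorem log_natCast_le {m : ℕ} (hn : n ≠ 0) (hm : n ≤ 2 ^ m) : Real.log n ≤ m :=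
  calc Real.log n ≤ Real.log (2 ^ m) := Real.log_le_log (by positivity) (mod_cast hm)
    _ = m * Real.log 2 := Real.log_pow _ _
    _ ≤ m := mul_le_of_le_one_right m.cast_nonneg (by linarith [Real.log_two_lt_d9])

theorem rareFactor_bound_le (hJn : 2 ^ (256 * J) ≤ n) (hnJ : n ≤ 2 ^ (256 * (J + 1))) :
    2 / (2 ^ (16 * J) : ℕ) + (2 / (2 ^ (16 * J) : ℕ) * (1 + Real.log n) +
      2 * (2 ^ (112 * J) : ℕ) / n) ≤ 518 * (1 / 2 : ℝ) ^ (5 * J) := by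
  have hn0 : n ≠ 0 := ((Nat.two_pow_pos _).trans_le hJn).ne'
  set h : ℝ := (1 / 2) ^ J with hh
  have hinv (k : ℕ) : (1 / 2 : ℝ) ^ (k * J) = h ^ k := by rw [hh, ← pow_mul, mul_comm]
  have hpow (k : ℕ) : ((2 ^ (k * J) : ℕ) : ℝ) = (h ^ k)⁻¹ := by
    rw [← hinv, one_div_pow, one_div, inv_inv]
    push_cast
    rfl
  have hh0 : 0 < h := by positivity
  have hanti {a b : ℕ} (hab : a ≤ b) : h ^ b ≤ h ^ a :=
    pow_le_pow_of_le_one hh0.le (pow_le_one₀ (by norm_num) (by norm_num)) hab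
  have hlog : 2 * h ^ 16 * (1 + Real.log n) ≤ 514 * h ^ 5 :=
    calc 2 * h ^ 16 * (1 + Real.log n) ≤ 2 * h ^ 16 * (257 * (J + 1)) := by
          gcongr
          have := log_natCast_le hn0 hnJ
          push_cast at this
          linarith [(Nat.cast_nonneg J : (0 : ℝ) ≤ J)]
      _ = 514 * ((J + 1) * h) * h ^ 15 := by ring
      _ ≤ 514 * 1 * h ^ 5 := by
          gcongr 514 * ?_ * ?_
          · exact succ_mul_half_pow_le_one J
          · exact hanti (by lia)
      _ = 514 * h ^ 5 := by ring
  have hlarge : 2 * (h ^ 112)⁻¹ / n ≤ 2 * h ^ 5 :=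
    calc 2 * (h ^ 112)⁻¹ / n ≤ 2 * (h ^ 112)⁻¹ / (h ^ 256)⁻¹ := by
          gcongr
          rw [← hpow]
          exact_mod_cast hJn
      _ = 2 * h ^ 144 := by field_simp
      _ ≤ 2 * h ^ 5 := by gcongr 2 * ?_; exact hanti (by lia)
  rw [hinv, hpow, hpow, div_inv_eq_mul]
  linarith [hanti (show 5 ≤ 16 by lia)]

/-- The exceptional matrices at scale `J`: besides those with a rare factor, the matrices without an
irreducible factor of degree prime to `p` in the relevant range, for some prime factor `p` of the
size. -/
def IsExceptional {F : Type*} [Field F] [Finite F] (J : ℕ)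
    (y : Matrix.SpecialLinearGroup (Fin n) F) : Prop :=
  HasRareFactor (2 ^ (16 * J)) (2 ^ (112 * J)) y ∨
    ∃ p ∈ n.primeFactors, ∀ d ∈ Ico (2 ^ (16 * J)) (2 ^ (112 * J)), ¬ p ∣ d →
      ∀ f ∈ newPrimesOfDegree F d, ¬ Embeds F[X] (CyclicModule f) (MatrixModule y)

variable {F : Type*} [Field F] [Finite F]

theorem two_mul_two_pow_le (hJ : 0 < J) (hJn : 2 ^ (256 * J) ≤ n) : 2 * 2 ^ (112 * J) ≤ n :=
  calc 2 * 2 ^ (112 * J) = 2 ^ (112 * J + 1) := (pow_succ' _ _).symm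
    _ ≤ 2 ^ (256 * J) := Nat.pow_le_pow_right two_pos (by lia)
    _ ≤ n := hJn

theorem proportion_isExceptional_le (hJ : 0 < J) (hJn : 2 ^ (256 * J) ≤ n)
    (hnJ : n ≤ 2 ^ (256 * (J + 1))) :
    proportion (IsExceptional (n := n) (F := F) J) ≤ 774 * (1 / 2) ^ (5 * J) := by
  have hn0 : 0 < n := (Nat.two_pow_pos _).trans_le hJn
  have hcard : Fintype.card (Fin n) = n := Fintype.card_fin n
  have hrare := proportion_hasRareFactor_le (F := F) (ι := Fin n) (Nat.two_pow_pos (16 * J))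
    (hcard.symm ▸ two_mul_two_pow_le hJ hJn) (hcard.symm ▸ hn0)
  rw [hcard] at hrare
  have hprimes : ∑ p ∈ n.primeFactors,
      proportion (fun y : Matrix.SpecialLinearGroup (Fin n) F =>
        ∀ d ∈ Ico (2 ^ (16 * J)) (2 ^ (112 * J)), ¬ p ∣ d →
          ∀ f ∈ newPrimesOfDegree F d, ¬ Embeds F[X] (CyclicModule f) (MatrixModule y)) ≤
      256 * (1 / 2) ^ (5 * J) :=
    calc _ ≤ #n.primeFactors • (1 / 2 : ℝ) ^ (6 * J) := sum_le_card_nsmul _ _ _ fun p hp =>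
          proportion_forall_newPrimesOfDegree_not_embeds_le
            (Nat.prime_of_mem_primeFactors hp).ne_one hJ (hcard.symm ▸ hJn)
      _ ≤ (256 * (J + 1) : ℕ) * (1 / 2 : ℝ) ^ (6 * J) := by
          rw [nsmul_eq_mul]
          gcongr
          exact card_primeFactors_le hn0.ne' hnJ
      _ = 256 * ((J + 1) * (1 / 2) ^ J) * (1 / 2) ^ (5 * J) := by push_cast; ring
      _ ≤ 256 * 1 * (1 / 2) ^ (5 * J) := by
          gcongr 256 * ?_ * _
          exact succ_mul_half_pow_le_one J
      _ = 256 * (1 / 2) ^ (5 * J) := by ring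
  refine (proportion_or_le _ _).trans ?_
  have hsum := add_le_add (hrare.trans (rareFactor_bound_le hJn hnJ))
    ((proportion_exists_mem_le _ _).trans hprimes)
  linarith

theorem exists_displacementRank_of_not_isExceptional (hJ : 0 < J) (hJn : 2 ^ (256 * J) ≤ n)
    {y : Matrix.SpecialLinearGroup (Fin n) F} (hy : ¬ IsExceptional J y) {p : ℕ} (hp : p.Prime)
    (hpn : p ∣ n) : ∃ m, 0 < displacementRank (y ^ m) ∧
      8 * displacementRank (y ^ m) ^ 2 + 5 ≤ n ∧ ¬ p ∣ displacementRank (y ^ m) := by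
  have hn0 : n ≠ 0 := ((Nat.two_pow_pos _).trans_le hJn).ne'
  obtain ⟨hrare, hfactor⟩ := not_or.1 hy
  push Not at hfactor
  obtain ⟨d, hd, hpd, f, hf, hemb⟩ := hfactor p (Nat.mem_primeFactors.2 ⟨hp, hpn, hn0⟩)
  obtain ⟨m, hm⟩ := exists_displacementRank_pow_eq_of_not_hasRareFactor hrare (Nat.two_pow_pos _)
    ((two_mul_two_pow_le hJ hJn).trans_eq (Fintype.card_fin n).symm) hd hf hemb
  obtain ⟨hAd, hdB⟩ := mem_Ico.1 hd
  refine ⟨m, hm ▸ (Nat.two_pow_pos _).trans_le hAd, ?_, hm ▸ hpd⟩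
  have hpow : 16 * (2 ^ (112 * J)) ^ 2 ≤ n :=
    calc 16 * (2 ^ (112 * J)) ^ 2 = 2 ^ (224 * J + 4) := by ring
      _ ≤ 2 ^ (256 * J) := Nat.pow_le_pow_right two_pos (by lia)
      _ ≤ n := hJn
  have hsq : d ^ 2 ≤ (2 ^ (112 * J)) ^ 2 := Nat.pow_le_pow_left hdB.le 2
  have hpos := Nat.pow_pos (n := 2) (Nat.two_pow_pos (112 * J))
  rw [hm]
  lia

theorem exists_le_proportion_invGen (hJ : 0 < J) (hJn : 2 ^ (256 * J) ≤ n)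
    (hnJ : n ≤ 2 ^ (256 * (J + 1))) : ∃ x : Matrix.SpecialLinearGroup (Fin n) F,
      1 - 774 * (1 / 2) ^ (5 * J) ≤ proportion fun y => InvGen x y := by
  have hn : 17 ≤ n := (show 17 ≤ 2 ^ 5 by norm_num).trans
    ((Nat.pow_le_pow_right two_pos (by lia)).trans hJn)
  obtain ⟨x, hx⟩ := exists_forall_invGen (F := F) hn
  refine ⟨x, ?_⟩
  calc 1 - 774 * (1 / 2) ^ (5 * J) ≤ 1 - proportion (IsExceptional (n := n) (F := F) J) := by
        gcongr
        exact proportion_isExceptional_le hJ hJn hnJ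
    _ = proportion fun y => ¬ IsExceptional (n := n) (F := F) J y := (proportion_not _).symm
    _ ≤ proportion fun y => InvGen x y := proportion_mono fun y hy =>
        hx y fun p hp hpn => exists_displacementRank_of_not_isExceptional hJ hJn hy hp hpn

theorem half_pow_le_four_mul_rpow (hn : n ≠ 0) (hnJ : n ≤ 2 ^ (256 * (J + 1))) :
    (1 / 2 : ℝ) ^ (5 * J) ≤ 4 * (n : ℝ) ^ (-(1 : ℝ) / 200) :=
  calc (1 / 2 : ℝ) ^ (5 * J) = 4 * (2 : ℝ) ^ (-((2 + 5 * J : ℕ) : ℝ)) := by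
        rw [Real.rpow_neg two_pos.le, Real.rpow_natCast, pow_add, mul_inv, one_div_pow, one_div]
        ring
    _ ≤ 4 * ((2 : ℝ) ^ (256 * (J + 1))) ^ (-(1 : ℝ) / 200) := by
        rw [← Real.rpow_natCast 2 (256 * (J + 1)), ← Real.rpow_mul two_pos.le]
        gcongr
        · exact one_le_two
        · push_cast
          linarith [(Nat.cast_nonneg J : (0 : ℝ) ≤ J)]
    _ ≤ 4 * (n : ℝ) ^ (-(1 : ℝ) / 200) := by
        gcongr 4 * ?_
        exact Real.rpow_le_rpow_of_nonpos (by positivity) (mod_cast hnJ) (by norm_num)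

theorem exists_one_sub_le_proportion_invGen (n : ℕ) (hn : n ≠ 0) (F : Type*) [Field F] [Finite F] :
    ∃ x : Matrix.SpecialLinearGroup (Fin n) F, 1 - 3096 * (n : ℝ) ^ (-(1 : ℝ) / 200) ≤
      proportion fun y => InvGen x y := by
  have hnJ : n ≤ 2 ^ (256 * (Nat.log 2 n / 256 + 1)) :=
    (Nat.lt_pow_succ_log_self one_lt_two n).le.trans (Nat.pow_le_pow_right two_pos (by lia))
  have hrpow := half_pow_le_four_mul_rpow hn hnJ
  rcases Nat.eq_zero_or_pos (Nat.log 2 n / 256) with hJ | hJ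
  · rw [hJ] at hrpow
    norm_num at hrpow
    exact ⟨1, le_trans (by norm_num; linarith) (proportion_nonneg _)⟩
  · obtain ⟨x, hx⟩ := exists_le_proportion_invGen (F := F) hJ
      ((Nat.pow_le_pow_right two_pos (by lia)).trans (Nat.pow_log_le_self 2 hn)) hnJ
    exact ⟨x, le_trans (by linarith) hx⟩

end Main

end InvariableGeneration

theorem stmt_11 :
    ∃ C : ℝ, 0 < C ∧
      ∀ n : ℕ, 2 ≤ n →
        ∀ (F : Type) [Field F] [Fintype F],
          ∃ x : Matrix.SpecialLinearGroup (Fin n) F,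
            (Nat.card {y : Matrix.SpecialLinearGroup (Fin n) F // InvGen x y} : ℝ) ≥
              (1 - C * (n : ℝ) ^ (-(1 : ℝ) / 200)) *
                Nat.card (Matrix.SpecialLinearGroup (Fin n) F) := by
  refine ⟨3096, by norm_num, fun n hn F _ _ => ?_⟩
  obtain ⟨x, hx⟩ := InvariableGeneration.exists_one_sub_le_proportion_invGen n (by lia) F
  refine ⟨x, ?_⟩
  rw [InvariableGeneration.proportion_eq, le_div_iff₀ (Nat.cast_pos.2 Nat.card_pos)] at hx
  exact hx
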